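/- arXiv:2003.09102 — 3 statements merged into one kernel-verified Lean document; each statement's English description precedes it below -/
import Mathlib

section
/- There is an absolute constant K such that for every prime p ≥ 5 and every real X with p⁶ ≤ X, the number of pairs (A,B) ∈ E(X) with p ∣ A, p ∣ B and p² ∤ B (i.e. the elliptic curves y² = x³+Ax+B in the family with Kodaira–Néron type II at p) differs from (1/p²)·(1−1/p)·(p^{10}/(p^{10}−1))·(4/ζ(10))·X^{5/6} by at most K·X^{1/2}, where ζ is the Riemann zeta function. -/
/-- Condition (M): for every prime `q`, `q⁴ ∣ A` implies `q⁶ ∤ B`. -/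
def CondM (A B : ℤ) : Prop := ∀ q : ℕ, q.Prime → (q : ℤ) ^ 4 ∣ A → ¬ (q : ℤ) ^ 6 ∣ B

/-- The family `E(X)`: pairs `(A,B)` with `4A³+27B² ≠ 0`, naive height at most `X`,
satisfying condition (M). -/
def Efam (X : ℝ) : Set (ℤ × ℤ) :=
  {AB | 4 * AB.1 ^ 3 + 27 * AB.2 ^ 2 ≠ 0 ∧ ((max (|AB.1| ^ 3) (AB.2 ^ 2) : ℤ) : ℝ) ≤ X ∧
        CondM AB.1 AB.2}

open Finset
lemma count_mult (Y : ℝ) (hY : 0 ≤ Y) (m : ℕ) (hm : 0 < m) :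
    |((((Icc (-⌊Y⌋) ⌊Y⌋).filter (fun x : ℤ => (m : ℤ) ∣ x)).card : ℝ)) - 2 * Y / m| ≤ 1 := by
  have hm' : (0 : ℝ) < m := by exact_mod_cast hm
  have hmz : (0 : ℤ) < m := by exact_mod_cast hm
  have h : (Icc (-⌊Y⌋) ⌊Y⌋).filter (fun x : ℤ => (m : ℤ) ∣ x)
      = (Icc (-⌊Y / m⌋) ⌊Y / m⌋).image (fun x => (m : ℤ) * x) := by
    ext x
    simp only [mem_filter, mem_Icc, mem_image]
    have key : ∀ k : ℤ, (m : ℤ) * k ≤ ⌊Y⌋ ↔ k ≤ ⌊Y / m⌋ := by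
      intro k
      rw [Int.le_floor, Int.le_floor, le_div_iff₀ hm']
      push_cast
      rw [mul_comm]
    constructor
    · rintro ⟨⟨h1, h2⟩, k, rfl⟩
      refine ⟨k, ⟨?_, (key k).1 h2⟩, rfl⟩
      have := (key (-k)).1 (by linarith)
      linarith
    · rintro ⟨k, ⟨h1, h2⟩, rfl⟩
      refine ⟨⟨?_, (key k).2 h2⟩, dvd_mul_right _ _⟩
      have := (key (-k)).2 (by linarith)
      linarith
  have h0 : 0 ≤ ⌊Y / m⌋ := Int.floor_nonneg.2 (by positivity)
  rw [h, card_image_of_injective _ (fun a b hab => by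
    simpa [hm.ne'] using hab), Int.card_Icc]
  have h2 : (((⌊Y / m⌋ + 1 - -⌊Y / m⌋).toNat : ℕ) : ℝ) = 2 * (⌊Y / m⌋ : ℝ) + 1 := by
    have : (((⌊Y / m⌋ + 1 - -⌊Y / m⌋).toNat : ℕ) : ℤ) = 2 * ⌊Y / m⌋ + 1 := by
      rw [Int.toNat_of_nonneg (by linarith)]; ring
    exact_mod_cast this
  rw [h2, mul_div_assoc]
  have h3 := Int.floor_le (Y / m)
  have h4 := Int.lt_floor_add_one (Y / m)
  rw [abs_le]; constructor <;> linarith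

lemma lcm_pow_dvd (d e k : ℕ) (a : ℕ) (h1 : d ^ k ∣ a) (h2 : e ^ k ∣ a) :
    (Nat.lcm d e) ^ k ∣ a := by
  have : (Nat.lcm d e) ^ k = Nat.lcm (d ^ k) (e ^ k) := by
    exact Eq.symm Nat.pow_lcm_pow
  rw [this]; exact Nat.lcm_dvd h1 h2

lemma nat_pow_dvd_int (d k : ℕ) (A : ℤ) : (d : ℤ) ^ k ∣ A ↔ d ^ k ∣ A.natAbs := by
  rw [← Int.natCast_dvd]; push_cast; rfl

open Classical in
lemma moebius_indicator (A B : ℤ) (hB : B ≠ 0) (N : ℕ) (hN : B.natAbs ≤ N) :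
    (∑ d ∈ (range (N + 1)).filter (fun d : ℕ => (d : ℤ) ^ 4 ∣ A ∧ (d : ℤ) ^ 6 ∣ B),
      ArithmeticFunction.moebius d) = if CondM A B then 1 else 0 := by
  set S := (range (N + 1)).filter (fun d : ℕ => (d : ℤ) ^ 4 ∣ A ∧ (d : ℤ) ^ 6 ∣ B) with hS
  have hB' : 0 < B.natAbs := Int.natAbs_pos.2 hB
  have memS : ∀ d : ℕ, d ∈ S ↔ (d ^ 4 ∣ A.natAbs ∧ d ^ 6 ∣ B.natAbs) := by
    intro d
    simp only [hS, mem_filter, mem_range, nat_pow_dvd_int, and_iff_right_iff_imp]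
    rintro ⟨-, h⟩
    have h1 := Nat.le_of_dvd hB' h
    have h2 : d ≤ d ^ 6 := Nat.le_self_pow (by norm_num) d
    omega
  have h1S : 1 ∈ S := by rw [memS]; simp
  obtain ⟨D, hDS, hD⟩ := S.exists_max_image id ⟨1, h1S⟩
  have hDpos : 0 < D := hD 1 h1S
  have hSD : S = D.divisors := by
    ext d
    rw [Nat.mem_divisors]
    have hDS' := (memS D).1 hDS
    constructor
    · intro hd
      have hd' := (memS d).1 hd
      have hl : Nat.lcm d D ∈ S :=
        (memS _).2 ⟨lcm_pow_dvd _ _ _ _ hd'.1 hDS'.1, lcm_pow_dvd _ _ _ _ hd'.2 hDS'.2⟩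
      have h1 : Nat.lcm d D ≤ D := hD _ hl
      have hlpos : 0 < Nat.lcm d D := by
        rcases Nat.eq_zero_or_pos (Nat.lcm d D) with h0 | h0
        · have := (memS _).1 hl
          rw [h0] at this
          simp at this
          omega
        · exact h0
      have h2 : Nat.lcm d D = D := le_antisymm h1 (Nat.le_of_dvd hlpos (Nat.dvd_lcm_right d D))
      exact ⟨h2 ▸ Nat.dvd_lcm_left d D, hDpos.ne'⟩
    · rintro ⟨hd, -⟩
      exact (memS d).2 ⟨(pow_dvd_pow_of_dvd hd 4).trans hDS'.1,
        (pow_dvd_pow_of_dvd hd 6).trans hDS'.2⟩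
  have hsum : ∑ d ∈ D.divisors, ArithmeticFunction.moebius d = if D = 1 then 1 else 0 := by
    rw [← ArithmeticFunction.coe_zeta_mul_apply, ArithmeticFunction.coe_zeta_mul_moebius,
      ArithmeticFunction.one_apply]
  rw [hSD, hsum]
  congr 1
  rw [eq_iff_iff]
  constructor
  · intro h1 q hq h4 h6
    have : q ∈ S := (memS q).2 ⟨(nat_pow_dvd_int _ _ _).1 h4, (nat_pow_dvd_int _ _ _).1 h6⟩
    have := hD q this
    simp only [id] at this
    have := hq.two_le
    omega
  · intro hM
    by_contra hne
    obtain ⟨q, hq, hqD⟩ := Nat.exists_prime_and_dvd hne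
    have : q ∈ S := by rw [hSD, Nat.mem_divisors]; exact ⟨hqD, hDpos.ne'⟩
    have := (memS q).1 this
    exact hM q hq ((nat_pow_dvd_int _ _ _).2 this.1) ((nat_pow_dvd_int _ _ _).2 this.2)

lemma zeta_ten_real : riemannZeta 10 = (((riemannZeta 10).re : ℝ) : ℂ) := by
  have h := zeta_nat_eq_tsum_of_gt_one (k := 10) (by norm_num)
  have h2 : riemannZeta 10 = ((∑' n : ℕ, 1 / (n : ℝ) ^ 10 : ℝ) : ℂ) := by
    push_cast; push_cast at h; exact h
  rw [h2, Complex.ofReal_re]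

lemma main_series (p : ℕ) (hp : p.Prime) :
    HasSum (fun d : ℕ => (if p ∣ d then 0 else (ArithmeticFunction.moebius d : ℝ)) / (d : ℝ) ^ 10)
      ((p : ℝ) ^ 10 / ((p : ℝ) ^ 10 - 1) * (1 / (riemannZeta 10).re)) := by
  have : NeZero p := ⟨hp.ne_zero⟩
  have hs : 1 < ((10 : ℂ)).re := by norm_num
  have h1 := DirichletCharacter.LSeries.mul_mu_eq_one (1 : DirichletCharacter ℂ p) hs
  have h2 := DirichletCharacter.LFunctionTrivChar_eq_mul_riemannZeta (N := p) (s := 10) (by norm_num)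
  rw [DirichletCharacter.LFunctionTrivChar, DirichletCharacter.LFunction_eq_LSeries _ hs] at h2
  rw [h2, hp.primeFactors, prod_singleton] at h1
  have hsm := (DirichletCharacter.LSeriesSummable_mul (1 : DirichletCharacter ℂ p) <|
    ArithmeticFunction.LSeriesSummable_moebius_iff.mpr hs)
  have hh := hsm.hasSum
  rw [← LSeries] at hh
  have hp1 : (1 : ℝ) < (p : ℝ) ^ 10 := one_lt_pow₀ (by exact_mod_cast hp.one_lt) (by norm_num)
  have hp0 : (p : ℝ) ≠ 0 := by exact_mod_cast hp.ne_zero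
  have hval : ((p : ℂ)) ^ (-(10 : ℂ)) = (((p : ℝ) ^ 10)⁻¹ : ℝ) := by
    rw [Complex.cpow_neg]
    push_cast
    congr 1
    exact_mod_cast Complex.cpow_natCast (p : ℂ) 10
  rw [hval, zeta_ten_real] at h1
  set z := (riemannZeta 10).re
  have h3 := eq_inv_of_mul_eq_one_right h1
  rw [h3] at hh
  have h4 : ((1 - ((((p : ℝ) ^ 10)⁻¹ : ℝ) : ℂ)) * (z : ℂ))⁻¹ =
      (((p : ℝ) ^ 10 / ((p : ℝ) ^ 10 - 1) * (1 / z) : ℝ) : ℂ) := by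
    rw [← Complex.ofReal_one, ← Complex.ofReal_sub, ← Complex.ofReal_mul, ← Complex.ofReal_inv]
    congr 1
    rw [mul_inv, one_div]
    congr 1
    have : (p : ℝ) ^ 10 - 1 ≠ 0 := by linarith
    rw [← one_div]
    field_simp
  rw [h4] at hh
  rw [← Complex.hasSum_ofReal]
  convert! hh using 2 with d
  rw [LSeries.term_def]
  split_ifs with hd hd0 hd0
  · simp
  · have : ¬ IsUnit ((d : ZMod p)) := by
      rw [(ZMod.natCast_eq_zero_iff d p).2 hd]
      have : Fact p.Prime := ⟨hp⟩
      simp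
    simp [MulChar.map_nonunit _ this]
  · simp [hd0] at hd
  · have : IsUnit ((d : ZMod p)) := by
      have : Fact p.Prime := ⟨hp⟩
      rw [isUnit_iff_ne_zero, Ne, ZMod.natCast_eq_zero_iff]
      exact hd
    simp only [Pi.mul_apply, MulChar.one_apply this]
    push_cast
    rw [one_mul]
    congr 1
    exact_mod_cast (Complex.cpow_natCast (d : ℂ) 10).symm

lemma int_dvd_floor_bound (Z : ℝ) (B : ℤ) (hB : B ∈ Icc (-⌊Z⌋) ⌊Z⌋) : ((|B| : ℤ) : ℝ) ≤ Z := by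
  rw [mem_Icc] at hB
  have h : |B| ≤ ⌊Z⌋ := abs_le.2 hB
  exact Int.le_floor.1 h

/-- The `A`-count. -/
noncomputable def cntA (p d : ℕ) (Y : ℝ) : Finset ℤ :=
  ((Icc (-⌊Y⌋) ⌊Y⌋).filter (fun A : ℤ => (p : ℤ) ∣ A)).filter (fun A : ℤ => (d : ℤ) ^ 4 ∣ A)

/-- The `B`-count. -/
noncomputable def cntB (p d : ℕ) (Z : ℝ) : Finset ℤ :=
  ((Icc (-⌊Z⌋) ⌊Z⌋).filter (fun B : ℤ => (p : ℤ) ∣ B ∧ ¬ (p : ℤ) ^ 2 ∣ B)).filter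
    (fun B : ℤ => (d : ℤ) ^ 6 ∣ B)

lemma cntA_bound (p d : ℕ) (hp : p.Prime) (hd : ¬ p ∣ d) (Y : ℝ) (hY : 0 ≤ Y) :
    |((cntA p d Y).card : ℝ) - 2 * Y / (p * (d : ℝ) ^ 4)| ≤ 1 := by
  have hd0 : 0 < d := Nat.pos_of_ne_zero (by rintro rfl; simp at hd)
  have hco : IsCoprime (p : ℤ) ((d : ℤ) ^ 4) := by
    apply IsCoprime.pow_right
    rw [Nat.isCoprime_iff_coprime]
    exact (hp.coprime_iff_not_dvd).2 hd
  have h := count_mult Y hY (p * d ^ 4) (by have := hp.pos; positivity)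
  have h2 : (Icc (-⌊Y⌋) ⌊Y⌋).filter (fun x : ℤ => ((p * d ^ 4 : ℕ) : ℤ) ∣ x) = cntA p d Y := by
    rw [cntA, filter_filter]
    apply filter_congr
    intro x _
    push_cast
    exact ⟨fun h => ⟨(dvd_mul_right _ _).trans h, (dvd_mul_left _ _).trans h⟩,
      fun h => hco.mul_dvd h.1 h.2⟩
  rw [h2] at h
  push_cast at h
  exact h

lemma cntB_bound (p d : ℕ) (hp : p.Prime) (hd : ¬ p ∣ d) (Z : ℝ) (hZ : 0 ≤ Z) :
    |((cntB p d Z).card : ℝ) - (2 * Z / (p * (d : ℝ) ^ 6) - 2 * Z / ((p : ℝ) ^ 2 * (d : ℝ) ^ 6))|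
      ≤ 2 := by
  have hd0 : 0 < d := Nat.pos_of_ne_zero (by rintro rfl; simp at hd)
  have hco : IsCoprime (p : ℤ) ((d : ℤ) ^ 6) := by
    apply IsCoprime.pow_right
    rw [Nat.isCoprime_iff_coprime]
    exact (hp.coprime_iff_not_dvd).2 hd
  have hco2 : IsCoprime ((p : ℤ) ^ 2) ((d : ℤ) ^ 6) := hco.pow_left
  have h1 := count_mult Z hZ (p * d ^ 6) (by have := hp.pos; positivity)
  have h2 := count_mult Z hZ (p ^ 2 * d ^ 6) (by have := hp.pos; positivity)
  set S1 := (Icc (-⌊Z⌋) ⌊Z⌋).filter (fun x : ℤ => ((p * d ^ 6 : ℕ) : ℤ) ∣ x) with hS1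
  set S2 := (Icc (-⌊Z⌋) ⌊Z⌋).filter (fun x : ℤ => ((p ^ 2 * d ^ 6 : ℕ) : ℤ) ∣ x) with hS2
  have hpp : (p : ℤ) ∣ (p : ℤ) ^ 2 := dvd_pow_self _ (by norm_num)
  have hsub : S2 ⊆ S1 := by
    intro x
    simp only [hS1, hS2, mem_filter]
    rintro ⟨hx, h⟩
    refine ⟨hx, ?_⟩
    push_cast at h ⊢
    exact (mul_dvd_mul_right hpp _).trans h
  have heq : cntB p d Z = S1 \ S2 := by
    ext x
    simp only [cntB, hS1, hS2, mem_filter, mem_sdiff]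
    push_cast
    constructor
    · rintro ⟨⟨hx, h1, h2⟩, h3⟩
      exact ⟨⟨hx, hco.mul_dvd h1 h3⟩, fun h => h2 ((dvd_mul_right _ _).trans h.2)⟩
    · rintro ⟨⟨hx, h1⟩, h2⟩
      have h3 := (dvd_mul_left _ _).trans h1
      exact ⟨⟨hx, (dvd_mul_right _ _).trans h1, fun h => h2 ⟨hx, hco2.mul_dvd h h3⟩⟩, h3⟩
  have hcard : ((cntB p d Z).card : ℝ) = S1.card - S2.card := by
    rw [heq, card_sdiff_of_subset hsub, Nat.cast_sub (card_le_card hsub)]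
  rw [hcard]
  push_cast at h1 h2
  rw [abs_le] at *
  constructor <;> linarith [h1.1, h1.2, h2.1, h2.2]

lemma cntB_ne_zero {p d : ℕ} {Z : ℝ} {B : ℤ} (h : B ∈ cntB p d Z) : B ≠ 0 := by
  rintro rfl
  simp [cntB] at h

lemma cntB_empty (p d : ℕ) (Z : ℝ) (h : Z < (d : ℝ) ^ 6) : cntB p d Z = ∅ := by
  rw [eq_empty_iff_forall_notMem]
  intro B hB
  have h0 := cntB_ne_zero hB
  simp only [cntB, mem_filter] at hB
  have h1 := int_dvd_floor_bound Z B hB.1.1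
  have h2 : (d : ℤ) ^ 6 ≤ |B| := Int.le_of_dvd (abs_pos.2 h0) ((dvd_abs _ _).2 hB.2)
  have h3 : ((d : ℝ)) ^ 6 ≤ ((|B| : ℤ) : ℝ) := by exact_mod_cast h2
  linarith

lemma cntB_empty' (p d : ℕ) (hd : p ∣ d) (Z : ℝ) : cntB p d Z = ∅ := by
  rw [eq_empty_iff_forall_notMem]
  intro B hB
  simp only [cntB, mem_filter] at hB
  apply hB.1.2.2
  have : (p : ℤ) ∣ d := by exact_mod_cast hd
  exact ((pow_dvd_pow_of_dvd this 2).trans (pow_dvd_pow _ (by norm_num))).trans hB.2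

lemma term_bound (p d : ℕ) (hp : p.Prime) (hd : ¬ p ∣ d) (Y Z : ℝ) (hY : 0 ≤ Y) (hYZ : Y ≤ Z)
    (h32 : Y ^ 3 = Z ^ 2) :
    |((cntA p d Y).card : ℝ) * ((cntB p d Z).card : ℝ) -
      (1 / (p : ℝ) ^ 2) * (1 - 1 / (p : ℝ)) * 4 * (Y * Z) / (d : ℝ) ^ 10| ≤
      8 * Z * (1 / (d : ℝ) ^ 2) := by
  have hd0 : 0 < d := Nat.pos_of_ne_zero (by rintro rfl; simp at hd)
  have hd1 : (1 : ℝ) ≤ d := by exact_mod_cast hd0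
  have hp1 : (1 : ℝ) ≤ p := by exact_mod_cast hp.one_le
  have hdp : (0 : ℝ) < d := by linarith
  have hpp : (0 : ℝ) < p := by linarith
  have hZ : 0 ≤ Z := hY.trans hYZ
  have hA := cntA_bound p d hp hd Y hY
  have hB := cntB_bound p d hp hd Z hZ
  set a := ((cntA p d Y).card : ℝ)
  set α := 2 * Y / (p * (d : ℝ) ^ 4) with hα
  set β := 2 * Z / (p * (d : ℝ) ^ 6) - 2 * Z / ((p : ℝ) ^ 2 * (d : ℝ) ^ 6) with hβ
  have hαβ : (1 / (p : ℝ) ^ 2) * (1 - 1 / (p : ℝ)) * 4 * (Y * Z) / (d : ℝ) ^ 10 = α * β := by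
    rw [hα, hβ]; field_simp; ring
  rw [hαβ]
  have hα0 : 0 ≤ α := by positivity
  have hαle : α ≤ 2 * Y / (d : ℝ) ^ 4 := by
    rw [hα]
    apply div_le_div_of_nonneg_left (by positivity) (by positivity)
    nlinarith [pow_pos hdp 4]
  have hβ0 : 0 ≤ β := by
    rw [hβ, sub_nonneg]
    apply div_le_div_of_nonneg_left (by positivity) (by positivity)
    apply mul_le_mul_of_nonneg_right _ (by positivity)
    nlinarith
  have hβle : β ≤ 2 * Z / (d : ℝ) ^ 6 := by
    have h1 : 0 ≤ 2 * Z / ((p : ℝ) ^ 2 * (d : ℝ) ^ 6) := by positivity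
    have h2 : 2 * Z / (p * (d : ℝ) ^ 6) ≤ 2 * Z / (d : ℝ) ^ 6 := by
      apply div_le_div_of_nonneg_left (by positivity) (by positivity)
      nlinarith [pow_pos hdp 6]
    rw [hβ]; linarith
  have i42 : 1 / (d : ℝ) ^ 4 ≤ 1 / (d : ℝ) ^ 2 :=
    one_div_le_one_div_of_le (by positivity) (pow_le_pow_right₀ hd1 (by norm_num))
  have i62 : 1 / (d : ℝ) ^ 6 ≤ 1 / (d : ℝ) ^ 2 :=
    one_div_le_one_div_of_le (by positivity) (pow_le_pow_right₀ hd1 (by norm_num))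
  have hαle2 : α ≤ 2 * Z * (1 / (d : ℝ) ^ 2) := by
    calc α ≤ 2 * Y * (1 / (d : ℝ) ^ 4) := by rw [mul_one_div]; exact hαle
      _ ≤ 2 * Z * (1 / (d : ℝ) ^ 2) := by gcongr
  have hβle2 : β ≤ 2 * Z * (1 / (d : ℝ) ^ 2) := by
    calc β ≤ 2 * Z * (1 / (d : ℝ) ^ 6) := by rw [mul_one_div]; exact hβle
      _ ≤ 2 * Z * (1 / (d : ℝ) ^ 2) := by gcongr
  have hZd : 0 ≤ Z * (1 / (d : ℝ) ^ 2) := by positivity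
  rcases le_or_gt ((d : ℝ) ^ 6) Z with hc | hc
  · have h1 : 1 ≤ Z * (1 / (d : ℝ) ^ 2) := by
      rw [mul_one_div, le_div_iff₀ (by positivity), one_mul]
      exact (pow_le_pow_right₀ hd1 (by norm_num)).trans hc
    set b := ((cntB p d Z).card : ℝ)
    have e : a * b - α * β = α * (b - β) + (a - α) * β + (a - α) * (b - β) := by ring
    rw [e]
    have t1 : |α * (b - β)| ≤ α * 2 := by
      rw [abs_mul, abs_of_nonneg hα0]; gcongr
    have t2 : |(a - α) * β| ≤ 1 * β := by
      rw [abs_mul, abs_of_nonneg hβ0]; gcongr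
    have t3 : |(a - α) * (b - β)| ≤ 1 * 2 := by
      rw [abs_mul]; gcongr
    have := abs_add_three (α * (b - β)) ((a - α) * β) ((a - α) * (b - β))
    linarith
  · rw [cntB_empty p d Z hc]
    have hYd : Y ≤ (d : ℝ) ^ 4 := by
      by_contra hcon
      push Not at hcon
      have h1 : ((d : ℝ) ^ 4) ^ 3 < Y ^ 3 := by gcongr
      have h2 : Z ^ 2 < ((d : ℝ) ^ 6) ^ 2 := by gcongr
      have h3 : ((d : ℝ) ^ 4) ^ 3 = ((d : ℝ) ^ 6) ^ 2 := by ring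
      linarith
    have hα2 : α ≤ 2 := by
      refine hαle.trans ?_
      rw [div_le_iff₀ (by positivity)]; linarith
    have : α * β ≤ 2 * β := by gcongr
    simp only [card_empty, Nat.cast_zero, mul_zero, zero_sub, abs_neg]
    rw [abs_of_nonneg (by positivity)]
    linarith

open Classical in
/-- The pairs with condition (M), without the discriminant condition. -/
noncomputable def GG (p : ℕ) (Y Z : ℝ) : Finset (ℤ × ℤ) :=
  (((Icc (-⌊Y⌋) ⌊Y⌋).filter (fun A : ℤ => (p : ℤ) ∣ A)) ×ˢ
    ((Icc (-⌊Z⌋) ⌊Z⌋).filter (fun B : ℤ => (p : ℤ) ∣ B ∧ ¬ (p : ℤ) ^ 2 ∣ B))).filter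
    (fun AB => CondM AB.1 AB.2)

lemma GG_card (p : ℕ) (Y Z : ℝ) :
    ((GG p Y Z).card : ℝ) = ∑ d ∈ range (⌊Z⌋.toNat + 1),
      (ArithmeticFunction.moebius d : ℝ) * ((cntA p d Y).card * (cntB p d Z).card : ℝ) := by
  classical
  set SA := (Icc (-⌊Y⌋) ⌊Y⌋).filter (fun A : ℤ => (p : ℤ) ∣ A) with hSA
  set SB := (Icc (-⌊Z⌋) ⌊Z⌋).filter (fun B : ℤ => (p : ℤ) ∣ B ∧ ¬ (p : ℤ) ^ 2 ∣ B) with hSB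
  set N := ⌊Z⌋.toNat
  have h1 : ((GG p Y Z).card : ℤ) = ∑ AB ∈ SA ×ˢ SB, if CondM AB.1 AB.2 then 1 else 0 := by
    rw [GG, card_filter]; push_cast; rfl
  have h2 : ∀ AB ∈ SA ×ˢ SB, (if CondM AB.1 AB.2 then (1 : ℤ) else 0) =
      ∑ d ∈ range (N + 1), if ((d : ℤ) ^ 4 ∣ AB.1 ∧ (d : ℤ) ^ 6 ∣ AB.2) then
        ArithmeticFunction.moebius d else 0 := by
    rintro ⟨A, B⟩ hAB
    simp only [mem_product, hSB, mem_filter, mem_Icc] at hAB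
    have hB0 : B ≠ 0 := by
      rintro rfl
      exact hAB.2.2.2 (dvd_zero _)
    rw [← moebius_indicator A B hB0 N (by omega), sum_filter]
  have h3 : ((GG p Y Z).card : ℤ) = ∑ d ∈ range (N + 1),
      (ArithmeticFunction.moebius d) * ((cntA p d Y).card * (cntB p d Z).card : ℤ) := by
    rw [h1, sum_congr rfl h2, sum_comm]
    refine sum_congr rfl fun d _ => ?_
    rw [← sum_filter, filter_product (fun A : ℤ => (d : ℤ) ^ 4 ∣ A) (fun B : ℤ => (d : ℤ) ^ 6 ∣ B),
      sum_const, card_product, nsmul_eq_mul, mul_comm]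
    push_cast
    rfl
  exact_mod_cast h3

lemma GG_bound (p : ℕ) (hp : p.Prime) (Y Z : ℝ) (hY : 0 ≤ Y) (hYZ : Y ≤ Z)
    (h32 : Y ^ 3 = Z ^ 2) :
    |((GG p Y Z).card : ℝ) - (1 / (p : ℝ) ^ 2) * (1 - 1 / (p : ℝ)) * 4 * (Y * Z) *
      ((p : ℝ) ^ 10 / ((p : ℝ) ^ 10 - 1) * (1 / (riemannZeta 10).re))| ≤
      8 * Z * ∑' d : ℕ, 1 / (d : ℝ) ^ 2 := by
  have hZ : 0 ≤ Z := hY.trans hYZ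
  have hs1 := (main_series p hp).mul_left ((1 / (p : ℝ) ^ 2) * (1 - 1 / (p : ℝ)) * 4 * (Y * Z))
  have hs2 : HasSum (fun d : ℕ => (ArithmeticFunction.moebius d : ℝ) *
      ((cntA p d Y).card * (cntB p d Z).card : ℝ)) ((GG p Y Z).card : ℝ) := by
    rw [GG_card]
    apply hasSum_sum_of_ne_finset_zero
    intro d hd
    rw [mem_range, not_lt] at hd
    rw [cntB_empty p d Z]
    · simp
    · have h1 : ⌊Z⌋ < (d : ℤ) := by omega
      have h2 : Z < d := by simpa using Int.floor_lt.1 h1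
      have h3 : d ≤ d ^ 6 := Nat.le_self_pow (by norm_num) d
      have h4 : (d : ℝ) ≤ (d : ℝ) ^ 6 := by exact_mod_cast h3
      linarith
  have hs3 : HasSum (fun d : ℕ => 8 * Z * (1 / (d : ℝ) ^ 2)) (8 * Z * ∑' d : ℕ, 1 / (d : ℝ) ^ 2) :=
    (Real.summable_one_div_nat_pow.2 (by norm_num)).hasSum.mul_left _
  have := (hs2.sub hs1).norm_le_of_bounded hs3 ?_
  · rw [Real.norm_eq_abs] at this; exact this
  · intro d
    rw [Real.norm_eq_abs]
    split_ifs with hd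
    · rw [cntB_empty' p d hd]
      simp only [card_empty, Nat.cast_zero, mul_zero, zero_div, sub_zero, abs_zero]
      positivity
    · have h := term_bound p d hp hd Y Z hY hYZ h32
      have hm : |(ArithmeticFunction.moebius d : ℝ)| ≤ 1 := by
        exact_mod_cast ArithmeticFunction.abs_moebius_le_one (n := d)
      refine le_trans ?_ h
      set c := (ArithmeticFunction.moebius d : ℝ)
      set w := (1 / (p : ℝ) ^ 2) * (1 - 1 / (p : ℝ)) * 4 * (Y * Z)
      set u := ((cntA p d Y).card : ℝ) * ((cntB p d Z).card : ℝ)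
      have e : c * u - w * (c / (d : ℝ) ^ 10) = c * (u - w / (d : ℝ) ^ 10) := by ring
      rw [e, abs_mul]
      exact mul_le_of_le_one_left (abs_nonneg _) hm

lemma cube_inj_disc (A A' B : ℤ) (h : 4 * A ^ 3 + 27 * B ^ 2 = 0)
    (h' : 4 * A' ^ 3 + 27 * B ^ 2 = 0) : A = A' := by
  have : A ^ 3 = A' ^ 3 := by linarith
  exact (Odd.strictMono_pow (by decide : Odd 3)).injective this

theorem stmt_16 :
    ∃ K : ℝ, 0 < K ∧ ∀ (p : ℕ), p.Prime → 5 ≤ p → ∀ (X : ℝ), (p : ℝ) ^ 6 ≤ X →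
      |({AB ∈ Efam X | (p : ℤ) ∣ AB.1 ∧ (p : ℤ) ∣ AB.2 ∧ ¬ (p : ℤ) ^ 2 ∣ AB.2}.ncard : ℝ)
          - (1 / (p : ℝ) ^ 2) * (1 - 1 / (p : ℝ)) * ((p : ℝ) ^ 10 / ((p : ℝ) ^ 10 - 1))
            * (4 / (riemannZeta 10).re) * X ^ ((5 : ℝ) / 6)|
        ≤ K * X ^ ((1 : ℝ) / 2) := by
  classical
  have hS0 : 0 ≤ ∑' d : ℕ, 1 / (d : ℝ) ^ 2 := tsum_nonneg fun d => by positivity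
  refine ⟨8 * (∑' d : ℕ, 1 / (d : ℝ) ^ 2) + 3, by positivity, ?_⟩
  intro p hp _ X hX
  have hp1 : (1 : ℝ) ≤ p := by exact_mod_cast hp.one_le
  have hX1 : 1 ≤ X := (one_le_pow₀ hp1).trans hX
  have hX0 : 0 ≤ X := by linarith
  set Y := X ^ ((1 : ℝ) / 3) with hYdef
  set Z := X ^ ((1 : ℝ) / 2) with hZdef
  have hY0 : 0 ≤ Y := by positivity
  have hZ0 : 0 ≤ Z := by positivity
  have hZ1 : 1 ≤ Z := Real.one_le_rpow hX1 (by norm_num)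
  have hYZ : Y ≤ Z := Real.rpow_le_rpow_of_exponent_le hX1 (by norm_num)
  have hY3 : Y ^ 3 = X := by
    rw [hYdef, ← Real.rpow_natCast, ← Real.rpow_mul hX0]; norm_num
  have hZ2 : Z ^ 2 = X := by
    rw [hZdef, ← Real.rpow_natCast, ← Real.rpow_mul hX0]; norm_num
  have hYZm : X ^ ((5 : ℝ) / 6) = Y * Z := by
    rw [hYdef, hZdef, ← Real.rpow_add (by linarith)]; norm_num
  have hG := GG_bound p hp Y Z hY0 hYZ (hY3.trans hZ2.symm)
  -- membership in the box
  have hmemA : ∀ A : ℤ, ((|A| ^ 3 : ℤ) : ℝ) ≤ X ↔ A ∈ Icc (-⌊Y⌋) ⌊Y⌋ := by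
    intro A
    rw [mem_Icc, ← abs_le, Int.le_floor, ← hY3]
    push_cast
    exact pow_le_pow_iff_left₀ (abs_nonneg _) hY0 (by norm_num)
  have hmemB : ∀ B : ℤ, ((B ^ 2 : ℤ) : ℝ) ≤ X ↔ B ∈ Icc (-⌊Z⌋) ⌊Z⌋ := by
    intro B
    rw [mem_Icc, ← abs_le, Int.le_floor, ← hZ2, ← sq_abs]
    push_cast
    exact pow_le_pow_iff_left₀ (abs_nonneg _) hZ0 (by norm_num)
  have hset : {AB ∈ Efam X | (p : ℤ) ∣ AB.1 ∧ (p : ℤ) ∣ AB.2 ∧ ¬ (p : ℤ) ^ 2 ∣ AB.2} =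
      (((GG p Y Z).filter (fun AB => ¬ (4 * AB.1 ^ 3 + 27 * AB.2 ^ 2 = 0)) : Finset (ℤ × ℤ)) :
        Set (ℤ × ℤ)) := by
    ext ⟨A, B⟩
    simp only [Efam, GG, Set.mem_setOf_eq, coe_filter, mem_filter, mem_product, ← hmemA, ← hmemB,
      Int.cast_max, max_le_iff]
    tauto
  rw [hset, Set.ncard_coe_finset]
  have hsplit := card_filter_add_card_filter_not (s := GG p Y Z)
    (fun AB : ℤ × ℤ => 4 * AB.1 ^ 3 + 27 * AB.2 ^ 2 = 0)
  set F1 := (GG p Y Z).filter (fun AB : ℤ × ℤ => 4 * AB.1 ^ 3 + 27 * AB.2 ^ 2 = 0) with hF1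
  set F2 := (GG p Y Z).filter (fun AB : ℤ × ℤ => ¬ (4 * AB.1 ^ 3 + 27 * AB.2 ^ 2 = 0)) with hF2
  have hF1c : F1.card ≤ (Icc (-⌊Z⌋) ⌊Z⌋).card := by
    apply card_le_card_of_injOn (fun AB => AB.2)
    · rintro ⟨A, B⟩ h
      have h' : (A, B) ∈ F1 := h
      simp only [hF1, GG, mem_filter, mem_product] at h'
      exact h'.1.1.2.1
    · rintro ⟨A, B⟩ h ⟨A', B'⟩ h' hBB
      have hBB' : B = B' := hBB
      subst hBB'
      have h1 : (A, B) ∈ F1 := h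
      have h2 : (A', B) ∈ F1 := h'
      rw [hF1, mem_filter] at h1 h2
      rw [cube_inj_disc A A' B h1.2 h2.2]
  have hF1r : (F1.card : ℝ) ≤ 3 * Z := by
    have h0 : 0 ≤ ⌊Z⌋ := Int.floor_nonneg.2 hZ0
    rw [Int.card_Icc] at hF1c
    have h1 : (F1.card : ℤ) ≤ 2 * ⌊Z⌋ + 1 := by omega
    have h2 : (F1.card : ℝ) ≤ 2 * (⌊Z⌋ : ℝ) + 1 := by exact_mod_cast h1
    linarith [Int.floor_le Z]
  have hsplit' : ((GG p Y Z).card : ℝ) = F1.card + F2.card := by exact_mod_cast hsplit.symm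
  have hF10 : (0 : ℝ) ≤ F1.card := by positivity
  have hmain : (1 / (p : ℝ) ^ 2) * (1 - 1 / (p : ℝ)) * ((p : ℝ) ^ 10 / ((p : ℝ) ^ 10 - 1))
            * (4 / (riemannZeta 10).re) * X ^ ((5 : ℝ) / 6) =
      (1 / (p : ℝ) ^ 2) * (1 - 1 / (p : ℝ)) * 4 * (Y * Z) *
      ((p : ℝ) ^ 10 / ((p : ℝ) ^ 10 - 1) * (1 / (riemannZeta 10).re)) := by
    rw [hYZm]; ring
  rw [hmain]
  rw [hsplit'] at hG
  rw [abs_le] at hG ⊢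
  constructor <;> linarith [hG.1, hG.2]
end

section
/- Fix an integer k ≥ 1 and a real ε with 0 < ε < 1/3. There is a constant C = C(k,ε) such that for all distinct primes p_1, …, p_k ≥ 5 and all real X ≥ 2 with p_1⋯p_k ≤ X^{1/3−ε}, the number of pairs (A,B) ∈ E(X) with p_i ∤ 4A³+27B² for every i (good reduction at all of p_1,…,p_k) differs from ∏_{i=1}^{k} ((p_i−1)/p_i)·(p_i^{10}/(p_i^{10}−1)) · (4/ζ(10))·X^{5/6} by at most C·(∏_{i=1}^{k}(p_i−1))·X^{1/2}, where ζ is the Riemann zeta function. -/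
/-- box side -/
noncomputable def bx (U : ℝ) : Finset ℤ := Finset.Icc (-⌊U⌋) ⌊U⌋

lemma mem_bx (U : ℝ) (a : ℤ) : a ∈ bx U ↔ |(a : ℝ)| ≤ U := by
  unfold bx
  rw [Finset.mem_Icc, neg_le, Int.le_floor, Int.le_floor, abs_le]
  push_cast
  constructor <;> rintro ⟨h, h'⟩ <;> constructor <;> linarith

lemma card_mod (P : ℕ) (hP : 0 < P) (U : ℝ) (hU : 0 ≤ U) (r : ℤ) :
    |((((bx U).filter (fun a => a ≡ r [ZMOD (P : ℤ)])).card : ℕ) : ℝ) - 2 * U / P| ≤ 2 := by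
  have hI : bx U = Finset.Ioc (-⌊U⌋ - 1) ⌊U⌋ := by
    unfold bx; ext a; simp only [Finset.mem_Icc, Finset.mem_Ioc]; omega
  have hP' : (0 : ℤ) < P := by exact_mod_cast hP
  have h := Int.Ioc_filter_modEq_card (-⌊U⌋ - 1) ⌊U⌋ hP' r
  rw [hI]
  have hf0 : 0 ≤ ⌊U⌋ := Int.floor_nonneg.mpr hU
  have hPr : (1 : ℝ) ≤ P := by exact_mod_cast hP
  have hPq : (0 : ℚ) < P := by exact_mod_cast hP
  have hmono : ⌊(((-⌊U⌋ - 1 : ℤ) : ℚ) - (r : ℚ)) / ((P : ℤ) : ℚ)⌋ ≤ ⌊((⌊U⌋ : ℚ) - (r : ℚ)) / ((P : ℤ) : ℚ)⌋ := by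
    apply Int.floor_le_floor
    have : ((-⌊U⌋ - 1 : ℤ) : ℚ) ≤ (⌊U⌋ : ℚ) := by exact_mod_cast (by omega)
    have h2 : (0 : ℚ) < ((P : ℤ) : ℚ) := by exact_mod_cast hP
    gcongr
  rw [max_eq_left (by linarith)] at h
  have h' : ((((Finset.Ioc (-⌊U⌋ - 1) ⌊U⌋).filter (fun a => a ≡ r [ZMOD (P : ℤ)])).card : ℕ) : ℝ) =
      (⌊((⌊U⌋ : ℚ) - (r : ℚ)) / ((P : ℤ) : ℚ)⌋ : ℝ) - (⌊(((-⌊U⌋ - 1 : ℤ) : ℚ) - (r : ℚ)) / ((P : ℤ) : ℚ)⌋ : ℝ) := by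
    exact_mod_cast h
  rw [h']
  set x : ℚ := ((⌊U⌋ : ℚ) - (r : ℚ)) / ((P : ℤ) : ℚ) with hx
  set y : ℚ := (((-⌊U⌋ - 1 : ℤ) : ℚ) - (r : ℚ)) / ((P : ℤ) : ℚ) with hy
  have hxy : ((x : ℚ) : ℝ) - ((y : ℚ) : ℝ) = (2 * (⌊U⌋ : ℝ) + 1) / P := by
    rw [hx, hy]; push_cast; field_simp; ring
  have e1 : ((⌊x⌋ : ℤ) : ℝ) ≤ (x : ℝ) := by exact_mod_cast Int.floor_le x
  have e2 : (x : ℝ) < ((⌊x⌋ : ℤ) : ℝ) + 1 := by exact_mod_cast Int.lt_floor_add_one x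
  have e3 : ((⌊y⌋ : ℤ) : ℝ) ≤ (y : ℝ) := by exact_mod_cast Int.floor_le y
  have e4 : (y : ℝ) < ((⌊y⌋ : ℤ) : ℝ) + 1 := by exact_mod_cast Int.lt_floor_add_one y
  have f1 := Int.floor_le U
  have f2 := Int.lt_floor_add_one U
  have g1 : (2 * (⌊U⌋ : ℝ) + 1) / P - 2 * U / P ≤ 1 := by
    rw [← sub_div, div_le_one (by linarith)]; linarith
  have g2 : -1 ≤ (2 * (⌊U⌋ : ℝ) + 1) / P - 2 * U / P := by
    rw [← sub_div, le_div_iff₀ (by linarith)]; linarith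
  rw [abs_le]; constructor <;> linarith

lemma count_box (P : ℕ) (hP : 0 < P) (S : Finset (ZMod P × ZMod P)) (U V : ℝ) (hU : 0 ≤ U)
    (hV : 0 ≤ V) :
    |((((bx U ×ˢ bx V).filter (fun ab => ((ab.1 : ZMod P), (ab.2 : ZMod P)) ∈ S)).card : ℕ) : ℝ)
      - S.card * (4 * U * V / P ^ 2)| ≤ S.card * (4 * U / P + 4 * V / P + 4) := by
  classical
  have : NeZero P := ⟨hP.ne'⟩
  have hPr : (0 : ℝ) < P := by exact_mod_cast hP
  have h1 := Finset.card_eq_sum_card_fiberwise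
    (s := (bx U ×ˢ bx V).filter (fun ab => ((ab.1 : ZMod P), (ab.2 : ZMod P)) ∈ S)) (t := S)
    (f := fun ab : ℤ × ℤ => ((ab.1 : ZMod P), (ab.2 : ZMod P))) (by
      intro ab hab
      simp only [Finset.coe_filter, Set.mem_ofPred_eq] at hab
      exact hab.2)
  have h2 : ∀ s ∈ S, (((bx U ×ˢ bx V).filter (fun ab => ((ab.1 : ZMod P), (ab.2 : ZMod P)) ∈ S)).filter
      (fun ab : ℤ × ℤ => ((ab.1 : ZMod P), (ab.2 : ZMod P)) = s)).card =
      ((bx U).filter (fun a => a ≡ s.1.cast [ZMOD (P : ℤ)])).card *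
      ((bx V).filter (fun a => a ≡ s.2.cast [ZMOD (P : ℤ)])).card := by
    intro s hs
    rw [← Finset.card_product]
    congr 1
    ext ⟨a, b⟩
    obtain ⟨s1, s2⟩ := s
    simp only [Finset.mem_filter, Finset.mem_product, ← ZMod.intCast_eq_intCast_iff,
      ZMod.intCast_zmod_cast, Prod.mk.injEq]
    constructor
    · rintro ⟨⟨⟨h1, h2⟩, h3⟩, h4, h5⟩; exact ⟨⟨h1, h4⟩, h2, h5⟩
    · rintro ⟨⟨h1, h4⟩, h2, h5⟩; exact ⟨⟨⟨h1, h2⟩, by rw [h4, h5]; exact hs⟩, h4, h5⟩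
  rw [h1, Finset.sum_congr rfl h2]
  push_cast
  rw [← nsmul_eq_mul, ← nsmul_eq_mul, ← Finset.sum_const, ← Finset.sum_const,
    ← Finset.sum_sub_distrib]
  refine (Finset.abs_sum_le_sum_abs _ _).trans (Finset.sum_le_sum fun s _ => ?_)
  have a1 := card_mod P hP U hU s.1.cast
  have a2 := card_mod P hP V hV s.2.cast
  set n : ℝ := ((((bx U).filter (fun a => a ≡ s.1.cast [ZMOD (P : ℤ)])).card : ℕ) : ℝ)
  set m : ℝ := ((((bx V).filter (fun a => a ≡ s.2.cast [ZMOD (P : ℤ)])).card : ℕ) : ℝ)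
  have u0 : 0 ≤ 2 * U / P := by positivity
  have v0 : 0 ≤ 2 * V / P := by positivity
  have e1 : 4 * U * V / (P : ℝ) ^ 2 = (2 * U / P) * (2 * V / P) := by field_simp; ring
  have e2 : 4 * U / (P : ℝ) = 2 * (2 * U / P) := by ring
  have e3 : 4 * V / (P : ℝ) = 2 * (2 * V / P) := by ring
  rw [e1, e2, e3]
  generalize 2 * U / (P : ℝ) = u at *
  generalize 2 * V / (P : ℝ) = v at *
  have : n * m - u * v = (n - u) * (m - v) + u * (m - v) + (n - u) * v := by ring
  rw [this]
  calc _ ≤ |(n - u) * (m - v)| + |u * (m - v)| + |(n - u) * v| := abs_add_three _ _ _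
    _ = |n - u| * |m - v| + u * |m - v| + |n - u| * v := by
        rw [abs_mul, abs_mul, abs_mul, abs_of_nonneg u0, abs_of_nonneg v0]
    _ ≤ 2 * 2 + u * 2 + 2 * v := by gcongr
    _ = _ := by ring

lemma card_prime (p : ℕ) [Fact p.Prime] (h5 : 5 ≤ p) :
    (Finset.univ.filter (fun s : ZMod p × ZMod p => 4 * s.1 ^ 3 + 27 * s.2 ^ 2 ≠ 0)).card
      = p * (p - 1) := by
  have n2 : (2 : ZMod p) ≠ 0 := by
    have : ((2 : ℕ) : ZMod p) ≠ 0 := by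
      rw [Ne, ZMod.natCast_eq_zero_iff]; intro h; have := Nat.le_of_dvd (by norm_num) h; omega
    exact_mod_cast this
  have n3 : (3 : ZMod p) ≠ 0 := by
    have : ((3 : ℕ) : ZMod p) ≠ 0 := by
      rw [Ne, ZMod.natCast_eq_zero_iff]; intro h; have := Nat.le_of_dvd (by norm_num) h; omega
    exact_mod_cast this
  have hz : (Finset.univ.filter (fun s : ZMod p × ZMod p => 4 * s.1 ^ 3 + 27 * s.2 ^ 2 = 0)).card = p := by
    have : (Finset.univ : Finset (ZMod p)).card = p := by rw [Finset.card_univ, ZMod.card]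
    conv_rhs => rw [← this]
    apply Finset.card_nbij' (fun s => -3 * s.2 / (2 * s.1)) (fun t => (-3 * t ^ 2, 2 * t ^ 3))
    · intro s _; simp
    · intro t _; simp; ring
    · rintro ⟨x, y⟩ h
      simp only [Finset.coe_filter, Finset.mem_univ, true_and, Set.mem_ofPred_eq] at h
      by_cases hx : x = 0
      · subst hx
        have : (27 : ZMod p) ≠ 0 := by
          have : (27 : ZMod p) = 3 ^ 3 := by norm_num
          rw [this]; exact pow_ne_zero _ n3
        have : y = 0 := by simpa [this] using h
        simp [this]
      · have h' : 27 * y ^ 2 = - (4 * x ^ 3) := by linear_combination h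
        have n4 : (4 : ZMod p) ≠ 0 := by
          have : (4 : ZMod p) = 2 ^ 2 := by norm_num
          rw [this]; exact pow_ne_zero _ n2
        ext
        · simp only
          field_simp
          linear_combination (-1) * h
        · simp only
          field_simp
          linear_combination (-y) * h
    · intro t _
      simp only
      by_cases ht : t = 0
      · simp [ht]
      · field_simp
  have := Finset.card_filter_add_card_filter_not (s := (Finset.univ : Finset (ZMod p × ZMod p)))
    (fun s : ZMod p × ZMod p => 4 * s.1 ^ 3 + 27 * s.2 ^ 2 = 0)
  rw [hz, Finset.card_univ, Fintype.card_prod, ZMod.card] at this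
  have h2 : p * (p - 1) + p = p * p := by
    obtain ⟨q, rfl⟩ : ∃ q, p = q + 1 := ⟨p - 1, by omega⟩
    simp; ring
  simp only [ne_eq]
  omega

lemma card_S (k : ℕ) (p : Fin k → ℕ) (hp : ∀ i, (p i).Prime) (h5 : ∀ i, 5 ≤ p i)
    (hinj : Function.Injective p) :
    ∃ S : Finset (ZMod (∏ i, p i) × ZMod (∏ i, p i)),
      S.card = (∏ i, p i) * ∏ i, (p i - 1) ∧
      ∀ a b : ℤ, ((a : ZMod (∏ i, p i)), (b : ZMod (∏ i, p i))) ∈ S ↔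
        ∀ i, ¬ (p i : ℤ) ∣ (4 * a ^ 3 + 27 * b ^ 2) := by
  classical
  have hpos : 0 < ∏ i, p i := Finset.prod_pos fun i _ => (hp i).pos
  have : NeZero (∏ i, p i) := ⟨hpos.ne'⟩
  have : ∀ i, Fact (p i).Prime := fun i => ⟨hp i⟩
  have hco : Pairwise (Function.onFun Nat.Coprime p) := by
    intro i j hij
    exact (Nat.coprime_primes (hp i) (hp j)).mpr (fun h => hij (hinj h))
  let e := ZMod.prodEquivPi p hco
  refine ⟨Finset.univ.filter (fun s => ∀ i, 4 * (e s.1 i) ^ 3 + 27 * (e s.2 i) ^ 2 ≠ 0), ?_, ?_⟩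
  · rw [← Finset.prod_mul_distrib, ← Finset.prod_congr rfl (fun i _ => card_prime (p i) (h5 i)),
      ← Fintype.card_piFinset]
    apply Finset.card_nbij' (fun s i => (e s.1 i, e s.2 i))
      (fun f => (e.symm (fun i => (f i).1), e.symm (fun i => (f i).2)))
    · intro s hs; simpa using hs
    · intro s hs; simpa using hs
    · intro s hs; simp
    · intro s hs; simp
  · intro a b
    simp only [Finset.mem_filter, Finset.mem_univ, true_and, map_intCast, Pi.intCast_apply]
    refine forall_congr' fun i => ?_
    rw [← ZMod.intCast_zmod_eq_zero_iff_dvd]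
    push_cast
    rfl

open Classical in
lemma sum_moeb (A B : ℤ) (Y : ℕ)
    (hY : ∀ d : ℕ, 1 ≤ d → (d : ℤ) ^ 4 ∣ A → (d : ℤ) ^ 6 ∣ B → d ≤ Y) :
    (∑ d ∈ (Finset.Icc 1 Y).filter (fun d : ℕ => (d : ℤ) ^ 4 ∣ A ∧ (d : ℤ) ^ 6 ∣ B),
      ArithmeticFunction.moebius d) = if (∀ q : ℕ, q.Prime → (q : ℤ) ^ 4 ∣ A → ¬ (q : ℤ) ^ 6 ∣ B) then 1 else 0 := by
  classical
  set T := (Finset.Icc 1 Y).filter (fun d : ℕ => (d : ℤ) ^ 4 ∣ A ∧ (d : ℤ) ^ 6 ∣ B) with hT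
  have hnat : ∀ d m : ℕ, ∀ A : ℤ, (d : ℤ) ^ m ∣ A ↔ d ^ m ∣ A.natAbs := by
    intro d m A
    rw [← Int.natAbs_dvd_natAbs, Int.natAbs_pow, Int.natAbs_natCast]
  have hmem : ∀ d : ℕ, d ∈ T ↔ 1 ≤ d ∧ d ^ 4 ∣ A.natAbs ∧ d ^ 6 ∣ B.natAbs := by
    intro d
    rw [hT, Finset.mem_filter, Finset.mem_Icc, hnat, hnat]
    constructor
    · rintro ⟨⟨h1, _⟩, h⟩; exact ⟨h1, h⟩
    · rintro ⟨h1, h⟩; exact ⟨⟨h1, hY d h1 ((hnat _ _ _).mpr h.1) ((hnat _ _ _).mpr h.2)⟩, h⟩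
  have hlcm : ∀ F : Finset ℕ, F ⊆ T → F.lcm id ∈ T := by
    intro F
    induction F using Finset.induction_on with
    | empty => intro _; rw [hmem]; simp
    | insert a F ha ih =>
      intro hF
      rw [Finset.insert_subset_iff] at hF
      have h1 := (hmem _).mp (ih hF.2)
      have h2 := (hmem _).mp hF.1
      rw [Finset.lcm_insert, hmem]
      simp only [id]
      change 1 ≤ Nat.lcm _ _ ∧ Nat.lcm _ _ ^ 4 ∣ _ ∧ Nat.lcm _ _ ^ 6 ∣ _
      refine ⟨Nat.lcm_pos h2.1 h1.1, ?_, ?_⟩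
      · rw [← Nat.pow_lcm_pow]; exact Nat.lcm_dvd h2.2.1 h1.2.1
      · rw [← Nat.pow_lcm_pow]; exact Nat.lcm_dvd h2.2.2 h1.2.2
  set D := T.lcm id with hD
  have hDT : D ∈ T := hlcm T (Finset.Subset.refl _)
  have hD' := (hmem D).mp hDT
  have hdiv : T = D.divisors := by
    ext d
    rw [Nat.mem_divisors]
    constructor
    · intro h; exact ⟨Finset.dvd_lcm (f := id) h, by omega⟩
    · rintro ⟨h, h0⟩
      rw [hmem]
      exact ⟨Nat.pos_of_dvd_of_pos h hD'.1, (pow_dvd_pow_of_dvd h 4).trans hD'.2.1,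
        (pow_dvd_pow_of_dvd h 6).trans hD'.2.2⟩
  rw [hdiv, ← ArithmeticFunction.coe_mul_zeta_apply, ArithmeticFunction.moebius_mul_coe_zeta,
    ArithmeticFunction.one_apply]
  congr 1
  rw [eq_iff_iff]
  constructor
  · intro h1 q hq hA hB
    have : q ∈ T := (hmem q).mpr ⟨hq.one_le, (hnat _ _ _).mp hA, (hnat _ _ _).mp hB⟩
    rw [hdiv, h1] at this
    simp at this
    exact hq.one_lt.ne' this
  · intro h
    by_contra h1
    obtain ⟨q, hq, hqD⟩ := Nat.exists_prime_and_dvd h1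
    have : q ∈ T := by rw [hdiv]; exact Nat.mem_divisors.mpr ⟨hqD, by omega⟩
    have := (hmem q).mp this
    exact h q hq ((hnat _ _ _).mpr this.2.1) ((hnat _ _ _).mpr this.2.2)

/-- coefficient -/
noncomputable def cf (P d : ℕ) : ℝ :=
  if d.Coprime P then (ArithmeticFunction.moebius d : ℝ) / (d : ℝ) ^ 10 else 0

lemma cf_abs (P d : ℕ) : |cf P d| ≤ 1 / (d : ℝ) ^ 10 := by
  unfold cf
  have h : |(ArithmeticFunction.moebius d : ℝ)| ≤ 1 := by
    exact_mod_cast ArithmeticFunction.abs_moebius_le_one (n := d)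
  split_ifs
  · rw [abs_div, abs_of_nonneg (by positivity : (0 : ℝ) ≤ (d : ℝ) ^ 10)]
    gcongr
  · rw [abs_zero]; positivity

lemma cf_summable (P : ℕ) : Summable (cf P) :=
  Summable.of_norm_bounded (Real.summable_one_div_nat_pow.mpr (by norm_num : 1 < 10))
    (fun d => by rw [Real.norm_eq_abs]; exact cf_abs P d)

lemma cf_tsum (P : ℕ) (hP : 0 < P) :
    (∑' d, cf P d) * ((∏ p ∈ P.primeFactors, (1 - ((p : ℝ) ^ 10)⁻¹)) * (riemannZeta 10).re) = 1 := by
  have : NeZero P := ⟨hP.ne'⟩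
  have hs : (1 : ℝ) < (10 : ℂ).re := by norm_num
  have h1 := DirichletCharacter.LSeries.mul_mu_eq_one (1 : DirichletCharacter ℂ P) hs
  rw [← DirichletCharacter.LFunction_eq_LSeries _ hs] at h1
  have h2 := DirichletCharacter.LFunctionTrivChar_eq_mul_riemannZeta (N := P) (s := 10) (by norm_num)
  unfold DirichletCharacter.LFunctionTrivChar at h2
  rw [h2] at h1
  have hz : riemannZeta 10 = (((riemannZeta 10).re : ℝ) : ℂ) := by
    have := riemannZeta_im_eq_zero_of_one_lt (x := 10) (by norm_num)
    apply Complex.ext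
    · simp
    · simpa using this
  have hL : LSeries ((fun n : ℕ => (1 : DirichletCharacter ℂ P) n) * (fun n : ℕ => (ArithmeticFunction.moebius n : ℂ))) 10
      = ((∑' d, cf P d : ℝ) : ℂ) := by
    rw [LSeries, Complex.ofReal_tsum]
    congr 1
    ext d
    rcases eq_or_ne d 0 with rfl | hd
    · simp [cf]
    · rw [LSeries.term_of_ne_zero hd]
      have h10 : (d : ℂ) ^ (10 : ℂ) = (d : ℂ) ^ 10 := by
        exact_mod_cast Complex.cpow_natCast (d : ℂ) 10
      rw [h10, cf]
      simp only [Pi.mul_apply]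
      split_ifs with hc
      · rw [MulChar.one_apply ((ZMod.isUnit_iff_coprime d P).mpr hc)]
        push_cast; ring
      · rw [MulChar.map_nonunit _ (fun h => hc ((ZMod.isUnit_iff_coprime d P).mp h))]
        simp
  have hpr : (∏ p ∈ P.primeFactors, (1 - (p : ℂ) ^ (-(10 : ℂ)))) =
      ((∏ p ∈ P.primeFactors, (1 - ((p : ℝ) ^ 10)⁻¹) : ℝ) : ℂ) := by
    push_cast
    refine Finset.prod_congr rfl fun q _ => ?_
    rw [Complex.cpow_neg]
    congr 2
    exact_mod_cast Complex.cpow_natCast (q : ℂ) 10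
  rw [hL, hpr, hz] at h1
  rw [mul_comm]
  exact_mod_cast h1

lemma cf_tail (P Y : ℕ) (W : ℝ) (hW0 : 0 < W) (hW : W ≤ Y + 1) :
    |∑' d, cf P d - ∑ d ∈ Finset.Icc 1 Y, cf P d| ≤ (∑' d : ℕ, 1 / (d : ℝ) ^ 2) / W ^ 8 := by
  have hs := cf_summable P
  have h0 : ∑ d ∈ Finset.Icc 1 Y, cf P d = ∑ d ∈ Finset.range (Y + 1), cf P d := by
    rw [Finset.sum_range_eq_add_Ico _ (by omega)]
    have : cf P 0 = 0 := by simp [cf]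
    rw [this, zero_add]
    rfl
  have h2 : Summable (fun d : ℕ => 1 / (d : ℝ) ^ 2) := Real.summable_one_div_nat_pow.mpr (by norm_num)
  rw [h0, ← hs.sum_add_tsum_nat_add (Y + 1), add_sub_cancel_left]
  have h3 : Summable (fun d : ℕ => 1 / ((d + (Y + 1) : ℕ) : ℝ) ^ 2 / W ^ 8) :=
    ((summable_nat_add_iff (Y + 1)).mpr h2).div_const _
  have hb : ∀ d : ℕ, ‖cf P (d + (Y + 1))‖ ≤ 1 / ((d + (Y + 1) : ℕ) : ℝ) ^ 2 / W ^ 8 := by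
    intro d
    rw [Real.norm_eq_abs]
    refine (cf_abs _ _).trans ?_
    rw [div_div]
    have hle : W ≤ ((d + (Y + 1) : ℕ) : ℝ) := by push_cast; have : (0:ℝ) ≤ d := by positivity
                                                 linarith
    have hpos : 0 < ((d + (Y + 1) : ℕ) : ℝ) := by positivity
    apply one_div_le_one_div_of_le (by positivity)
    calc ((d + (Y + 1) : ℕ) : ℝ) ^ 2 * W ^ 8 ≤ ((d + (Y + 1) : ℕ) : ℝ) ^ 2 * ((d + (Y + 1) : ℕ) : ℝ) ^ 8 := by gcongr
      _ = _ := by ring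
  have := tsum_of_norm_bounded h3.hasSum hb
  rw [Real.norm_eq_abs] at this
  refine this.trans ?_
  rw [tsum_div_const]
  apply div_le_div_of_nonneg_right _ (by positivity)
  rw [← h2.sum_add_tsum_nat_add (Y + 1)]
  have : 0 ≤ ∑ d ∈ Finset.range (Y + 1), 1 / (d : ℝ) ^ 2 := Finset.sum_nonneg fun _ _ => by positivity
  linarith

/-- good reduction at all the primes -/
def gd {k : ℕ} (p : Fin k → ℕ) (ab : ℤ × ℤ) : Prop :=
  ∀ i, ¬ (p i : ℤ) ∣ (4 * ab.1 ^ 3 + 27 * ab.2 ^ 2)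

lemma gd_scale {k : ℕ} (p : Fin k → ℕ) (d : ℕ)
    (hd : d.Coprime (∏ i, p i)) (a b : ℤ) :
    gd p ((d : ℤ) ^ 4 * a, (d : ℤ) ^ 6 * b) ↔ gd p (a, b) := by
  unfold gd
  refine forall_congr' fun i => not_congr ?_
  have h1 : 4 * ((d : ℤ) ^ 4 * a) ^ 3 + 27 * ((d : ℤ) ^ 6 * b) ^ 2 =
    (d : ℤ) ^ 12 * (4 * a ^ 3 + 27 * b ^ 2) := by ring
  simp only [h1]
  have hc : Nat.Coprime (p i) (d ^ 12) := by
    apply Nat.Coprime.pow_right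
    exact (Nat.Coprime.coprime_dvd_right (Finset.dvd_prod_of_mem p (Finset.mem_univ i)) hd).symm
  have hc' : IsCoprime (p i : ℤ) ((d : ℤ) ^ 12) := by
    have := Nat.isCoprime_iff_coprime.mpr hc
    exact_mod_cast this
  exact ⟨hc'.dvd_of_dvd_mul_left, fun h => h.mul_left _⟩

lemma gd_noncop {k : ℕ} (p : Fin k → ℕ) (hp : ∀ i, (p i).Prime) (d : ℕ)
    (hd : ¬ d.Coprime (∏ i, p i)) (a b : ℤ) (ha : (d : ℤ) ^ 4 ∣ a) (hb : (d : ℤ) ^ 6 ∣ b) :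
    ¬ gd p (a, b) := by
  intro h
  apply hd
  apply Nat.Coprime.prod_right
  intro i _
  rw [Nat.coprime_comm, (hp i).coprime_iff_not_dvd]
  intro hpd
  have hpd' : (p i : ℤ) ∣ (d : ℤ) := by exact_mod_cast hpd
  have h1 : (p i : ℤ) ∣ a := (hpd'.trans (dvd_pow_self _ (by norm_num))).trans ha
  have h2 : (p i : ℤ) ∣ b := (hpd'.trans (dvd_pow_self _ (by norm_num))).trans hb
  apply h i
  exact dvd_add ((h1.trans (dvd_pow_self _ (by norm_num))).mul_left _)
    ((h2.trans (dvd_pow_self _ (by norm_num))).mul_left _)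

open Classical in
lemma card_scale {k : ℕ} (p : Fin k → ℕ) (d : ℕ) (hd1 : 1 ≤ d)
    (hd : d.Coprime (∏ i, p i)) (U V : ℝ) :
    ((bx U ×ˢ bx V).filter (fun ab => gd p ab ∧ (d : ℤ) ^ 4 ∣ ab.1 ∧ (d : ℤ) ^ 6 ∣ ab.2)).card =
    ((bx (U / d ^ 4) ×ˢ bx (V / d ^ 6)).filter (fun ab => gd p ab)).card := by
  symm
  have hdr : (0 : ℝ) < d := by exact_mod_cast hd1
  have hdz : (d : ℤ) ≠ 0 := by exact_mod_cast (by omega : d ≠ 0)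
  have key : ∀ (m : ℕ) (T : ℝ) (a : ℤ), |(a : ℝ)| ≤ T / d ^ m ↔ |(((d : ℤ) ^ m * a : ℤ) : ℝ)| ≤ T := by
    intro m T a
    rw [le_div_iff₀ (by positivity)]
    push_cast
    rw [abs_mul, abs_of_nonneg (by positivity : (0 : ℝ) ≤ (d : ℝ) ^ m), mul_comm]
  apply Finset.card_bij (fun ab _ => ((d : ℤ) ^ 4 * ab.1, (d : ℤ) ^ 6 * ab.2))
  · rintro ⟨a, b⟩ h
    simp only [Finset.mem_filter, Finset.mem_product, mem_bx] at h ⊢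
    rw [key, key] at h
    exact ⟨h.1, (gd_scale p d hd a b).mpr h.2, dvd_mul_right _ _, dvd_mul_right _ _⟩
  · rintro ⟨a, b⟩ _ ⟨a', b'⟩ _ h
    simp only [Prod.mk.injEq] at h
    exact Prod.ext (mul_left_cancel₀ (pow_ne_zero _ hdz) h.1) (mul_left_cancel₀ (pow_ne_zero _ hdz) h.2)
  · rintro ⟨a, b⟩ h
    simp only [Finset.mem_filter, Finset.mem_product, mem_bx] at h
    obtain ⟨h1, h2, ⟨a', rfl⟩, ⟨b', rfl⟩⟩ := h
    refine ⟨(a', b'), ?_, rfl⟩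
    simp only [Finset.mem_filter, Finset.mem_product, mem_bx]
    rw [key, key]
    exact ⟨h1, (gd_scale p d hd a' b').mp h2⟩

lemma dvd_bound (d : ℕ) (W : ℝ) (hW : 1 ≤ W) (m : ℕ) (hm : m ≠ 0) (A : ℤ) (hA : A ≠ 0)
    (h : (d : ℤ) ^ m ∣ A) (hb : |(A : ℝ)| ≤ W ^ m) : d ≤ ⌊W⌋₊ := by
  apply Nat.le_floor
  have h1 : |(d : ℤ) ^ m| ≤ |A| := by
    exact Int.le_of_dvd (abs_pos.mpr hA) ((abs_dvd_abs _ _).mpr h)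
  have h2 : (d : ℝ) ^ m ≤ |(A : ℝ)| := by
    have : ((|(d : ℤ) ^ m| : ℤ) : ℝ) ≤ ((|A| : ℤ) : ℝ) := by exact_mod_cast h1
    push_cast at this
    exact (le_abs_self _).trans this
  exact le_of_pow_le_pow_left₀ hm (by linarith) (h2.trans hb)

open Classical in
lemma card_moeb {k : ℕ} (hk : 1 ≤ k) (p : Fin k → ℕ) (W : ℝ) (hW : 1 ≤ W) :
    ((((bx (W ^ 4) ×ˢ bx (W ^ 6)).filter (fun ab => gd p ab ∧ CondM ab.1 ab.2)).card : ℕ) : ℤ) =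
    ∑ d ∈ Finset.Icc 1 ⌊W⌋₊, ArithmeticFunction.moebius d *
      ((((bx (W ^ 4) ×ˢ bx (W ^ 6)).filter
        (fun ab => gd p ab ∧ (d : ℤ) ^ 4 ∣ ab.1 ∧ (d : ℤ) ^ 6 ∣ ab.2)).card : ℕ) : ℤ) := by
  have e1 : ∀ d ∈ Finset.Icc 1 ⌊W⌋₊, ArithmeticFunction.moebius d *
      ((((bx (W ^ 4) ×ˢ bx (W ^ 6)).filter
        (fun ab => gd p ab ∧ (d : ℤ) ^ 4 ∣ ab.1 ∧ (d : ℤ) ^ 6 ∣ ab.2)).card : ℕ) : ℤ) =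
      ∑ ab ∈ (bx (W ^ 4) ×ˢ bx (W ^ 6)).filter (fun ab => gd p ab),
        if (d : ℤ) ^ 4 ∣ ab.1 ∧ (d : ℤ) ^ 6 ∣ ab.2 then ArithmeticFunction.moebius d else 0 := by
    intro d _
    rw [← Finset.sum_filter, Finset.filter_filter, Finset.sum_const, nsmul_eq_mul, mul_comm]
  rw [Finset.sum_congr rfl e1, Finset.sum_comm, ← Finset.filter_filter, Finset.card_filter]
  push_cast
  refine Finset.sum_congr rfl ?_
  rintro ⟨a, b⟩ hab
  simp only [Finset.mem_filter, Finset.mem_product, mem_bx] at hab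
  rw [← Finset.sum_filter, sum_moeb]
  · rfl
  · intro d hd ha hb
    by_cases h0 : a = 0
    · by_cases h1 : b = 0
      · exfalso
        apply hab.2 ⟨0, hk⟩
        simp [h0, h1]
      · exact dvd_bound d W hW 6 (by norm_num) b h1 hb hab.1.2
    · exact dvd_bound d W hW 4 (by norm_num) a h0 ha hab.1.1

open Classical in
lemma core {k : ℕ} (hk : 1 ≤ k) (p : Fin k → ℕ) (hp : ∀ i, (p i).Prime) (h5 : ∀ i, 5 ≤ p i)
    (hinj : Function.Injective p) (W : ℝ) (hW : 1 ≤ W) (hPW : ((∏ i, p i : ℕ) : ℝ) ≤ W ^ 4) :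
    |((((bx (W ^ 4) ×ˢ bx (W ^ 6)).filter (fun ab => gd p ab ∧ CondM ab.1 ab.2)).card : ℕ) : ℝ)
      - (∏ i, ((p i : ℝ) - 1)) / ((∏ i, p i : ℕ) : ℝ) * 4 * W ^ 10 * ∑' d, cf (∏ i, p i) d| ≤
      (12 * (∑' d : ℕ, 1 / (d : ℝ) ^ 2) + 4) * (∏ i, ((p i : ℝ) - 1)) * W ^ 6 := by
  have hPpos : 0 < ∏ i, p i := Finset.prod_pos fun i _ => (hp i).pos
  have hφ : (((∏ i, (p i - 1) : ℕ)) : ℝ) = ∏ i, ((p i : ℝ) - 1) := by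
    push_cast
    refine Finset.prod_congr rfl fun i _ => ?_
    rw [Nat.cast_sub (hp i).one_le, Nat.cast_one]
  have hφ0 : 0 ≤ ∏ i, ((p i : ℝ) - 1) := by rw [← hφ]; positivity
  set P := ∏ i, p i with hP
  have hcs : ∃ S : Finset (ZMod P × ZMod P), S.card = P * ∏ i, (p i - 1) ∧
      ∀ a b : ℤ, ((a : ZMod P), (b : ZMod P)) ∈ S ↔
        ∀ i, ¬ (p i : ℤ) ∣ (4 * a ^ 3 + 27 * b ^ 2) := card_S k p hp h5 hinj
  obtain ⟨S, hS, hSm⟩ := hcs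
  have hScard : (S.card : ℝ) = (P : ℝ) * ∏ i, ((p i : ℝ) - 1) := by
    rw [hS, ← hφ, Nat.cast_mul]
  set φ := ∏ i, ((p i : ℝ) - 1) with hφd
  set Z := ∑' d : ℕ, 1 / (d : ℝ) ^ 2 with hZ
  have hZ0 : 0 ≤ Z := tsum_nonneg fun d => by positivity
  have hPr : (1 : ℝ) ≤ P := by exact_mod_cast hPpos
  have hW0 : 0 < W := by linarith
  set N : ℕ := ((bx (W ^ 4) ×ˢ bx (W ^ 6)).filter (fun ab => gd p ab ∧ CondM ab.1 ab.2)).card with hN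
  let g : ℕ → ℕ := fun d => ((bx (W ^ 4) ×ˢ bx (W ^ 6)).filter
        (fun ab => gd p ab ∧ (d : ℤ) ^ 4 ∣ ab.1 ∧ (d : ℤ) ^ 6 ∣ ab.2)).card
  have hNg : (N : ℝ) = ∑ d ∈ Finset.Icc 1 ⌊W⌋₊, (ArithmeticFunction.moebius d : ℝ) * (g d : ℝ) := by
    have := card_moeb hk p W hW
    exact_mod_cast this
  have hterm : ∀ d ∈ Finset.Icc 1 ⌊W⌋₊,
      |(ArithmeticFunction.moebius d : ℝ) * (g d : ℝ) - φ / P * 4 * W ^ 10 * cf P d| ≤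
        φ * (8 * W ^ 6 * (1 / (d : ℝ) ^ 2) + 4 * W ^ 4) := by
    intro d hd
    have hd1 : 1 ≤ d := (Finset.mem_Icc.mp hd).1
    have hdr : (1 : ℝ) ≤ d := by exact_mod_cast hd1
    by_cases hc : d.Coprime P
    · have hg : g d = ((bx (W ^ 4 / d ^ 4) ×ˢ bx (W ^ 6 / d ^ 6)).filter (fun ab => gd p ab)).card :=
        card_scale p d hd1 hc _ _
      have hcb := count_box P hPpos S (W ^ 4 / d ^ 4) (W ^ 6 / d ^ 6) (by positivity) (by positivity)
      have hfe : ((bx (W ^ 4 / d ^ 4) ×ˢ bx (W ^ 6 / d ^ 6)).filter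
          (fun ab => ((ab.1 : ZMod P), (ab.2 : ZMod P)) ∈ S)) =
          ((bx (W ^ 4 / d ^ 4) ×ˢ bx (W ^ 6 / d ^ 6)).filter (fun ab => gd p ab)) := by
        apply Finset.filter_congr
        intro ab _
        exact hSm ab.1 ab.2
      rw [hfe, ← hg, hScard] at hcb
      have hm : |(ArithmeticFunction.moebius d : ℝ)| ≤ 1 := by
        exact_mod_cast ArithmeticFunction.abs_moebius_le_one (n := d)
      have e1 : (ArithmeticFunction.moebius d : ℝ) * (g d : ℝ) - φ / P * 4 * W ^ 10 * cf P d =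
          (ArithmeticFunction.moebius d : ℝ) * ((g d : ℝ) -
            P * φ * (4 * (W ^ 4 / d ^ 4) * (W ^ 6 / d ^ 6) / P ^ 2)) := by
        rw [cf, if_pos hc]; field_simp
      rw [e1, abs_mul]
      have i1 : 1 / (d : ℝ) ^ 4 ≤ 1 / (d : ℝ) ^ 2 :=
        one_div_le_one_div_of_le (by positivity) (pow_le_pow_right₀ hdr (by norm_num))
      have i2 : 1 / (d : ℝ) ^ 6 ≤ 1 / (d : ℝ) ^ 2 :=
        one_div_le_one_div_of_le (by positivity) (pow_le_pow_right₀ hdr (by norm_num))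
      have i3 : W ^ 4 ≤ W ^ 6 := pow_le_pow_right₀ hW (by norm_num)
      calc _ ≤ 1 * (P * φ * (4 * (W ^ 4 / d ^ 4) / P + 4 * (W ^ 6 / d ^ 6) / P + 4)) := by gcongr
        _ = φ * (4 * (W ^ 4 * (1 / d ^ 4)) + 4 * (W ^ 6 * (1 / d ^ 6)) + 4 * P) := by
            field_simp
        _ ≤ φ * (4 * (W ^ 6 * (1 / d ^ 2)) + 4 * (W ^ 6 * (1 / d ^ 2)) + 4 * W ^ 4) := by gcongr
        _ = _ := by ring
    · have hg : g d = 0 := by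
        apply Finset.card_eq_zero.mpr
        apply Finset.filter_eq_empty_iff.mpr
        rintro ⟨a, b⟩ _ ⟨h1, h2, h3⟩
        exact gd_noncop p hp d hc a b h2 h3 h1
      rw [hg, cf, if_neg hc]
      simp only [Nat.cast_zero, mul_zero, sub_zero, abs_zero]
      positivity
  have h2 : Summable (fun d : ℕ => 1 / (d : ℝ) ^ 2) := Real.summable_one_div_nat_pow.mpr (by norm_num)
  have hsum : |(N : ℝ) - φ / P * 4 * W ^ 10 * ∑ d ∈ Finset.Icc 1 ⌊W⌋₊, cf P d| ≤
      φ * ((8 * Z + 4) * W ^ 6) := by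
    rw [hNg, Finset.mul_sum, ← Finset.sum_sub_distrib]
    refine (Finset.abs_sum_le_sum_abs _ _).trans ((Finset.sum_le_sum hterm).trans ?_)
    rw [← Finset.mul_sum, Finset.sum_add_distrib, ← Finset.mul_sum, Finset.sum_const, nsmul_eq_mul,
      Nat.card_Icc, Nat.add_sub_cancel]
    have j1 : ∑ d ∈ Finset.Icc 1 ⌊W⌋₊, 1 / (d : ℝ) ^ 2 ≤ Z :=
      h2.sum_le_tsum _ (fun d _ => by positivity)
    have j2 : (⌊W⌋₊ : ℝ) ≤ W := Nat.floor_le hW0.le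
    have j3 : W ^ 5 ≤ W ^ 6 := pow_le_pow_right₀ hW (by norm_num)
    apply mul_le_mul_of_nonneg_left _ hφ0
    calc _ ≤ 8 * W ^ 6 * Z + W * (4 * W ^ 4) := by gcongr
      _ = 8 * W ^ 6 * Z + 4 * W ^ 5 := by ring
      _ ≤ 8 * W ^ 6 * Z + 4 * W ^ 6 := by gcongr
      _ = _ := by ring
  have htail := cf_tail P ⌊W⌋₊ W hW0 (Nat.lt_floor_add_one W).le
  have htail2 : |φ / P * 4 * W ^ 10 * (∑' d, cf P d - ∑ d ∈ Finset.Icc 1 ⌊W⌋₊, cf P d)| ≤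
      φ * (4 * Z * W ^ 6) := by
    rw [abs_mul, abs_of_nonneg (by positivity)]
    have j3 : W ^ 2 ≤ W ^ 6 := pow_le_pow_right₀ hW (by norm_num)
    calc _ ≤ φ / P * 4 * W ^ 10 * (Z / W ^ 8) := by gcongr
      _ = φ / P * (4 * Z * W ^ 2) := by field_simp
      _ ≤ φ * (4 * Z * W ^ 6) := by
        gcongr
        exact div_le_self hφ0 hPr
  have e : (N : ℝ) - φ / P * 4 * W ^ 10 * ∑' d, cf P d =
    ((N : ℝ) - φ / P * 4 * W ^ 10 * ∑ d ∈ Finset.Icc 1 ⌊W⌋₊, cf P d) -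
      φ / P * 4 * W ^ 10 * (∑' d, cf P d - ∑ d ∈ Finset.Icc 1 ⌊W⌋₊, cf P d) := by ring
  rw [e]
  refine (abs_sub _ _).trans ?_
  linarith

theorem stmt_17 (k : ℕ) (hk : 1 ≤ k) (ε : ℝ) (hε : 0 < ε) (hε3 : ε < 1 / 3) :
    ∃ C : ℝ, 0 < C ∧ ∀ (p : Fin k → ℕ), (∀ i, (p i).Prime) → (∀ i, 5 ≤ p i) →
      Function.Injective p → ∀ (X : ℝ), 2 ≤ X → (∏ i, (p i : ℝ)) ≤ X ^ ((1 : ℝ) / 3 - ε) →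
      |({AB ∈ Efam X | ∀ i, ¬ (p i : ℤ) ∣ (4 * AB.1 ^ 3 + 27 * AB.2 ^ 2)}.ncard : ℝ)
          - (∏ i, ((p i : ℝ) - 1) / (p i : ℝ) * ((p i : ℝ) ^ 10 / ((p i : ℝ) ^ 10 - 1)))
            * (4 / (riemannZeta 10).re) * X ^ ((5 : ℝ) / 6)|
        ≤ C * (∏ i, ((p i : ℝ) - 1)) * X ^ ((1 : ℝ) / 2) := by
  classical
  have hZ0 : 0 ≤ ∑' d : ℕ, 1 / (d : ℝ) ^ 2 := tsum_nonneg fun d => by positivity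
  refine ⟨12 * (∑' d : ℕ, 1 / (d : ℝ) ^ 2) + 4, by linarith, ?_⟩
  intro p hp h5 hinj X hX hPX
  have hX0 : 0 ≤ X := by linarith
  set W : ℝ := X ^ ((1 : ℝ) / 12) with hWd
  have hW : 1 ≤ W := Real.one_le_rpow (by linarith) (by norm_num)
  have hpw : ∀ m : ℕ, W ^ m = X ^ ((m : ℝ) / 12) := by
    intro m
    rw [hWd, ← Real.rpow_natCast, ← Real.rpow_mul hX0]; congr 1; ring
  have h4 : W ^ 4 = X ^ ((1 : ℝ) / 3) := by rw [hpw]; norm_num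
  have h6 : W ^ 6 = X ^ ((1 : ℝ) / 2) := by rw [hpw]; norm_num
  have h10 : W ^ 10 = X ^ ((5 : ℝ) / 6) := by rw [hpw]; norm_num
  have h12 : W ^ 12 = X := by rw [hpw]; norm_num
  have hPW : ((∏ i, p i : ℕ) : ℝ) ≤ W ^ 4 := by
    rw [h4]; push_cast
    exact hPX.trans (Real.rpow_le_rpow_of_exponent_le (by linarith) (by linarith))
  have hcore := core hk p hp h5 hinj W hW hPW
  have hset : {AB ∈ Efam X | ∀ i, ¬ (p i : ℤ) ∣ (4 * AB.1 ^ 3 + 27 * AB.2 ^ 2)} =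
      (((bx (W ^ 4) ×ˢ bx (W ^ 6)).filter (fun ab => gd p ab ∧ CondM ab.1 ab.2) :
        Finset (ℤ × ℤ)) : Set (ℤ × ℤ)) := by
    ext ⟨a, b⟩
    have hh : (((max (|a| ^ 3) (b ^ 2) : ℤ) : ℝ) ≤ X) ↔ (|(a : ℝ)| ≤ W ^ 4 ∧ |(b : ℝ)| ≤ W ^ 6) := by
      push_cast
      rw [max_le_iff]
      have q1 : X = (W ^ 4) ^ 3 := by rw [← h12]; ring
      have q2 : X = (W ^ 6) ^ 2 := by rw [← h12]; ring
      refine and_congr ?_ ?_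
      · conv_lhs => rw [q1]
        exact pow_le_pow_iff_left₀ (abs_nonneg _) (by positivity) (by norm_num)
      · conv_lhs => rw [q2, ← sq_abs]
        exact pow_le_pow_iff_left₀ (abs_nonneg _) (by positivity) (by norm_num)
    simp only [Efam, Finset.mem_coe, Finset.mem_filter, Finset.mem_product, mem_bx, Set.mem_ofPred_eq]
    rw [hh]
    constructor
    · rintro ⟨⟨_, h2, h3⟩, h4⟩; exact ⟨h2, h4, h3⟩
    · rintro ⟨h2, h4, h3⟩
      refine ⟨⟨?_, h2, h3⟩, h4⟩
      intro h0
      apply h4 ⟨0, hk⟩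
      rw [h0]; exact dvd_zero _
  rw [hset, Set.ncard_coe_finset, ← h10, ← h6]
  have hPpos : 0 < ∏ i, p i := Finset.prod_pos fun i _ => (hp i).pos
  have hcf := cf_tsum (∏ i, p i) hPpos
  have hpf : (∏ i, p i).primeFactors = Finset.univ.image p := by
    have : ∏ i, p i = ∏ q ∈ Finset.univ.image p, q := by
      rw [Finset.prod_image (fun i _ j _ h => hinj h)]
    rw [this]
    apply Nat.primeFactors_prod
    intro q hq
    obtain ⟨i, _, rfl⟩ := Finset.mem_image.mp hq
    exact hp i
  rw [hpf, Finset.prod_image (fun i _ j _ h => hinj h)] at hcf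
  have hmain : (∏ i, ((p i : ℝ) - 1) / (p i : ℝ) * ((p i : ℝ) ^ 10 / ((p i : ℝ) ^ 10 - 1)))
            * (4 / (riemannZeta 10).re) * W ^ 10 =
      (∏ i, ((p i : ℝ) - 1)) / ((∏ i, p i : ℕ) : ℝ) * 4 * W ^ 10 * ∑' d, cf (∏ i, p i) d := by
    have e1 : ∑' d, cf (∏ i, p i) d = (∏ i, ((p i : ℝ) ^ 10 / ((p i : ℝ) ^ 10 - 1))) * (1 / (riemannZeta 10).re) := by
      have e2 : ∏ i, ((p i : ℝ) ^ 10 / ((p i : ℝ) ^ 10 - 1)) =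
          (∏ i, (1 - ((p i : ℝ) ^ 10)⁻¹))⁻¹ := by
        rw [← Finset.prod_inv_distrib]
        refine Finset.prod_congr rfl fun i _ => ?_
        have h1 : (1 : ℝ) < p i := by exact_mod_cast (hp i).one_lt
        have h2 : (1 : ℝ) < (p i : ℝ) ^ 10 := one_lt_pow₀ h1 (by norm_num)
        have h3 : (p i : ℝ) ^ 10 - 1 ≠ 0 := by linarith
        have h4 : (p i : ℝ) ^ 10 ≠ 0 := by linarith
        rw [← one_div ((p i : ℝ) ^ 10), one_sub_div h4, inv_div]
      rw [e2, eq_inv_of_mul_eq_one_left hcf, mul_inv, one_div]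
    rw [e1, Finset.prod_mul_distrib, Finset.prod_div_distrib]
    push_cast
    ring
  rw [hmain]
  exact hcore
end

section
/- Fix an integer k ≥ 1, a real ε with 0 < ε < 1/3, exponents e_1,…,e_k ∈ {1,2}, and positive integers r_1,…,r_k such that for each i either e_i = 1 and (r_i is odd or r_i = 2), or e_i = 2 and r_i = 1. Set c := 0 if e_j = 1 and r_j is odd for some j, and otherwise c := (−1)^{#{j : e_j = 2}}; set r := the smallest odd r_i if some r_i is odd, and r := 0 otherwise. Then there is a constant C = C(k, ε, (e_i), (r_i)) such that for all real X ≥ 2 and all distinct primes p_1, …, p_k ≥ 5 with p_1⋯p_k ≤ X^{1/3−ε}: if some r_j is odd, then | Σ_{(A,B)∈E(X)} ∏_{i=1}^{k} â_{A,B}(p_i^{e_i})^{r_i} | ≤ C·2^{r}·(p_1⋯p_k)·X^{1/2}; and otherwise | Σ_{(A,B)∈E(X)} ∏_{i=1}^{k} â_{A,B}(p_i^{e_i})^{r_i} − c·|E(X)| | ≤ C·( (p_1⋯p_k)·X^{1/2} + (Σ_{i=1}^{k} 1/p_i)·X^{5/6} ). -/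
/-- `N_p(A,B)`: the number of `F_p`-rational points of the projective plane cubic
`y²z = x³ + Axz² + Bz³`. -/
noncomputable def Np (p : ℕ) (hp : p.Prime) (A B : ℤ) : ℕ :=
  letI : Fact p.Prime := ⟨hp⟩
  {P : Projectivization (ZMod p) (Fin 3 → ZMod p) |
    (P.rep 1) ^ 2 * P.rep 2 =
      (P.rep 0) ^ 3 + (A : ZMod p) * P.rep 0 * (P.rep 2) ^ 2 +
        (B : ZMod p) * (P.rep 2) ^ 3}.ncard

/-- `a_p(A,B) = p + 1 − N_p(A,B)`. -/
noncomputable def apFrob (p : ℕ) (hp : p.Prime) (A B : ℤ) : ℤ :=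
  (p : ℤ) + 1 - (Np p hp A B : ℤ)

/-- `â(p) = a_p/√p`. -/
noncomputable def ahat (p : ℕ) (hp : p.Prime) (A B : ℤ) : ℝ :=
  (apFrob p hp A B : ℝ) / Real.sqrt p

/-- The normalized coefficient `â(p^e)` for `e ∈ {1, 2}`:
`â(p) = a_p/√p`; `â(p²) = â(p)² − 2` for good reduction and `â(p)²` otherwise. -/
noncomputable def ahatPow (p : ℕ) (hp : p.Prime) (A B : ℤ) (e : ℕ) : ℝ :=
  if e = 2 then
    (if (p : ℤ) ∣ (4 * A ^ 3 + 27 * B ^ 2) then (ahat p hp A B) ^ 2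
     else (ahat p hp A B) ^ 2 - 2)
  else ahat p hp A B


section

open Polynomial

/-- One step of the derivative recursion in the Stepanov method. -/
noncomputable def stepL {F : Type*} [Field F] (f : F[X]) (c : ℕ) : F[X] →ₗ[F] F[X] :=
  LinearMap.mulLeft F ((c : F[X]) * derivative f) + (LinearMap.mulLeft F f) ∘ₗ derivative

/-- Iterated derivative recursion. -/
noncomputable def iterL {F : Type*} [Field F] (f : F[X]) (c : ℕ) : ℕ → (F[X] →ₗ[F] F[X])
  | 0 => LinearMap.id
  | k + 1 => (stepL f (c - k)) ∘ₗ iterL f c k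

lemma iterL_deriv {F : Type*} [Field F] (f : F[X]) (c : ℕ) (r w : F[X])
    (hw : derivative w = 0) (k : ℕ) (hk : k ≤ c) :
    derivative^[k] (f ^ c * r * w) = f ^ (c - k) * iterL f c k r * w := by
  induction k with
  | zero => simp [iterL]
  | succ k ih =>
    rw [Function.iterate_succ_apply', ih (by omega)]
    obtain ⟨m, hm⟩ : ∃ m, c - k = m + 1 := ⟨c - k - 1, by omega⟩
    have hm' : c - (k + 1) = m := by omega
    simp only [iterL, stepL, hm, hm', derivative_mul, hw, derivative_pow, LinearMap.comp_apply,
      LinearMap.add_apply, LinearMap.mulLeft_apply]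
    simp only [Nat.add_sub_cancel, map_natCast]
    ring

lemma iterL_natDegree {F : Type*} [Field F] (f : F[X]) (hf : f.natDegree ≤ 3) (c : ℕ) (r : F[X])
    (e : ℕ) (hr : r.natDegree ≤ e) (k : ℕ) :
    (iterL f c k r).natDegree ≤ e + 3 * k := by
  induction k with
  | zero => simpa [iterL] using hr
  | succ k ih =>
    simp only [iterL, stepL, LinearMap.comp_apply, LinearMap.add_apply, LinearMap.mulLeft_apply]
    refine (natDegree_add_le _ _).trans (max_le ?_ ?_)
    · refine natDegree_mul_le.trans ?_
      have h1 : ((((c - k : ℕ) : F[X])) * derivative f).natDegree ≤ 2 := by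
        refine natDegree_mul_le.trans ?_
        have := natDegree_derivative_le f
        rw [natDegree_natCast]; omega
      omega
    · refine natDegree_mul_le.trans ?_
      have := natDegree_derivative_le (iterL f c k r)
      omega

lemma step_nonvanish_one {p : ℕ} [Fact p.Prime] (n : ℕ) (hpn : p = 2 * n + 1) (f : (ZMod p)[X])
    (hf : f.natDegree = 3) (hf0 : f.coeff 0 ≠ 0) (r s : (ZMod p)[X])
    (hr : 2 * r.natDegree + 3 < p) (hs : 2 * s.natDegree < p)
    (hd : (X : (ZMod p)[X]) ^ p ∣ r + s * f ^ n) : r = 0 ∧ s = 0 := by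
  have hp0 : 0 < p := (Fact.out : p.Prime).pos
  have h1 : (X : (ZMod p)[X]) ^ p ∣ r ^ 2 * f - s ^ 2 * f ^ p := by
    have : r ^ 2 * f - s ^ 2 * f ^ p = (r + s * f ^ n) * ((r - s * f ^ n) * f) := by
      have : f ^ p = (f ^ n) ^ 2 * f := by rw [← pow_mul, ← pow_succ]; congr 1; omega
      rw [this]; ring
    rw [this]; exact hd.mul_right _
  have h2 : (X : (ZMod p)[X]) ^ p ∣ f ^ p - C (f.coeff 0) := by
    have hx : (X : (ZMod p)[X]) ∣ f - C (f.coeff 0) := by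
      rw [X_dvd_iff]; simp
    have h3 : (f - C (f.coeff 0)) ^ p = f ^ p - C (f.coeff 0) := by
      rw [sub_pow_char, ← C_pow, ZMod.pow_card]
    rw [← h3]; exact pow_dvd_pow_of_dvd hx p
  have h3 : (X : (ZMod p)[X]) ^ p ∣ r ^ 2 * f - C (f.coeff 0) * s ^ 2 := by
    have : r ^ 2 * f - C (f.coeff 0) * s ^ 2
        = (r ^ 2 * f - s ^ 2 * f ^ p) + s ^ 2 * (f ^ p - C (f.coeff 0)) := by ring
    rw [this]; exact dvd_add h1 (h2.mul_left _)
  have h4 : r ^ 2 * f - C (f.coeff 0) * s ^ 2 = 0 := by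
    by_contra hne
    have := natDegree_le_of_dvd h3 hne
    rw [natDegree_X_pow] at this
    have hle : (r ^ 2 * f - C (f.coeff 0) * s ^ 2).natDegree < p := by
      refine lt_of_le_of_lt (natDegree_sub_le _ _) (max_lt ?_ ?_)
      · refine lt_of_le_of_lt natDegree_mul_le ?_
        rw [natDegree_pow]; omega
      · refine lt_of_le_of_lt natDegree_mul_le ?_
        rw [natDegree_pow, natDegree_C]; omega
    omega
  have hfne : f ≠ 0 := by rintro rfl; simp at hf
  have h5 : r ^ 2 * f = C (f.coeff 0) * s ^ 2 := sub_eq_zero.mp h4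
  have hr0 : r = 0 := by
    by_contra hr0
    have h6 := congrArg natDegree h5
    rw [natDegree_mul (pow_ne_zero _ hr0) hfne, natDegree_C_mul hf0, natDegree_pow,
      natDegree_pow] at h6
    omega
  refine ⟨hr0, ?_⟩
  rw [hr0] at h5
  have h7 : C (f.coeff 0) * s ^ 2 = 0 := by rw [← h5]; ring
  rcases mul_eq_zero.mp h7 with h | h
  · exact absurd (C_eq_zero.mp h) hf0
  · exact pow_eq_zero_iff (two_ne_zero) |>.mp h

lemma step_nonvanish {p : ℕ} [Fact p.Prime] (n : ℕ) (hpn : p = 2 * n + 1) (f : (ZMod p)[X])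
    (hf : f.natDegree = 3) (hf0 : f.coeff 0 ≠ 0) (J : ℕ) (r s : Fin J → (ZMod p)[X])
    (hr : ∀ j, 2 * (r j).natDegree + 3 < p) (hs : ∀ j, 2 * (s j).natDegree < p)
    (hd : ∑ j, (r j + s j * f ^ n) * X ^ ((j : ℕ) * p) = 0) : ∀ j, r j = 0 ∧ s j = 0 := by
  induction J with
  | zero => intro j; exact j.elim0
  | succ J ih =>
    rw [Fin.sum_univ_succ] at hd
    have h1 : ∑ j : Fin J, (r j.succ + s j.succ * f ^ n) * (X : (ZMod p)[X]) ^ ((j.succ : ℕ) * p)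
        = X ^ p * ∑ j : Fin J, (r j.succ + s j.succ * f ^ n) * X ^ ((j : ℕ) * p) := by
      rw [Finset.mul_sum]
      refine Finset.sum_congr rfl fun j _ => ?_
      rw [Fin.val_succ]; ring
    rw [h1] at hd
    simp only [Fin.val_zero, zero_mul, pow_zero, mul_one] at hd
    have h0 : r 0 = 0 ∧ s 0 = 0 := by
      refine step_nonvanish_one n hpn f hf hf0 _ _ (hr 0) (hs 0) ?_
      rw [eq_neg_of_add_eq_zero_left hd]
      exact (dvd_mul_right _ _).neg_right
    rw [h0.1, h0.2, zero_mul, add_zero, zero_add] at hd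
    have hX : (X : (ZMod p)[X]) ^ p ≠ 0 := pow_ne_zero _ X_ne_zero
    have h2 := ih (fun j => r j.succ) (fun j => s j.succ) (fun j => hr _) (fun j => hs _)
      ((mul_eq_zero.mp hd).resolve_left hX)
    intro j
    refine Fin.cases h0 h2 j

/-- the Stepanov construction, in counting form. -/
lemma stepanov_count {p : ℕ} [Fact p.Prime] (n : ℕ) (hpn : p = 2 * n + 1) (f : (ZMod p)[X])
    (hf : f.natDegree = 3) (hf0 : f.coeff 0 ≠ 0) (a : ZMod p) (w : ℕ) (hw : 1 ≤ w)
    (hwn : w ^ 2 + w + 1 < n) (S : Finset (ZMod p))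
    (hS : ∀ x ∈ S, f.eval x ≠ 0 ∧ (f.eval x) ^ n = a) :
    S.card * (2 * w) ≤ 6 * w + (w + 8) * p := by
  classical
  have hp : p.Prime := Fact.out
  obtain ⟨d, hd⟩ : ∃ d, n = d + 1 := ⟨n - 1, by omega⟩
  set J := w + 7 with hJ
  set ℓ := 2 * w with hℓ
  set D := d + 3 * ℓ + J with hD
  let V := degreeLT (ZMod p) d
  let σ : ℕ → ((Fin J → V) × (Fin J → V)) →ₗ[ZMod p] (ZMod p)[X] := fun k =>
    ∑ j : Fin J, ((LinearMap.mulLeft (ZMod p) ((X : (ZMod p)[X]) ^ (j : ℕ))) ∘ₗ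
      (iterL f ℓ k ∘ₗ V.subtype ∘ₗ LinearMap.proj j ∘ₗ LinearMap.fst _ _ _
        + a • (iterL f (ℓ + n) k ∘ₗ V.subtype ∘ₗ LinearMap.proj j ∘ₗ LinearMap.snd _ _ _)))
  have hσ : ∀ k u, σ k u = ∑ j : Fin J, X ^ (j : ℕ) *
      (iterL f ℓ k (u.1 j : (ZMod p)[X]) + a • iterL f (ℓ + n) k (u.2 j : (ZMod p)[X])) := by
    intro k u
    simp [σ, LinearMap.sum_apply]
  let Φ : ((Fin J → V) × (Fin J → V)) →ₗ[ZMod p] (Fin ℓ → Fin D → ZMod p) :=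
    LinearMap.pi fun k => LinearMap.pi fun c => (lcoeff (ZMod p) (c : ℕ)) ∘ₗ σ (k : ℕ)
  have hVf : Module.finrank (ZMod p) V = d := by
    rw [LinearEquiv.finrank_eq (degreeLTEquiv (ZMod p) d), Module.finrank_fin_fun]
  have : Module.Finite (ZMod p) V := Module.Finite.equiv (degreeLTEquiv (ZMod p) d).symm
  have hfr : Module.finrank (ZMod p) (Fin ℓ → Fin D → ZMod p)
      < Module.finrank (ZMod p) ((Fin J → V) × (Fin J → V)) := by
    simp only [Module.finrank_prod, Module.finrank_pi_fintype, Module.finrank_self, hVf, Finset.sum_const, Finset.card_univ, Fintype.card_fin,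
      smul_eq_mul]
    rw [hD, hℓ, hJ]
    subst hd
    nlinarith
  have hker := LinearMap.ker_ne_bot_of_finrank_lt (f := Φ) hfr
  obtain ⟨u, hu, hune⟩ := Submodule.exists_mem_ne_zero_of_ne_bot hker
  have hdeg1 : ∀ v : V, (v : (ZMod p)[X]).natDegree ≤ d - 1 := by
    intro v
    by_cases h0 : (v : (ZMod p)[X]) = 0
    · rw [h0]; simp
    have := mem_degreeLT.mp v.2
    have := (natDegree_lt_iff_degree_lt h0).mpr this
    omega
  have hd1 : 1 ≤ d := by nlinarith
  -- the sigma polynomials vanish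
  have hσ0 : ∀ k, k < ℓ → σ k u = 0 := by
    intro k hk
    ext c
    rw [coeff_zero]
    by_cases hc : c < D
    · have := congrFun (congrFun (LinearMap.mem_ker.mp hu) ⟨k, hk⟩) ⟨c, hc⟩
      simpa [Φ] using this
    · apply coeff_eq_zero_of_natDegree_lt
      refine lt_of_le_of_lt ?_ (lt_of_lt_of_le (show D - 1 < D by omega) (not_lt.mp hc))
      rw [hσ]
      refine natDegree_sum_le_of_forall_le _ _ fun j _ => ?_
      refine natDegree_mul_le.trans ?_
      rw [natDegree_X_pow]
      have h1 := iterL_natDegree f hf.le ℓ _ _ (hdeg1 (u.1 j)) k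
      have h2 := iterL_natDegree f hf.le (ℓ + n) _ _ (hdeg1 (u.2 j)) k
      have h3 := (natDegree_add_le (iterL f ℓ k (u.1 j : (ZMod p)[X]))
        (a • iterL f (ℓ + n) k (u.2 j : (ZMod p)[X])))
      have h4 := natDegree_smul_le a (iterL f (ℓ + n) k (u.2 j : (ZMod p)[X]))
      have := j.2
      have h5 := max_le h1 (h4.trans h2)
      omega
  set H : (ZMod p)[X] := ∑ j : Fin J, ((u.1 j : (ZMod p)[X]) + (u.2 j : (ZMod p)[X]) * f ^ n)
    * X ^ ((j : ℕ) * p) with hH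
  have hfne : f ≠ 0 := by rintro rfl; simp at hf
  have hHne : H ≠ 0 := by
    intro h0
    apply hune
    have := step_nonvanish n hpn f hf hf0 J (fun j => (u.1 j : (ZMod p)[X]))
      (fun j => (u.2 j : (ZMod p)[X])) (fun j => by have := hdeg1 (u.1 j); omega)
      (fun j => by have := hdeg1 (u.2 j); omega) h0
    ext j : 2
    · exact Subtype.ext (this j).1
    · exact Subtype.ext (this j).2
  set R := f ^ ℓ * H with hR
  have hRne : R ≠ 0 := mul_ne_zero (pow_ne_zero _ hfne) hHne
  have hRdeg : R.natDegree ≤ 6 * w + (w + 8) * p := by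
    refine natDegree_mul_le.trans ?_
    have h1 : H.natDegree ≤ d + 3 * n + (w + 6) * p := by
      refine natDegree_sum_le_of_forall_le _ _ fun j _ => ?_
      refine natDegree_mul_le.trans ?_
      rw [natDegree_X_pow]
      have h2 := hdeg1 (u.1 j)
      have h3 := hdeg1 (u.2 j)
      have h4 : ((u.1 j : (ZMod p)[X]) + (u.2 j : (ZMod p)[X]) * f ^ n).natDegree ≤ d + 3 * n := by
        refine (natDegree_add_le _ _).trans (max_le (by omega) ?_)
        refine natDegree_mul_le.trans ?_
        rw [natDegree_pow, hf]; omega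
      have h5 : (j : ℕ) * p ≤ (w + 6) * p := Nat.mul_le_mul_right _ (by have := j.2; omega)
      omega
    rw [natDegree_pow, hf]
    have : (w + 8) * p = (w + 6) * p + 2 * p := by ring
    omega
  have hder : ∀ k, k ≤ ℓ → derivative^[k] R = ∑ j : Fin J,
      (f ^ (ℓ - k) * iterL f ℓ k (u.1 j : (ZMod p)[X]) * X ^ ((j : ℕ) * p)
        + f ^ (ℓ + n - k) * iterL f (ℓ + n) k (u.2 j : (ZMod p)[X]) * X ^ ((j : ℕ) * p)) := by
    intro k hk
    have hX : ∀ j : ℕ, derivative ((X : (ZMod p)[X]) ^ (j * p)) = 0 := by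
      intro j
      rw [derivative_X_pow]; simp
    have : R = ∑ j : Fin J, (f ^ ℓ * (u.1 j : (ZMod p)[X]) * X ^ ((j : ℕ) * p)
        + f ^ (ℓ + n) * (u.2 j : (ZMod p)[X]) * X ^ ((j : ℕ) * p)) := by
      rw [hR, hH, Finset.mul_sum]
      refine Finset.sum_congr rfl fun j _ => by ring
    rw [this, iterate_derivative_sum]
    refine Finset.sum_congr rfl fun j _ => ?_
    rw [iterate_map_add, iterL_deriv f ℓ _ _ (hX j) k hk,
      iterL_deriv f (ℓ + n) _ _ (hX j) k (by omega)]
  have hroot : ∀ x ∈ S, ℓ ≤ R.rootMultiplicity x := by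
    intro x hx
    obtain ⟨hfx, hfa⟩ := hS x hx
    have : ℓ - 1 < R.rootMultiplicity x := by
      refine lt_rootMultiplicity_of_isRoot_iterate_derivative_of_mem_nonZeroDivisors' hRne ?_ ?_
      · intro m hm
        have hmℓ : m < ℓ := by omega
        rw [IsRoot, hder m hmℓ.le, eval_finsetSum]
        have h1 := congrArg (eval x) (hσ0 m hmℓ)
        rw [hσ, eval_finsetSum, eval_zero] at h1
        rw [← mul_zero (f.eval x ^ (ℓ - m)), ← h1, Finset.mul_sum]
        refine Finset.sum_congr rfl fun j _ => ?_
        have h2 : x ^ ((j : ℕ) * p) = x ^ (j : ℕ) := by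
          rw [mul_comm, pow_mul, ZMod.pow_card]
        have h3 : ℓ + n - m = (ℓ - m) + n := by omega
        simp only [eval_add, eval_mul, eval_pow, eval_X, eval_smul, h2, h3, pow_add, hfa,
          smul_eq_mul]
        ring
      · intro m hm hm0
        apply mem_nonZeroDivisors_of_ne_zero
        rw [Ne, ZMod.natCast_eq_zero_iff]
        intro hdvd
        have := Nat.le_of_dvd (by omega) hdvd
        have : w ≤ w ^ 2 := Nat.le_self_pow (by norm_num) w
        omega
    omega
  have hms : (S.val.bind fun x => Multiset.replicate ℓ x) ≤ R.roots := by
    rw [Multiset.le_iff_count]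
    intro x
    rw [Multiset.count_bind, count_roots]
    have : (S.val.map fun b => Multiset.count x (Multiset.replicate ℓ b)).sum
        = ∑ b ∈ S, if b = x then ℓ else 0 := by
      rw [Finset.sum]
      congr 1
      refine Multiset.map_congr rfl fun b _ => ?_
      rw [Multiset.count_replicate]
    rw [this, Finset.sum_ite_eq']
    split_ifs with h
    · exact hroot x h
    · exact Nat.zero_le _
  have h1 := Multiset.card_le_card hms
  rw [Multiset.card_bind] at h1
  have h2 : (S.val.map (Multiset.card ∘ fun x => Multiset.replicate ℓ x)).sum = S.card * ℓ := by
    have : (Multiset.card ∘ fun x : ZMod p => Multiset.replicate ℓ x) = fun _ => ℓ := by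
      funext x; simp
    rw [this]; simp
  rw [h2] at h1
  exact h1.trans ((card_roots' R).trans hRdeg)


/-- The character sum attached to the cubic `x³ + a x + b`. -/
noncomputable def cubicSum (p : ℕ) [Fact p.Prime] (a b : ZMod p) : ℤ :=
  ∑ x : ZMod p, quadraticChar (ZMod p) (x ^ 3 + a * x + b)

lemma stepanov_real {p : ℕ} [Fact p.Prime] (h5 : 5 ≤ p) (n : ℕ) (hpn : p = 2 * n + 1)
    (f : (ZMod p)[X])
    (hf : f.natDegree = 3) (hf0 : f.coeff 0 ≠ 0) (a : ZMod p) (S : Finset (ZMod p))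
    (hS : ∀ x ∈ S, f.eval x ≠ 0 ∧ (f.eval x) ^ n = a) :
    (S.card : ℝ) ≤ p / 2 + 27 * Real.sqrt p := by
  set t := Real.sqrt p with ht
  have ht2 : t ^ 2 = p := Real.sq_sqrt (Nat.cast_nonneg p)
  have h5' : (5 : ℝ) ≤ p := by exact_mod_cast h5
  have ht0 : 0 ≤ t := Real.sqrt_nonneg _
  have ht1 : 2 ≤ t := by nlinarith
  have hcard : (S.card : ℝ) ≤ p := by
    have := Finset.card_le_univ S
    rw [ZMod.card] at this
    exact_mod_cast this
  by_cases hn : n < 4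
  · have : (p : ℝ) ≤ 7 := by
      have : p ≤ 7 := by omega
      exact_mod_cast this
    linarith
  · set s := Nat.sqrt n with hs
    have hs1 : s * s ≤ n := Nat.sqrt_le n
    have hs2 : n < (s + 1) * (s + 1) := Nat.lt_succ_sqrt n
    have hs3 : 2 ≤ s := by
      by_contra h
      have : s ≤ 1 := by omega
      have : (s + 1) * (s + 1) ≤ 2 * 2 := Nat.mul_le_mul (by omega) (by omega)
      omega
    obtain ⟨w, hw⟩ : ∃ w, s = w + 1 := ⟨s - 1, by omega⟩
    have hc := stepanov_count n hpn f hf hf0 a w (by omega) (by rw [hw] at hs1; nlinarith) S hS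
    have hc' : (S.card : ℝ) * (2 * w) ≤ 6 * w + (w + 8) * p := by exact_mod_cast hc
    have hw1 : (1 : ℝ) ≤ w := by exact_mod_cast (show 1 ≤ w by omega)
    have htw : t ≤ 6 * w := by
      have h1 : (p : ℝ) ≤ (2 * (w + 2)) ^ 2 := by
        have : p ≤ (2 * (w + 2)) ^ 2 := by rw [hw] at hs2; nlinarith
        exact_mod_cast this
      have h2 : t ≤ 2 * (w + 2) := by
        rw [ht]; exact Real.sqrt_le_iff.mpr ⟨by positivity, h1⟩
      linarith
    have hp6 : (p : ℝ) ≤ 6 * w * t := by rw [← ht2]; nlinarith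
    have h1 : (S.card : ℝ) * (2 * w) ≤ (p / 2 + 27 * t) * (2 * w) := by nlinarith
    exact le_of_mul_le_mul_right h1 (by positivity)

lemma ringChar_zmod_ne_two {p : ℕ} [Fact p.Prime] (h5 : 5 ≤ p) : ringChar (ZMod p) ≠ 2 := by
  rw [ZMod.ringChar_zmod_n]; omega

/-- A weak form of the Hasse bound. -/
lemma cubicSum_bound {p : ℕ} [Fact p.Prime] (h5 : 5 ≤ p) (a b : ZMod p) :
    |(cubicSum p a b : ℝ)| ≤ 56 * Real.sqrt p := by
  classical
  have hp : p.Prime := Fact.out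
  have hchar := ringChar_zmod_ne_two (p := p) h5
  obtain ⟨n, hpn⟩ : ∃ n, p = 2 * n + 1 := by
    have := hp.eq_two_or_odd'
    rcases this with h | h
    · omega
    · exact h
  set q : (ZMod p)[X] := X ^ 3 + C a * X + C b with hq
  have hqd : q.natDegree = 3 := by rw [hq]; compute_degree!
  have hqne : q ≠ 0 := by intro h; rw [h] at hqd; simp at hqd
  have hqev : ∀ x, q.eval x = x ^ 3 + a * x + b := by intro x; simp [hq]
  have hroots : ∀ g : (ZMod p)[X], g.natDegree = 3 →
      (Finset.univ.filter fun x => g.eval x = 0).card ≤ 3 := by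
    intro g hg
    have hgne : g ≠ 0 := by intro h; rw [h] at hg; simp at hg
    have h1 : (Finset.univ.filter fun x => g.eval x = 0) ⊆ g.roots.toFinset := by
      intro x hx
      simp only [Finset.mem_filter, Finset.mem_univ, true_and] at hx
      rw [Multiset.mem_toFinset, mem_roots hgne]; exact hx
    have h2 := Finset.card_le_card h1
    have h3 := Multiset.toFinset_card_le g.roots
    have h4 := card_roots' g
    omega
  obtain ⟨c, hc⟩ : ∃ c, q.eval c ≠ 0 := by
    by_contra hcon
    push Not at hcon
    have h1 := hroots q hqd
    rw [Finset.filter_true_of_mem (fun x _ => hcon x), Finset.card_univ, ZMod.card] at h1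
    omega
  set f := q.comp (X + C c) with hfdef
  have hfd : f.natDegree = 3 := by rw [hfdef, natDegree_comp, hqd, natDegree_X_add_C]
  have hfev : ∀ x, f.eval x = q.eval (x + c) := by intro x; simp [hfdef]
  have hf0 : f.coeff 0 ≠ 0 := by
    rw [coeff_zero_eq_eval_zero, hfev, zero_add]; exact hc
  have hsum : cubicSum p a b = ∑ x : ZMod p, quadraticChar (ZMod p) (f.eval x) := by
    rw [cubicSum, ← Equiv.sum_comp (Equiv.addRight c)]
    refine Finset.sum_congr rfl fun x _ => ?_
    rw [hfev, hqev]; rfl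
  set S1 := Finset.univ.filter fun x => quadraticChar (ZMod p) (f.eval x) = 1 with hS1
  set S2 := Finset.univ.filter fun x => quadraticChar (ZMod p) (f.eval x) = -1 with hS2
  set S0 := Finset.univ.filter fun x => f.eval x = 0 with hS0
  have hdiv : Fintype.card (ZMod p) / 2 = n := by rw [ZMod.card]; omega
  have hN1 : (S1.card : ℝ) ≤ p / 2 + 27 * Real.sqrt p := by
    refine stepanov_real h5 n hpn f hfd hf0 1 S1 fun x hx => ?_
    simp only [hS1, Finset.mem_filter, Finset.mem_univ, true_and] at hx
    refine ⟨fun h => ?_, ?_⟩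
    · rw [h] at hx; simp at hx
    · rw [← hdiv, ← quadraticChar_eq_pow_of_char_ne_two' hchar, hx]; simp
  have hN2 : (S2.card : ℝ) ≤ p / 2 + 27 * Real.sqrt p := by
    refine stepanov_real h5 n hpn f hfd hf0 (-1) S2 fun x hx => ?_
    simp only [hS2, Finset.mem_filter, Finset.mem_univ, true_and] at hx
    refine ⟨fun h => ?_, ?_⟩
    · rw [h] at hx; simp at hx
    · rw [← hdiv, ← quadraticChar_eq_pow_of_char_ne_two' hchar, hx]; simp
  have hN0 : S0.card ≤ 3 := hroots f hfd
  have key : ∀ y : ZMod p, (quadraticChar (ZMod p) y = (if quadraticChar (ZMod p) y = 1 then 1 else 0)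
      - (if quadraticChar (ZMod p) y = -1 then 1 else 0)) ∧
      ((1 : ℤ) = (if quadraticChar (ZMod p) y = 1 then 1 else 0)
      + (if quadraticChar (ZMod p) y = -1 then 1 else 0) + (if y = 0 then 1 else 0)) := by
    intro y
    by_cases hy : y = 0
    · subst hy; simp
    · rcases quadraticChar_dichotomy hy with h | h <;> simp [h, hy]
  have hs1 : cubicSum p a b = S1.card - S2.card := by
    rw [hsum, Finset.sum_congr rfl (fun x _ => (key (f.eval x)).1), Finset.sum_sub_distrib,
      Finset.sum_boole, Finset.sum_boole]
  have hs2 : (p : ℤ) = S1.card + S2.card + S0.card := by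
    have : (p : ℤ) = ∑ x : ZMod p, (1 : ℤ) := by simp [ZMod.card]
    rw [this, Finset.sum_congr rfl (fun x _ => (key (f.eval x)).2), Finset.sum_add_distrib,
      Finset.sum_add_distrib, Finset.sum_boole, Finset.sum_boole, Finset.sum_boole]
  have hs1' : (cubicSum p a b : ℝ) = S1.card - S2.card := by exact_mod_cast hs1
  have hs2' : (p : ℝ) = S1.card + S2.card + S0.card := by exact_mod_cast hs2
  have hN0' : (S0.card : ℝ) ≤ 3 := by exact_mod_cast hN0
  have h5' : (5 : ℝ) ≤ p := by exact_mod_cast h5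
  have ht : 2 ≤ Real.sqrt p := by
    rw [Real.le_sqrt (by norm_num) (by positivity)]; linarith
  have hn0 : (0 : ℝ) ≤ S0.card := Nat.cast_nonneg _
  rw [hs1', abs_le]
  constructor <;> linarith

lemma cubicSum_twist {p : ℕ} [Fact p.Prime] (a b c : ZMod p) (hc : c ≠ 0) :
    cubicSum p (c ^ 2 * a) (c ^ 3 * b) = quadraticChar (ZMod p) c * cubicSum p a b := by
  rw [cubicSum, cubicSum, ← Equiv.sum_comp (Equiv.mulLeft₀ c hc), Finset.mul_sum]
  refine Finset.sum_congr rfl fun x _ => ?_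
  have h : (Equiv.mulLeft₀ c hc) x = c * x := rfl
  have h2 : (c * x) ^ 3 + c ^ 2 * a * (c * x) + c ^ 3 * b = c ^ 2 * (c * (x ^ 3 + a * x + b)) := by
    ring
  rw [h, h2, map_mul, map_mul, quadraticChar_sq_one' hc, one_mul]

lemma cubicSum_scale {p : ℕ} [Fact p.Prime] (a b d : ZMod p) (hd : d ≠ 0) :
    cubicSum p (d ^ 4 * a) (d ^ 6 * b) = cubicSum p a b := by
  have := cubicSum_twist a b (d ^ 2) (pow_ne_zero _ hd)
  rw [quadraticChar_sq_one' hd, one_mul, ← pow_mul, ← pow_mul] at this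
  exact this

lemma cubicSum_zero {p : ℕ} [Fact p.Prime] (h5 : 5 ≤ p) : cubicSum p 0 0 = 0 := by
  rw [← quadraticChar_sum_zero (ringChar_zmod_ne_two (p := p) h5), cubicSum]
  refine Finset.sum_congr rfl fun x _ => ?_
  by_cases hx : x = 0
  · subst hx; simp
  · have : x ^ 3 + 0 * x + 0 = x ^ 2 * x := by ring
    rw [this, map_mul, quadraticChar_sq_one' hx, one_mul]

/-- Invertible scaling of pairs. -/
def scaleEquiv {F : Type*} [Field F] (u v : F) (hu : u ≠ 0) (hv : v ≠ 0) : F × F ≃ F × F :=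
  (Equiv.mulLeft₀ u hu).prodCongr (Equiv.mulLeft₀ v hv)

lemma cubicSum_odd_moment {p : ℕ} [Fact p.Prime] (h5 : 5 ≤ p) (r : ℕ) (hr : Odd r) :
    ∑ ab : ZMod p × ZMod p, (cubicSum p ab.1 ab.2) ^ r = 0 := by
  obtain ⟨c, hc⟩ := quadraticChar_exists_neg_one (ringChar_zmod_ne_two (p := p) h5)
  have hc0 : c ≠ 0 := by rintro rfl; simp at hc
  have h1 : ∑ ab : ZMod p × ZMod p, (cubicSum p ab.1 ab.2) ^ r
      = ∑ ab : ZMod p × ZMod p, -((cubicSum p ab.1 ab.2) ^ r) := by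
    rw [← Equiv.sum_comp (scaleEquiv (c ^ 2) (c ^ 3) (pow_ne_zero _ hc0) (pow_ne_zero _ hc0))]
    refine Finset.sum_congr rfl fun ab _ => ?_
    have h : scaleEquiv (c ^ 2) (c ^ 3) (pow_ne_zero _ hc0) (pow_ne_zero _ hc0) ab
      = (c ^ 2 * ab.1, c ^ 3 * ab.2) := rfl
    rw [h, cubicSum_twist _ _ _ hc0, hc, neg_one_mul, hr.neg_pow]
  rw [Finset.sum_neg_distrib] at h1
  omega

lemma cubicSum_second_moment {p : ℕ} [Fact p.Prime] (h5 : 5 ≤ p) :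
    ∑ ab : ZMod p × ZMod p, (cubicSum p ab.1 ab.2) ^ 2 = (p : ℤ) ^ 2 * (p - 1) := by
  classical
  have hchar := ringChar_zmod_ne_two (p := p) h5
  have hinner : ∀ x y : ZMod p, ∑ ab : ZMod p × ZMod p,
      quadraticChar (ZMod p) (x ^ 3 + ab.1 * x + ab.2) *
        quadraticChar (ZMod p) (y ^ 3 + ab.1 * y + ab.2)
      = if x = y then (p : ℤ) * (p - 1) else 0 := by
    intro x y
    split_ifs with hxy
    · subst hxy
      rw [Fintype.sum_prod_type]
      have : ∀ a : ZMod p, ∑ b : ZMod p, quadraticChar (ZMod p) (x ^ 3 + a * x + b) *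
        quadraticChar (ZMod p) (x ^ 3 + a * x + b) = (p : ℤ) - 1 := by
        intro a
        refine (Equiv.sum_comp (Equiv.addLeft (x ^ 3 + a * x))
          (fun z => quadraticChar (ZMod p) z * quadraticChar (ZMod p) z)).trans ?_
        have : ∀ z : ZMod p, quadraticChar (ZMod p) z * quadraticChar (ZMod p) z
            = 1 - if z = 0 then 1 else 0 := by
          intro z
          by_cases hz : z = 0
          · subst hz; simp
          · rw [← pow_two, quadraticChar_sq_one hz]; simp [hz]
        rw [Finset.sum_congr rfl (fun z _ => this z)]
        simp [ZMod.card]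
      rw [Finset.sum_congr rfl (fun a _ => this a)]
      simp [ZMod.card]
      ring
    · have hxy' : x - y ≠ 0 := sub_ne_zero.mpr hxy
      let φ : ZMod p × ZMod p ≃ ZMod p × ZMod p :=
        { toFun := fun ab => (x ^ 3 + ab.1 * x + ab.2, y ^ 3 + ab.1 * y + ab.2)
          invFun := fun uv => ((uv.1 - x ^ 3 - (uv.2 - y ^ 3)) / (x - y),
            uv.1 - x ^ 3 - (uv.1 - x ^ 3 - (uv.2 - y ^ 3)) / (x - y) * x)
          left_inv := by
            rintro ⟨a, b⟩
            ext <;> (simp only; field_simp; ring)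
          right_inv := by
            rintro ⟨a, b⟩
            ext <;> (simp only; field_simp; ring) }
      refine (Equiv.sum_comp φ (fun uv =>
        quadraticChar (ZMod p) uv.1 * quadraticChar (ZMod p) uv.2)).trans ?_
      rw [Fintype.sum_prod_type]
      simp only [← Finset.mul_sum, quadraticChar_sum_zero hchar, mul_zero, Finset.sum_const_zero]
  simp only [cubicSum, pow_two, Finset.sum_mul_sum]
  rw [Finset.sum_comm]
  rw [Finset.sum_congr rfl (fun x _ => Finset.sum_comm)]
  simp only [hinner, Finset.sum_ite_eq, Finset.mem_univ, if_true]
  simp [ZMod.card]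
  ring

end


lemma curve_ncard {p : ℕ} [Fact p.Prime] (h5 : 5 ≤ p) (a b : ZMod p) :
    ({xy : ZMod p × ZMod p | xy.2 ^ 2 = xy.1 ^ 3 + a * xy.1 + b}.ncard : ℤ)
      = p + cubicSum p a b := by
  classical
  have hchar := ringChar_zmod_ne_two (p := p) h5
  have h1 : {xy : ZMod p × ZMod p | xy.2 ^ 2 = xy.1 ^ 3 + a * xy.1 + b}
      = ((Finset.univ.sigma fun x : ZMod p =>
          ({y : ZMod p | y ^ 2 = x ^ 3 + a * x + b} : Set (ZMod p)).toFinset).map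
            (Equiv.sigmaEquivProd (ZMod p) (ZMod p)).toEmbedding : Finset (ZMod p × ZMod p)) := by
    ext ⟨x, y⟩
    simp
  rw [h1, Set.ncard_coe_finset, Finset.card_map, Finset.card_sigma, Nat.cast_sum]
  rw [Finset.sum_congr rfl (fun x _ => quadraticChar_card_sqrts hchar (x ^ 3 + a * x + b)),
    Finset.sum_add_distrib, cubicSum]
  simp [ZMod.card]
  ring

lemma proj_ncard {p : ℕ} [Fact p.Prime] (a b : ZMod p) :
    {P : Projectivization (ZMod p) (Fin 3 → ZMod p) |
    (P.rep 1) ^ 2 * P.rep 2 =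
      (P.rep 0) ^ 3 + a * P.rep 0 * (P.rep 2) ^ 2 + b * (P.rep 2) ^ 3}.ncard
      = {xy : ZMod p × ZMod p | xy.2 ^ 2 = xy.1 ^ 3 + a * xy.1 + b}.ncard + 1 := by
  classical
  have hinf : (![0, 1, 0] : Fin 3 → ZMod p) ≠ 0 := by
    intro h; have := congrFun h 1; simp at this
  have haff : ∀ xy : ZMod p × ZMod p, (![xy.1, xy.2, 1] : Fin 3 → ZMod p) ≠ 0 := by
    intro xy h; have := congrFun h 2; simp at this
  let ψ : ZMod p × ZMod p → Projectivization (ZMod p) (Fin 3 → ZMod p) :=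
    fun xy => Projectivization.mk _ _ (haff xy)
  let O : Projectivization (ZMod p) (Fin 3 → ZMod p) := Projectivization.mk _ _ hinf
  have hψ : Function.Injective ψ := by
    intro u v huv
    obtain ⟨c, hc⟩ := (Projectivization.mk_eq_mk_iff' _ _ _ _ _).mp huv
    have h2 := congrFun hc 2
    have h0 := congrFun hc 0
    have h1 := congrFun hc 1
    simp at h0 h1 h2
    subst h2
    ext <;> simp_all
  have hset : {P : Projectivization (ZMod p) (Fin 3 → ZMod p) |
    (P.rep 1) ^ 2 * P.rep 2 =
      (P.rep 0) ^ 3 + a * P.rep 0 * (P.rep 2) ^ 2 + b * (P.rep 2) ^ 3}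
      = insert O (ψ '' {xy : ZMod p × ZMod p | xy.2 ^ 2 = xy.1 ^ 3 + a * xy.1 + b}) := by
    ext P
    simp only [Set.mem_ofPred_eq, Set.mem_insert_iff, Set.mem_image]
    constructor
    · intro hP
      by_cases hz : P.rep 2 = 0
      · left
        rw [hz] at hP
        have hx : P.rep 0 = 0 := by
          have : (P.rep 0) ^ 3 = 0 := by linear_combination -hP
          exact pow_eq_zero_iff (by norm_num) |>.mp this
        rw [← P.mk_rep]
        refine (Projectivization.mk_eq_mk_iff' _ _ _ _ _).mpr ⟨P.rep 1, ?_⟩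
        ext i; fin_cases i <;> simp [hx, hz]
      · right
        refine ⟨(P.rep 0 / P.rep 2, P.rep 1 / P.rep 2), ?_, ?_⟩
        · simp only
          field_simp
          linear_combination hP
        · conv_rhs => rw [← P.mk_rep]
          refine (Projectivization.mk_eq_mk_iff' _ _ _ _ _).mpr ⟨(P.rep 2)⁻¹, ?_⟩
          ext i; fin_cases i <;> simp [hz, div_eq_inv_mul]
    · rintro (rfl | ⟨⟨x, y⟩, hxy, rfl⟩)
      · obtain ⟨c, hc⟩ := Projectivization.exists_smul_eq_mk_rep (ZMod p) _ hinf
        have h0 := congrFun hc 0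
        have h2 := congrFun hc 2
        simp at h0 h2
        simp only [O]
        rw [← h0, ← h2]; simp
      · obtain ⟨c, hc⟩ := Projectivization.exists_smul_eq_mk_rep (ZMod p) _ (haff (x, y))
        have h0 : (c : ZMod p) * x = _ := congrFun hc 0
        have h1 : (c : ZMod p) * y = _ := congrFun hc 1
        have h2 : (c : ZMod p) * 1 = _ := congrFun hc 2
        simp only [ψ]
        rw [← h0, ← h1, ← h2]
        simp only at hxy
        linear_combination (c : ZMod p) ^ 3 * hxy
  rw [hset, Set.ncard_insert_of_notMem, Set.ncard_image_of_injective _ hψ]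
  rintro ⟨xy, -, h⟩
  obtain ⟨c, hc⟩ := (Projectivization.mk_eq_mk_iff' _ _ _ _ _).mp h
  have h2 := congrFun hc 2
  simp at h2

lemma apFrob_eq (p : ℕ) (hp : p.Prime) (h5 : 5 ≤ p) (A B : ℤ) :
    apFrob p hp A B = - (haveI : Fact p.Prime := ⟨hp⟩; cubicSum p (A : ZMod p) (B : ZMod p)) := by
  haveI : Fact p.Prime := ⟨hp⟩
  have h1 : Np p hp A B = _ := proj_ncard (p := p) (A : ZMod p) (B : ZMod p)
  have h2 := curve_ncard (p := p) h5 (A : ZMod p) (B : ZMod p)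
  rw [apFrob, h1]
  push_cast
  rw [h2]; ring

/-- The local factor `â(p^e)^r` as a function on residues. -/
noncomputable def locF (p : ℕ) [Fact p.Prime] (e r : ℕ) (a b : ZMod p) : ℝ :=
  (if e = 2 then
    (if 4 * a ^ 3 + 27 * b ^ 2 = 0 then ((cubicSum p a b : ℝ) / Real.sqrt p) ^ 2
     else ((cubicSum p a b : ℝ) / Real.sqrt p) ^ 2 - 2)
  else -((cubicSum p a b : ℝ) / Real.sqrt p)) ^ r

lemma ahatPow_eq (p : ℕ) [hF : Fact p.Prime] (hp : p.Prime) (h5 : 5 ≤ p) (A B : ℤ) (e r : ℕ) :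
    (ahatPow p hp A B e) ^ r = locF p e r (A : ZMod p) (B : ZMod p) := by
  have h1 : ((p : ℤ) ∣ (4 * A ^ 3 + 27 * B ^ 2)) ↔
      (4 * (A : ZMod p) ^ 3 + 27 * (B : ZMod p) ^ 2 = 0) := by
    rw [← ZMod.intCast_zmod_eq_zero_iff_dvd]
    push_cast
    rfl
  have h2 : ahat p hp A B = -((cubicSum p (A : ZMod p) (B : ZMod p) : ℝ) / Real.sqrt p) := by
    rw [ahat, apFrob_eq p hp h5]
    push_cast
    ring
  rw [ahatPow, locF, h2]
  simp only [h1, neg_sq]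

lemma locF_scale (p : ℕ) [Fact p.Prime] (e r : ℕ) (a b d : ZMod p) (hd : d ≠ 0) :
    locF p e r (d ^ 4 * a) (d ^ 6 * b) = locF p e r a b := by
  have h : (4 * (d ^ 4 * a) ^ 3 + 27 * (d ^ 6 * b) ^ 2 = 0) ↔ (4 * a ^ 3 + 27 * b ^ 2 = 0) := by
    have : 4 * (d ^ 4 * a) ^ 3 + 27 * (d ^ 6 * b) ^ 2 = d ^ 12 * (4 * a ^ 3 + 27 * b ^ 2) := by ring
    rw [this, mul_eq_zero]
    simp [hd]
  simp only [locF, cubicSum_scale a b d hd, h]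

lemma locF_zero (p : ℕ) [Fact p.Prime] (h5 : 5 ≤ p) (e r : ℕ) (hr : r ≠ 0) :
    locF p e r 0 0 = 0 := by
  simp [locF, cubicSum_zero h5, hr]

lemma locF_bound (p : ℕ) [Fact p.Prime] (h5 : 5 ≤ p) (e r : ℕ) (a b : ZMod p) :
    |locF p e r a b| ≤ 4000 ^ r := by
  rw [locF, abs_pow]
  refine pow_le_pow_left₀ (abs_nonneg _) ?_ r
  have hp0 : (0 : ℝ) < p := by exact_mod_cast (by omega : 0 < p)
  have h1 : |(cubicSum p a b : ℝ) / Real.sqrt p| ≤ 56 := by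
    rw [abs_div, abs_of_nonneg (Real.sqrt_nonneg _), div_le_iff₀ (Real.sqrt_pos.mpr hp0)]
    exact cubicSum_bound h5 a b
  have h2 : ((cubicSum p a b : ℝ) / Real.sqrt p) ^ 2 ≤ 56 ^ 2 := by
    rw [← sq_abs]; exact pow_le_pow_left₀ (abs_nonneg _) h1 2
  have h3 := sq_nonneg ((cubicSum p a b : ℝ) / Real.sqrt p)
  split_ifs
  · rw [abs_le]; constructor <;> linarith
  · rw [abs_le]; constructor <;> linarith
  · rw [abs_neg]; linarith

lemma locF_odd (p : ℕ) [Fact p.Prime] (h5 : 5 ≤ p) (r : ℕ) (hr : Odd r) :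
    ∑ ab : ZMod p × ZMod p, locF p 1 r ab.1 ab.2 = 0 := by
  have h : ∀ ab : ZMod p × ZMod p, locF p 1 r ab.1 ab.2
      = (((cubicSum p ab.1 ab.2) ^ r : ℤ) : ℝ) * (-(1 / Real.sqrt p ^ r)) := by
    intro ab
    rw [locF, if_neg (by norm_num), hr.neg_pow, div_pow]
    push_cast
    ring
  rw [Finset.sum_congr rfl (fun ab _ => h ab), ← Finset.sum_mul, ← Int.cast_sum,
    cubicSum_odd_moment h5 r hr]
  simp

lemma sing_count (p : ℕ) [Fact p.Prime] (h5 : 5 ≤ p) :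
    (Finset.univ.filter fun ab : ZMod p × ZMod p => 4 * ab.1 ^ 3 + 27 * ab.2 ^ 2 = 0).card
      ≤ 2 * p := by
  classical
  have hp : p.Prime := Fact.out
  have h27 : (27 : ZMod p) ≠ 0 := by
    have : ((27 : ℕ) : ZMod p) ≠ 0 := by
      rw [Ne, ZMod.natCast_eq_zero_iff]
      intro h
      have : p ∣ 3 ^ 3 := by simpa using h
      have := (Nat.prime_dvd_prime_iff_eq hp Nat.prime_three).mp (hp.dvd_of_dvd_pow this)
      omega
    simpa using this
  have hsub : (Finset.univ.filter fun ab : ZMod p × ZMod p => 4 * ab.1 ^ 3 + 27 * ab.2 ^ 2 = 0)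
      ⊆ (Finset.univ.sigma fun x : ZMod p =>
          ({y : ZMod p | y ^ 2 = -(4 * x ^ 3) / 27} : Set (ZMod p)).toFinset).map
            (Equiv.sigmaEquivProd (ZMod p) (ZMod p)).toEmbedding := by
    rintro ⟨x, y⟩ h
    simp at h ⊢
    field_simp
    linear_combination h
  refine (Finset.card_le_card hsub).trans ?_
  rw [Finset.card_map, Finset.card_sigma]
  have : ∀ x ∈ (Finset.univ : Finset (ZMod p)),
      (({y : ZMod p | y ^ 2 = -(4 * x ^ 3) / 27} : Set (ZMod p)).toFinset).card ≤ 2 := by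
    intro x _
    have h := quadraticChar_card_sqrts (ringChar_zmod_ne_two (p := p) h5) (-(4 * x ^ 3) / 27)
    have h' : quadraticChar (ZMod p) (-(4 * x ^ 3) / 27) ≤ 1 := by
      by_cases h0 : (-(4 * x ^ 3) / 27 : ZMod p) = 0
      · rw [h0]; simp
      · rcases quadraticChar_dichotomy h0 with h | h <;> rw [h]; norm_num
    omega
  have := Finset.sum_le_card_nsmul _ _ _ this
  simpa [ZMod.card, mul_comm] using this

/-- The local means are `±1 + O(1/p)`. -/
lemma locF_even (p : ℕ) [Fact p.Prime] (h5 : 5 ≤ p) (e r : ℕ)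
    (h : (e = 1 ∧ r = 2) ∨ (e = 2 ∧ r = 1)) :
    |(∑ ab : ZMod p × ZMod p, locF p e r ab.1 ab.2) / ((p : ℝ) ^ 2 - 1)
      - (if e = 2 then (-1 : ℝ) else 1)| ≤ 10 / (p : ℝ) := by
  classical
  have h5' : (5 : ℝ) ≤ p := by exact_mod_cast h5
  have hm : ∑ ab : ZMod p × ZMod p, ((cubicSum p ab.1 ab.2 : ℝ) / Real.sqrt p) ^ 2
      = p * (p - 1) := by
    have h2 := congrArg (Int.cast : ℤ → ℝ) (cubicSum_second_moment (p := p) h5)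
    push_cast at h2
    simp only [div_pow, Real.sq_sqrt (Nat.cast_nonneg (α := ℝ) p)]
    rw [← Finset.sum_div, h2]
    field_simp
  have hpos : (0 : ℝ) < (p : ℝ) ^ 2 - 1 := by nlinarith
  rcases h with ⟨he, hr⟩ | ⟨he, hr⟩
  · subst he hr
    have : ∑ ab : ZMod p × ZMod p, locF p 1 2 ab.1 ab.2 = p * (p - 1) := by
      rw [← hm]
      refine Finset.sum_congr rfl fun ab _ => ?_
      simp [locF]
    rw [this, if_neg (by norm_num)]
    have h3 : (p : ℝ) * (p - 1) / (p ^ 2 - 1) - 1 = -(1 / (p + 1)) := by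
      have : (p : ℝ) + 1 ≠ 0 := by positivity
      field_simp
      ring
    rw [h3, abs_neg, abs_of_nonneg (by positivity)]
    rw [div_le_div_iff₀ (by positivity) (by positivity)]
    linarith
  · subst he hr
    set s := (Finset.univ.filter fun ab : ZMod p × ZMod p =>
      4 * ab.1 ^ 3 + 27 * ab.2 ^ 2 = 0).card with hs
    have hs2 : (s : ℝ) ≤ 2 * p := by exact_mod_cast sing_count p h5
    have hs0 : (0 : ℝ) ≤ s := Nat.cast_nonneg _
    have : ∑ ab : ZMod p × ZMod p, locF p 2 1 ab.1 ab.2 = p * (p - 1) - 2 * p ^ 2 + 2 * s := by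
      have h3 : ∀ ab : ZMod p × ZMod p, locF p 2 1 ab.1 ab.2
          = ((cubicSum p ab.1 ab.2 : ℝ) / Real.sqrt p) ^ 2 - 2
            + 2 * (if 4 * ab.1 ^ 3 + 27 * ab.2 ^ 2 = 0 then 1 else 0) := by
        intro ab
        simp only [locF, if_true, pow_one]
        split_ifs <;> ring
      rw [Finset.sum_congr rfl (fun ab _ => h3 ab), Finset.sum_add_distrib,
        Finset.sum_sub_distrib, hm, ← Finset.mul_sum, Finset.sum_boole]
      simp [ZMod.card, hs]
      ring
    rw [this, if_pos rfl]
    have h4 : ((p : ℝ) * (p - 1) - 2 * p ^ 2 + 2 * s) / (p ^ 2 - 1) - -1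
        = (2 * s - p - 1) / (p ^ 2 - 1) := by
      field_simp
      ring
    rw [h4, abs_div, abs_of_pos hpos, div_le_div_iff₀ hpos (by positivity)]
    have h6 : |2 * (s : ℝ) - p - 1| ≤ 4 * p := by
      rw [abs_le]; constructor <;> linarith
    nlinarith

/-! ### The sieve over the box -/

/-- The box `|A|³ ≤ X`, `B² ≤ X`. -/
noncomputable def hbox (X : ℝ) : Finset (ℤ × ℤ) :=
  Finset.Icc (-(⌊X ^ ((1 : ℝ) / 3)⌋₊ : ℤ)) ⌊X ^ ((1 : ℝ) / 3)⌋₊ ×ˢ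
    Finset.Icc (-(⌊X ^ ((1 : ℝ) / 2)⌋₊ : ℤ)) ⌊X ^ ((1 : ℝ) / 2)⌋₊

lemma mem_Icc_root (X : ℝ) (hX : 0 ≤ X) (m : ℕ) (hm : m ≠ 0) (A : ℤ) :
    A ∈ Finset.Icc (-(⌊X ^ ((1 : ℝ) / m)⌋₊ : ℤ)) ⌊X ^ ((1 : ℝ) / m)⌋₊ ↔ |(A : ℝ)| ^ m ≤ X := by
  have hy : 0 ≤ X ^ ((1 : ℝ) / m) := Real.rpow_nonneg hX _
  have hym : (X ^ ((1 : ℝ) / m)) ^ m = X := by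
    rw [one_div]; exact Real.rpow_inv_natCast_pow hX hm
  rw [Finset.mem_Icc, ← abs_le, Int.abs_eq_natAbs, Nat.cast_le, Nat.le_floor_iff hy,
    Nat.cast_natAbs, Int.cast_abs]
  conv_rhs => rw [← hym]
  exact (pow_le_pow_iff_left₀ (abs_nonneg _) hy hm).symm

lemma mem_hbox (X : ℝ) (hX : 0 ≤ X) (ab : ℤ × ℤ) :
    ab ∈ hbox X ↔ |(ab.1 : ℝ)| ^ 3 ≤ X ∧ (ab.2 : ℝ) ^ 2 ≤ X := by
  have h3 := mem_Icc_root X hX 3 (by norm_num) ab.1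
  have h2 := mem_Icc_root X hX 2 (by norm_num) ab.2
  rw [sq_abs] at h2
  rw [hbox, Finset.mem_product]
  exact and_congr (by exact_mod_cast h3) (by exact_mod_cast h2)

lemma period_full (P : ℕ) [NeZero P] (h : ZMod P → ℝ) (c : ZMod P) :
    ∑ j ∈ Finset.range P, h ((j : ZMod P) + c) = ∑ x, h x := by
  rw [← Equiv.sum_comp (Equiv.addRight c)]
  refine Finset.sum_bij' (fun j _ => (j : ZMod P)) (fun x _ => x.val) ?_ ?_ ?_ ?_ ?_
  · intro j _; simp
  · intro x _; simpa using ZMod.val_lt x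
  · intro j hj; exact ZMod.val_cast_of_lt (Finset.mem_range.mp hj)
  · intro x _; simp
  · intro j _; rfl

lemma period_sum (P : ℕ) [NeZero P] (h : ZMod P → ℝ) (c : ZMod P) (q m : ℕ) :
    ∑ j ∈ Finset.range (P * q + m), h ((j : ZMod P) + c)
      = q * ∑ x, h x + ∑ j ∈ Finset.range m, h ((j : ZMod P) + c) := by
  induction q with
  | zero => simp
  | succ q ih =>
    have : P * (q + 1) + m = P + (P * q + m) := by ring
    rw [this, Finset.sum_range_add, period_full]
    have h2 : ∀ j : ℕ, (((P + j : ℕ)) : ZMod P) = j := by intro j; simp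
    simp only [h2]
    rw [ih]; push_cast; ring

lemma Icc_sum (P : ℕ) (h : ZMod P → ℝ) (N : ℕ) :
    ∑ n ∈ Finset.Icc (-(N : ℤ)) N, h (n : ZMod P)
      = ∑ j ∈ Finset.range (2 * N + 1), h ((j : ZMod P) + (-(N : ZMod P))) := by
  refine Finset.sum_bij' (fun n _ => (n + N).toNat) (fun j _ => (j : ℤ) - N) ?_ ?_ ?_ ?_ ?_
  · intro n hn; simp only [Finset.mem_Icc, Finset.mem_range] at *; omega
  · intro n hn; simp only [Finset.mem_Icc, Finset.mem_range] at *; omega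
  · intro n hn; simp only [Finset.mem_Icc] at *; omega
  · intro n hn; simp
  · intro n hn
    simp only [Finset.mem_Icc] at hn
    congr 1
    have h1 : (((n + N).toNat : ℤ) : ZMod P) = ((n + N : ℤ) : ZMod P) := by
      rw [Int.toNat_of_nonneg (by omega)]
    rw [Int.cast_natCast] at h1
    rw [h1]; push_cast; ring

lemma period_bound (P : ℕ) [NeZero P] (h : ZMod P → ℝ) (K : ℝ) (hK : ∀ x, |h x| ≤ K) (N : ℕ) :
    |∑ n ∈ Finset.Icc (-(N : ℤ)) N, h (n : ZMod P)
      - ((2 * N + 1) / P : ℕ) * ∑ x, h x| ≤ K * P := by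
  have hP : 0 < P := NeZero.pos P
  rw [Icc_sum]
  have h1 := period_sum P h (-(N : ZMod P)) ((2 * N + 1) / P) ((2 * N + 1) % P)
  rw [Nat.div_add_mod] at h1
  rw [h1, add_sub_cancel_left]
  refine (Finset.abs_sum_le_sum_abs _ _).trans ?_
  refine (Finset.sum_le_card_nsmul _ _ K (fun j _ => hK _)).trans ?_
  rw [Finset.card_range, nsmul_eq_mul, mul_comm]
  have hK0 : 0 ≤ K := (abs_nonneg _).trans (hK 0)
  refine mul_le_mul_of_nonneg_left ?_ hK0
  exact_mod_cast (Nat.mod_lt _ hP).le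

lemma box_bound (P : ℕ) [NeZero P] (g : ZMod P → ZMod P → ℝ) (K : ℝ)
    (hK : ∀ a b, |g a b| ≤ K) (hsum : ∑ a, ∑ b, g a b = 0) (N M : ℕ) :
    |∑ A ∈ Finset.Icc (-(N : ℤ)) N, ∑ B ∈ Finset.Icc (-(M : ℤ)) M, g (A : ZMod P) (B : ZMod P)|
      ≤ K * P * ((2 * N + 1) + (2 * M + 1)) := by
  have hP : (0 : ℝ) < P := by exact_mod_cast NeZero.pos P
  have hK0 : 0 ≤ K := (abs_nonneg _).trans (hK 0 0)
  set q : ℕ := (2 * M + 1) / P with hq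
  have hqP : (q : ℝ) * P ≤ 2 * M + 1 := by
    have : q * P ≤ 2 * M + 1 := Nat.div_mul_le_self _ _
    exact_mod_cast this
  have h1 : |∑ A ∈ Finset.Icc (-(N : ℤ)) N, (∑ B ∈ Finset.Icc (-(M : ℤ)) M,
      g (A : ZMod P) (B : ZMod P) - q * ∑ b, g (A : ZMod P) b)| ≤ (2 * N + 1) * (K * P) := by
    refine (Finset.abs_sum_le_sum_abs _ _).trans ?_
    refine (Finset.sum_le_card_nsmul _ _ (K * P)
      (fun (A : ℤ) _ => period_bound P (g (A : ZMod P)) K (hK _) M)).trans (le_of_eq ?_)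
    rw [nsmul_eq_mul, Int.card_Icc]
    congr 1
    have : ((N : ℤ) + 1 - -(N : ℤ)).toNat = 2 * N + 1 := by omega
    rw [this]; push_cast; ring
  have h2 : |∑ A ∈ Finset.Icc (-(N : ℤ)) N, ∑ b, g (A : ZMod P) b| ≤ K * P * P := by
    have := period_bound P (fun a => ∑ b, g a b) (K * P) ?_ N
    · rw [hsum, mul_zero, sub_zero] at this
      exact this
    · intro a
      refine (Finset.abs_sum_le_sum_abs _ _).trans ?_
      refine (Finset.sum_le_card_nsmul _ _ K (fun b _ => hK a b)).trans (le_of_eq ?_)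
      rw [nsmul_eq_mul, Finset.card_univ, ZMod.card, mul_comm]
  rw [Finset.sum_sub_distrib, ← Finset.mul_sum] at h1
  set U := ∑ A ∈ Finset.Icc (-(N : ℤ)) N, ∑ B ∈ Finset.Icc (-(M : ℤ)) M,
    g (A : ZMod P) (B : ZMod P)
  set V := ∑ A ∈ Finset.Icc (-(N : ℤ)) N, ∑ b, g (A : ZMod P) b
  have h3 : |U| ≤ |U - q * V| + |q * V| := by
    have := abs_add_le (U - q * V) (q * V)
    rwa [sub_add_cancel] at this
  have h4 : |(q : ℝ) * V| ≤ K * P * (2 * M + 1) := by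
    rw [abs_mul, Nat.abs_cast]
    calc (q : ℝ) * |V| ≤ q * (K * P * P) := mul_le_mul_of_nonneg_left h2 (Nat.cast_nonneg _)
      _ = K * P * (q * P) := by ring
      _ ≤ K * P * (2 * M + 1) := mul_le_mul_of_nonneg_left hqP (by positivity)
  calc |U| ≤ (2 * N + 1) * (K * P) + K * P * (2 * M + 1) := by linarith
    _ = _ := by ring

lemma condM_dvd (A B A' B' : ℤ) (d e : ℕ) (hd : 1 ≤ d) (h : CondM A' B')
    (h4 : (d : ℤ) ^ 4 * A = (e : ℤ) ^ 4 * A') (h6 : (d : ℤ) ^ 6 * B = (e : ℤ) ^ 6 * B') :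
    d ∣ e := by
  obtain ⟨g, d1, e1, hg, hco, rfl, rfl⟩ := Nat.exists_coprime' (m := d) (n := e)
    (Nat.gcd_pos_of_pos_left _ hd)
  by_cases h1 : d1 = 1
  · subst h1; simp
  exfalso
  obtain ⟨q, hq, hqd⟩ := Nat.exists_prime_and_dvd h1
  have hg0 : (g : ℤ) ≠ 0 := by exact_mod_cast (by omega : g ≠ 0)
  have hqe : Nat.Coprime q e1 := Nat.Coprime.coprime_dvd_left hqd hco
  have hqe' : IsCoprime (q : ℤ) (e1 : ℤ) := Nat.isCoprime_iff_coprime.mpr hqe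
  have hqd' : (q : ℤ) ∣ d1 := by exact_mod_cast hqd
  have h4' : (d1 : ℤ) ^ 4 * A = (e1 : ℤ) ^ 4 * A' := by
    apply mul_left_cancel₀ (pow_ne_zero 4 hg0)
    push_cast at h4
    linear_combination h4
  have h6' : (d1 : ℤ) ^ 6 * B = (e1 : ℤ) ^ 6 * B' := by
    apply mul_left_cancel₀ (pow_ne_zero 6 hg0)
    push_cast at h6
    linear_combination h6
  refine h q hq ?_ ?_
  · have : (q : ℤ) ^ 4 ∣ (e1 : ℤ) ^ 4 * A' := by
      rw [← h4']; exact (pow_dvd_pow_of_dvd hqd' 4).mul_right _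
    exact (hqe'.pow (m := 4) (n := 4)).dvd_of_dvd_mul_left this
  · have : (q : ℤ) ^ 6 ∣ (e1 : ℤ) ^ 6 * B' := by
      rw [← h6']; exact (pow_dvd_pow_of_dvd hqd' 6).mul_right _
    exact (hqe'.pow (m := 6) (n := 6)).dvd_of_dvd_mul_left this

lemma natAbs_lt_of_mul (A : ℤ) (c : ℤ) (hc : 2 ≤ c) (hA : A ≠ 0) :
    A.natAbs < (c * A).natAbs := by
  rw [Int.natAbs_mul]
  have h1 : 0 < A.natAbs := Int.natAbs_pos.mpr hA
  have h2 : 2 ≤ c.natAbs := by omega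
  nlinarith

lemma condM_exists (n : ℕ) : ∀ A B : ℤ, A.natAbs + B.natAbs ≤ n → (A, B) ≠ (0, 0) →
    ∃ d : ℕ, 1 ≤ d ∧ ∃ A' B' : ℤ, CondM A' B' ∧ A = (d : ℤ) ^ 4 * A' ∧ B = (d : ℤ) ^ 6 * B' := by
  induction n with
  | zero =>
    intro A B h h0
    exact absurd (by ext <;> simp <;> omega) h0
  | succ n ih =>
    intro A B h h0
    by_cases hM : CondM A B
    · exact ⟨1, le_rfl, A, B, hM, by simp, by simp⟩
    · unfold CondM at hM
      push Not at hM
      obtain ⟨q, hq, ⟨A1, rfl⟩, ⟨B1, rfl⟩⟩ := hM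
      have hq2 : (2 : ℤ) ≤ q := by exact_mod_cast hq.two_le
      have hq4 : (2 : ℤ) ≤ (q : ℤ) ^ 4 := by nlinarith [pow_le_pow_left₀ (by norm_num) hq2 4]
      have hq6 : (2 : ℤ) ≤ (q : ℤ) ^ 6 := by nlinarith [pow_le_pow_left₀ (by norm_num) hq2 6]
      have hlt : A1.natAbs + B1.natAbs ≤ n := by
        by_cases hA : A1 = 0
        · have hB : B1 ≠ 0 := by rintro rfl; exact h0 (by simp [hA])
          have := natAbs_lt_of_mul B1 _ hq6 hB
          subst hA
          simp at h ⊢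
          omega
        · have h1 := natAbs_lt_of_mul A1 _ hq4 hA
          by_cases hB : B1 = 0
          · subst hB; simp at h ⊢; omega
          · have := natAbs_lt_of_mul B1 _ hq6 hB
            omega
      obtain ⟨d, hd, A', B', hM', hA', hB'⟩ := ih A1 B1 hlt (by
        intro hz
        rw [Prod.mk.injEq] at hz
        exact h0 (by simp [hz.1, hz.2]))
      refine ⟨q * d, Nat.one_le_iff_ne_zero.mpr (Nat.mul_ne_zero hq.ne_zero (by omega)),
        A', B', hM', ?_, ?_⟩
      · rw [hA']; push_cast; ring
      · rw [hB']; push_cast; ring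

lemma not_condM_zero : ¬ CondM 0 0 := fun h => h 2 Nat.prime_two (dvd_zero _) (dvd_zero _)

open Classical in
lemma box_decomp (G : ℤ → ℤ → ℝ) (h0 : G 0 0 = 0) (X : ℝ) (hX : 0 ≤ X) :
    ∑ ab ∈ hbox X, G ab.1 ab.2
      = ∑ d ∈ Finset.Icc 1 (⌊X⌋₊ + 1), ∑ ab ∈ (hbox (X / (d : ℝ) ^ 12)).filter
          (fun ab => CondM ab.1 ab.2), G ((d : ℤ) ^ 4 * ab.1) ((d : ℤ) ^ 6 * ab.2) := by
  have h1 : ∑ ab ∈ hbox X, G ab.1 ab.2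
      = ∑ ab ∈ (hbox X).filter (fun ab => ab ≠ (0, 0)), G ab.1 ab.2 := by
    symm
    apply Finset.sum_filter_of_ne
    intro ab _ hne hz
    rw [hz] at hne
    exact hne h0
  rw [h1, Finset.sum_sigma']
  symm
  have hscale : ∀ d : ℕ, 1 ≤ d → ∀ A B : ℤ, ((A, B) ∈ hbox (X / (d : ℝ) ^ 12) ↔
      ((d : ℤ) ^ 4 * A, (d : ℤ) ^ 6 * B) ∈ hbox X) := by
    intro d hd A B
    have hd0 : (0 : ℝ) < d := by exact_mod_cast hd
    rw [mem_hbox _ (by positivity), mem_hbox _ hX]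
    simp only
    push_cast
    rw [abs_mul, abs_of_pos (show (0 : ℝ) < (d : ℝ) ^ 4 by positivity),
      le_div_iff₀ (by positivity), le_div_iff₀ (by positivity)]
    have e1 : ((d : ℝ) ^ 4 * |(A : ℝ)|) ^ 3 = |(A : ℝ)| ^ 3 * (d : ℝ) ^ 12 := by ring
    have e2 : ((d : ℝ) ^ 6 * (B : ℝ)) ^ 2 = (B : ℝ) ^ 2 * (d : ℝ) ^ 12 := by ring
    rw [e1, e2]
  refine Finset.sum_bij (fun x _ => ((x.1 : ℤ) ^ 4 * x.2.1, (x.1 : ℤ) ^ 6 * x.2.2)) ?_ ?_ ?_ ?_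
  · rintro ⟨d, A, B⟩ h
    simp only [Finset.mem_sigma, Finset.mem_Icc, Finset.mem_filter] at h ⊢
    refine ⟨(hscale d h.1.1 A B).mp h.2.1, ?_⟩
    intro hz
    have hd0 : (d : ℤ) ≠ 0 := by have := h.1.1; omega
    simp only [Prod.mk.injEq] at hz
    have hA : A = 0 := (mul_eq_zero.mp hz.1).resolve_left (pow_ne_zero 4 hd0)
    have hB : B = 0 := (mul_eq_zero.mp hz.2).resolve_left (pow_ne_zero 6 hd0)
    rw [hA, hB] at h
    exact not_condM_zero h.2.2
  · rintro ⟨d, A, B⟩ h ⟨e, A', B'⟩ h' heq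
    simp only [Finset.mem_sigma, Finset.mem_Icc, Finset.mem_filter] at h h'
    simp only [Prod.mk.injEq] at heq
    have hde : d = e := Nat.dvd_antisymm (condM_dvd _ _ _ _ _ _ h.1.1 h'.2.2 heq.1 heq.2)
      (condM_dvd _ _ _ _ _ _ h'.1.1 h.2.2 heq.1.symm heq.2.symm)
    subst hde
    have hd0 : (d : ℤ) ≠ 0 := by have := h.1.1; omega
    have hA := mul_left_cancel₀ (pow_ne_zero 4 hd0) heq.1
    have hB := mul_left_cancel₀ (pow_ne_zero 6 hd0) heq.2
    rw [hA, hB]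
  · rintro ⟨A, B⟩ h
    simp only [Finset.mem_filter] at h
    obtain ⟨d, hd, A', B', hM, hA, hB⟩ := condM_exists _ A B le_rfl h.2
    have hb : (A', B') ∈ hbox (X / (d : ℝ) ^ 12) := by
      rw [hscale d hd, ← hA, ← hB]; exact h.1
    refine ⟨⟨d, A', B'⟩, ?_, ?_⟩
    · simp only [Finset.mem_sigma, Finset.mem_Icc, Finset.mem_filter]
      refine ⟨⟨hd, ?_⟩, hb, hM⟩
      have hd1 : (1 : ℝ) ≤ d := by exact_mod_cast hd
      have hdX : (d : ℝ) ≤ X := by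
        have hle : (d : ℝ) ≤ (d : ℝ) ^ 12 := le_self_pow₀ hd1 (by norm_num)
        rw [mem_hbox _ (by positivity), le_div_iff₀ (by positivity),
          le_div_iff₀ (by positivity)] at hb
        simp only at hb
        by_cases hA0 : A' = 0
        · have hB0 : B' ≠ 0 := by
            rintro rfl; rw [hA0] at hM; exact not_condM_zero hM
          have : (1 : ℝ) ≤ (B' : ℝ) ^ 2 := by
            have : 1 ≤ B' ^ 2 := Int.one_le_abs hB0 |> fun h => by nlinarith [sq_abs B']
            exact_mod_cast this
          nlinarith [hb.2]
        · have : (1 : ℝ) ≤ |(A' : ℝ)| ^ 3 := by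
            apply one_le_pow₀
            exact_mod_cast Int.one_le_abs hA0
          nlinarith [hb.1]
      exact (Nat.le_floor hdX).trans (Nat.le_succ _)
    · simp only [Prod.mk.injEq]; exact ⟨hA.symm, hB.symm⟩
  · rintro ⟨d, A, B⟩ h; rfl

lemma tail_sum (D : ℕ) (hD : 1 ≤ D) :
    ∑ d ∈ Finset.Icc 2 D, 1 / (d : ℝ) ^ 6 ≤ (1 / 2) * (1 - 1 / (D : ℝ)) := by
  induction D, hD using Nat.le_induction with
  | base => simp
  | succ n hn ih =>
    rw [Finset.sum_Icc_succ_top (by omega)]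
    have hn1 : (1 : ℝ) ≤ n := by exact_mod_cast hn
    push_cast
    have h1 : 1 / ((n : ℝ) + 1) ^ 6 ≤ (1 / 2) * (1 / n - 1 / ((n : ℝ) + 1)) := by
      have h2 : (1 / 2) * (1 / (n : ℝ) - 1 / ((n : ℝ) + 1)) = 1 / (2 * (n * (n + 1))) := by
        field_simp
        ring
      rw [h2]
      apply one_div_le_one_div_of_le (by positivity)
      have h3 : (1 : ℝ) ≤ (n + 1) ^ 3 := one_le_pow₀ (by linarith)
      have h4 : 2 * ((n : ℝ) * (n + 1)) ≤ (n + 1) ^ 3 := by nlinarith [sq_nonneg ((n : ℝ) - 1)]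
      calc 2 * ((n : ℝ) * (n + 1)) ≤ (n + 1) ^ 3 := h4
        _ ≤ (n + 1) ^ 3 * (n + 1) ^ 3 := le_mul_of_one_le_right (by positivity) h3
        _ = (n + 1) ^ 6 := by ring
    linarith

lemma hbox_small (X : ℝ) (hX : 0 ≤ X) (h1 : X < 1) : hbox X = {(0, 0)} := by
  have a : ⌊X ^ ((1 : ℝ) / 3)⌋₊ = 0 :=
    Nat.floor_eq_zero.mpr (Real.rpow_lt_one hX h1 (by norm_num))
  have b : ⌊X ^ ((1 : ℝ) / 2)⌋₊ = 0 :=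
    Nat.floor_eq_zero.mpr (Real.rpow_lt_one hX h1 (by norm_num))
  rw [hbox, a, b]
  simp

lemma box_sqrt_bound (P : ℕ) [NeZero P] (g : ZMod P → ZMod P → ℝ) (K : ℝ)
    (hK : ∀ a b, |g a b| ≤ K) (hsum : ∑ a, ∑ b, g a b = 0) (h0 : g 0 0 = 0)
    (X : ℝ) (hX : 0 ≤ X) :
    |∑ ab ∈ hbox X, g (ab.1 : ZMod P) (ab.2 : ZMod P)| ≤ 6 * K * P * X ^ ((1 : ℝ) / 2) := by
  have hK0 : 0 ≤ K := (abs_nonneg _).trans (hK 0 0)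
  rcases lt_or_ge X 1 with h1 | h1
  · rw [hbox_small X hX h1]
    simp [h0]
    positivity
  · rw [hbox, Finset.sum_product]
    refine (box_bound P g K hK hsum _ _).trans ?_
    have a1 : (⌊X ^ ((1 : ℝ) / 3)⌋₊ : ℝ) ≤ X ^ ((1 : ℝ) / 3) :=
      Nat.floor_le (Real.rpow_nonneg hX _)
    have a2 : (⌊X ^ ((1 : ℝ) / 2)⌋₊ : ℝ) ≤ X ^ ((1 : ℝ) / 2) :=
      Nat.floor_le (Real.rpow_nonneg hX _)
    have a3 : X ^ ((1 : ℝ) / 3) ≤ X ^ ((1 : ℝ) / 2) :=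
      Real.rpow_le_rpow_of_exponent_le h1 (by norm_num)
    have a4 : 1 ≤ X ^ ((1 : ℝ) / 2) := Real.one_le_rpow h1 (by norm_num)
    calc _ ≤ K * P * (6 * X ^ ((1 : ℝ) / 2)) :=
          mul_le_mul_of_nonneg_left (by linarith) (by positivity)
      _ = _ := by ring

open Classical in
lemma sieve_bound (P : ℕ) [NeZero P] (g : ZMod P → ZMod P → ℝ) (K : ℝ)
    (hK : ∀ a b, |g a b| ≤ K) (hsum : ∑ a, ∑ b, g a b = 0) (h0 : g 0 0 = 0)
    (hsc : ∀ d : ℕ, (∀ a b, g ((d : ZMod P) ^ 4 * a) ((d : ZMod P) ^ 6 * b) = g a b) ∨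
      (∀ a b, g ((d : ZMod P) ^ 4 * a) ((d : ZMod P) ^ 6 * b) = 0)) (n : ℕ) :
    ∀ X : ℝ, 0 ≤ X → X < 2 ^ n →
    |∑ ab ∈ (hbox X).filter (fun ab => CondM ab.1 ab.2), g (ab.1 : ZMod P) (ab.2 : ZMod P)|
      ≤ 12 * K * P * X ^ ((1 : ℝ) / 2) := by
  have hK0 : 0 ≤ K := (abs_nonneg _).trans (hK 0 0)
  induction n with
  | zero =>
    intro X hX hX1
    rw [pow_zero] at hX1
    rw [hbox_small X hX hX1, Finset.filter_singleton, if_neg not_condM_zero, Finset.sum_empty,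
      abs_zero]
    positivity
  | succ n ih =>
    intro X hX hXn
    have hdec := box_decomp (fun A B => g (A : ZMod P) (B : ZMod P)) (by simpa using h0) X hX
    have hbx := box_sqrt_bound P g K hK hsum h0 X hX
    rw [hdec, ← Finset.add_sum_erase _ _ (show 1 ∈ Finset.Icc 1 (⌊X⌋₊ + 1) by simp)] at hbx
    have herase : (Finset.Icc 1 (⌊X⌋₊ + 1)).erase 1 = Finset.Icc 2 (⌊X⌋₊ + 1) := by
      ext d; simp only [Finset.mem_erase, Finset.mem_Icc]; omega
    rw [herase] at hbx
    simp only [Nat.cast_one, one_pow, one_mul, div_one] at hbx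
    set T := ∑ ab ∈ (hbox X).filter (fun ab => CondM ab.1 ab.2),
      g (ab.1 : ZMod P) (ab.2 : ZMod P) with hT
    set W := ∑ d ∈ Finset.Icc 2 (⌊X⌋₊ + 1), ∑ ab ∈ (hbox (X / (d : ℝ) ^ 12)).filter
      (fun ab => CondM ab.1 ab.2), g (((d : ℤ) ^ 4 * ab.1 : ℤ) : ZMod P)
        (((d : ℤ) ^ 6 * ab.2 : ℤ) : ZMod P) with hW
    have hWb : |W| ≤ 6 * K * P * X ^ ((1 : ℝ) / 2) := by
      have hterm : ∀ d ∈ Finset.Icc 2 (⌊X⌋₊ + 1),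
          |∑ ab ∈ (hbox (X / (d : ℝ) ^ 12)).filter
            (fun ab => CondM ab.1 ab.2), g (((d : ℤ) ^ 4 * ab.1 : ℤ) : ZMod P)
            (((d : ℤ) ^ 6 * ab.2 : ℤ) : ZMod P)|
            ≤ 12 * K * P * X ^ ((1 : ℝ) / 2) * (1 / (d : ℝ) ^ 6) := by
        intro d hd
        have hd2 : (2 : ℝ) ≤ d := by exact_mod_cast (Finset.mem_Icc.mp hd).1
        have hX' : 0 ≤ X / (d : ℝ) ^ 12 := by positivity
        push_cast
        rcases hsc d with h | h
        · simp only [h]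
          have hlt : X / (d : ℝ) ^ 12 < 2 ^ n := by
            rw [div_lt_iff₀ (by positivity)]
            have : (2 : ℝ) ≤ (d : ℝ) ^ 12 := hd2.trans (le_self_pow₀ (by linarith) (by norm_num))
            calc X < 2 ^ (n + 1) := hXn
              _ = 2 ^ n * 2 := by ring
              _ ≤ 2 ^ n * (d : ℝ) ^ 12 := mul_le_mul_of_nonneg_left this (by positivity)
          refine (ih _ hX' hlt).trans (le_of_eq ?_)
          have : (X / (d : ℝ) ^ 12) ^ ((1 : ℝ) / 2) = X ^ ((1 : ℝ) / 2) * (1 / (d : ℝ) ^ 6) := by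
            rw [Real.div_rpow hX (by positivity)]
            have : ((d : ℝ) ^ 12) ^ ((1 : ℝ) / 2) = (d : ℝ) ^ 6 := by
              rw [← Real.sqrt_eq_rpow, show (d : ℝ) ^ 12 = ((d : ℝ) ^ 6) ^ 2 by ring]
              exact Real.sqrt_sq (by positivity)
            rw [this]; ring
          rw [this]; ring
        · simp only [h, Finset.sum_const_zero, abs_zero]
          positivity
      refine (Finset.abs_sum_le_sum_abs _ _).trans ((Finset.sum_le_sum hterm).trans ?_)
      rw [← Finset.mul_sum]
      have ht := tail_sum (⌊X⌋₊ + 1) (by omega)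
      have ht' : ∑ d ∈ Finset.Icc 2 (⌊X⌋₊ + 1), 1 / (d : ℝ) ^ 6 ≤ 1 / 2 := by
        refine ht.trans ?_
        have : 0 ≤ 1 / ((⌊X⌋₊ + 1 : ℕ) : ℝ) := by positivity
        linarith
      calc _ ≤ 12 * K * P * X ^ ((1 : ℝ) / 2) * (1 / 2) :=
            mul_le_mul_of_nonneg_left ht' (by positivity)
        _ = _ := by ring
    have h3 : |T| ≤ |T + W| + |W| := by
      have := abs_sub (T + W) W
      rwa [add_sub_cancel_right] at this
    linarith

open Classical in
/-- The family as a finset. -/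
noncomputable def efin (X : ℝ) : Finset (ℤ × ℤ) :=
  ((hbox X).filter (fun ab => CondM ab.1 ab.2)).filter
    (fun ab => 4 * ab.1 ^ 3 + 27 * ab.2 ^ 2 ≠ 0)

lemma coe_efin (X : ℝ) (hX : 0 ≤ X) : (efin X : Set (ℤ × ℤ)) = Efam X := by
  ext ab
  simp only [efin, Finset.coe_filter, Finset.mem_filter, mem_hbox X hX, Efam, Set.mem_ofPred_eq]
  rw [Int.cast_max, max_le_iff]
  push_cast
  tauto

lemma hbox_fst_card (X : ℝ) (h1 : 1 ≤ X) :
    (2 * (⌊X ^ ((1 : ℝ) / 3)⌋₊ : ℝ) + 1) ≤ 3 * X ^ ((1 : ℝ) / 3) := by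
  have a1 : (⌊X ^ ((1 : ℝ) / 3)⌋₊ : ℝ) ≤ X ^ ((1 : ℝ) / 3) :=
    Nat.floor_le (Real.rpow_nonneg (by linarith) _)
  have a4 : 1 ≤ X ^ ((1 : ℝ) / 3) := Real.one_le_rpow h1 (by norm_num)
  linarith

lemma hbox_snd_card (X : ℝ) (h1 : 1 ≤ X) :
    (2 * (⌊X ^ ((1 : ℝ) / 2)⌋₊ : ℝ) + 1) ≤ 3 * X ^ ((1 : ℝ) / 2) := by
  have a1 : (⌊X ^ ((1 : ℝ) / 2)⌋₊ : ℝ) ≤ X ^ ((1 : ℝ) / 2) :=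
    Nat.floor_le (Real.rpow_nonneg (by linarith) _)
  have a4 : 1 ≤ X ^ ((1 : ℝ) / 2) := Real.one_le_rpow h1 (by norm_num)
  linarith

lemma card_Icc_sym (N : ℕ) : ((Finset.Icc (-(N : ℤ)) N).card : ℝ) = 2 * N + 1 := by
  rw [Int.card_Icc]
  have : ((N : ℤ) + 1 - -(N : ℤ)).toNat = 2 * N + 1 := by omega
  rw [this]; push_cast; ring

lemma hbox_card (X : ℝ) (h1 : 1 ≤ X) : ((hbox X).card : ℝ) ≤ 9 * X ^ ((5 : ℝ) / 6) := by
  rw [hbox, Finset.card_product]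
  push_cast
  rw [card_Icc_sym, card_Icc_sym]
  have h3 : X ^ ((5 : ℝ) / 6) = X ^ ((1 : ℝ) / 3) * X ^ ((1 : ℝ) / 2) := by
    rw [← Real.rpow_add (by linarith)]; norm_num
  rw [h3]
  calc _ ≤ (3 * X ^ ((1 : ℝ) / 3)) * (3 * X ^ ((1 : ℝ) / 2)) :=
        mul_le_mul (hbox_fst_card X h1) (hbox_snd_card X h1) (by positivity) (by positivity)
    _ = _ := by ring

open Classical in
lemma efin_bound (P : ℕ) [NeZero P] (g : ZMod P → ZMod P → ℝ) (K : ℝ)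
    (hK : ∀ a b, |g a b| ≤ K) (hsum : ∑ a, ∑ b, g a b = 0) (h0 : g 0 0 = 0)
    (hsc : ∀ d : ℕ, (∀ a b, g ((d : ZMod P) ^ 4 * a) ((d : ZMod P) ^ 6 * b) = g a b) ∨
      (∀ a b, g ((d : ZMod P) ^ 4 * a) ((d : ZMod P) ^ 6 * b) = 0))
    (X : ℝ) (h1 : 1 ≤ X) :
    |∑ ab ∈ efin X, g (ab.1 : ZMod P) (ab.2 : ZMod P)| ≤ 15 * K * P * X ^ ((1 : ℝ) / 2) := by
  have hK0 : 0 ≤ K := (abs_nonneg _).trans (hK 0 0)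
  have hX : 0 ≤ X := by linarith
  obtain ⟨n, hn⟩ := pow_unbounded_of_one_lt X (show (1 : ℝ) < 2 by norm_num)
  have hs := sieve_bound P g K hK hsum h0 hsc n X hX hn
  rw [← Finset.sum_filter_add_sum_filter_not ((hbox X).filter (fun ab => CondM ab.1 ab.2))
    (fun ab => 4 * ab.1 ^ 3 + 27 * ab.2 ^ 2 ≠ 0)] at hs
  set Z := ((hbox X).filter (fun ab => CondM ab.1 ab.2)).filter
    (fun ab => ¬ (4 * ab.1 ^ 3 + 27 * ab.2 ^ 2 ≠ 0)) with hZ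
  have hZc : (Z.card : ℝ) ≤ 3 * X ^ ((1 : ℝ) / 2) := by
    have hle : Z.card ≤ (Finset.Icc (-(⌊X ^ ((1 : ℝ) / 2)⌋₊ : ℤ)) ⌊X ^ ((1 : ℝ) / 2)⌋₊).card := by
      refine Finset.card_le_card_of_injOn (fun ab => ab.2) ?_ ?_
      · intro ab hab
        have hab' : ab ∈ Z := hab
        simp only [hZ, hbox, Finset.mem_filter, Finset.mem_product] at hab'
        exact hab'.1.1.2
      · intro ab hab cd hcd heq
        have hab' : ab ∈ Z := hab
        have hcd' : cd ∈ Z := hcd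
        simp only [hZ, Finset.mem_filter, not_not] at hab' hcd'
        simp only at heq
        have e1 := hab'.2
        have e2 := hcd'.2
        rw [← heq] at e2
        have e3 : ab.1 ^ 3 = cd.1 ^ 3 := by linarith
        have e4 : ab.1 = cd.1 := (Odd.strictMono_pow (by decide : Odd 3)).injective e3
        exact Prod.ext e4 heq
    have hle' : (Z.card : ℝ) ≤ _ := Nat.cast_le.mpr hle
    rw [card_Icc_sym] at hle'
    exact hle'.trans (hbox_snd_card X h1)
  have hZs : |∑ ab ∈ Z, g (ab.1 : ZMod P) (ab.2 : ZMod P)| ≤ 3 * K * P * X ^ ((1 : ℝ) / 2) := by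
    refine (Finset.abs_sum_le_sum_abs _ _).trans ?_
    refine (Finset.sum_le_card_nsmul _ _ K (fun ab _ => hK _ _)).trans ?_
    rw [nsmul_eq_mul]
    have hP : (1 : ℝ) ≤ P := by exact_mod_cast NeZero.one_le
    have hr : 0 ≤ X ^ ((1 : ℝ) / 2) := Real.rpow_nonneg hX _
    calc (Z.card : ℝ) * K ≤ 3 * X ^ ((1 : ℝ) / 2) * K := mul_le_mul_of_nonneg_right hZc hK0
      _ ≤ 3 * X ^ ((1 : ℝ) / 2) * K * P := le_mul_of_one_le_right (by positivity) hP
      _ = _ := by ring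
  set U := ∑ ab ∈ ((hbox X).filter (fun ab => CondM ab.1 ab.2)).filter
    (fun ab => 4 * ab.1 ^ 3 + 27 * ab.2 ^ 2 ≠ 0), g (ab.1 : ZMod P) (ab.2 : ZMod P) with hU
  have hEU : ∑ ab ∈ efin X, g (ab.1 : ZMod P) (ab.2 : ZMod P) = U := rfl
  rw [hEU]
  set W := ∑ ab ∈ Z, g (ab.1 : ZMod P) (ab.2 : ZMod P)
  have h3 : |U| ≤ |U + W| + |W| := by
    have := abs_sub (U + W) W
    rwa [add_sub_cancel_right] at this
  linarith

lemma efin_card (X : ℝ) (h1 : 1 ≤ X) : ((efin X).card : ℝ) ≤ 9 * X ^ ((5 : ℝ) / 6) := by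
  refine le_trans ?_ (hbox_card X h1)
  have hsub : efin X ⊆ hbox X := by
    intro ab hab
    simp only [efin, Finset.mem_filter] at hab
    exact hab.1.1
  exact_mod_cast Finset.card_le_card hsub

lemma dvd_Icc_card (q N : ℕ) (hq : 0 < q) :
    (((Finset.Icc (-(N : ℤ)) N).filter (fun n => (q : ℤ) ∣ n)).card : ℝ) ≤ 2 * (N / q : ℝ) + 1 := by
  have hle : ((Finset.Icc (-(N : ℤ)) N).filter (fun n => (q : ℤ) ∣ n)).card
      ≤ (Finset.Icc (-((N / q : ℕ) : ℤ)) (N / q : ℕ)).card := by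
    refine Finset.card_le_card_of_injOn (fun n => n / q) ?_ ?_
    · intro n hn
      have hn' : n ∈ (Finset.Icc (-(N : ℤ)) N).filter (fun n => (q : ℤ) ∣ n) := hn
      simp only [Finset.mem_filter, Finset.mem_Icc] at hn'
      obtain ⟨⟨h1, h2⟩, m, rfl⟩ := hn'
      have hq' : (0 : ℤ) < q := by exact_mod_cast hq
      simp only [Finset.coe_Icc, Set.mem_Icc]
      rw [Int.mul_ediv_cancel_left _ hq'.ne']
      push_cast
      have a1 : m ≤ (N : ℤ) / q := by rw [Int.le_ediv_iff_mul_le hq']; linarith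
      have a2 : -m ≤ (N : ℤ) / q := by rw [Int.le_ediv_iff_mul_le hq']; linarith
      constructor <;> linarith
    · intro m hm n hn heq
      have hm' : m ∈ (Finset.Icc (-(N : ℤ)) N).filter (fun n => (q : ℤ) ∣ n) := hm
      have hn' : n ∈ (Finset.Icc (-(N : ℤ)) N).filter (fun n => (q : ℤ) ∣ n) := hn
      have d1 := (Finset.mem_filter.mp hm').2
      have d2 := (Finset.mem_filter.mp hn').2
      simp only at heq
      rw [← Int.ediv_mul_cancel d1, ← Int.ediv_mul_cancel d2, heq]
  have hle' : (((Finset.Icc (-(N : ℤ)) N).filter (fun n => (q : ℤ) ∣ n)).card : ℝ) ≤ _ :=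
    Nat.cast_le.mpr hle
  rw [card_Icc_sym] at hle'
  have := Nat.cast_div_le (α := ℝ) (m := N) (n := q)
  linarith

open Classical in
lemma efin_dvd_card (X : ℝ) (h1 : 1 ≤ X) (q : ℕ) (hq : 0 < q) (hqX : (q : ℝ) ≤ X ^ ((1 : ℝ) / 3)) :
    (((efin X).filter (fun ab => (q : ℤ) ∣ ab.1 ∧ (q : ℤ) ∣ ab.2)).card : ℝ)
      ≤ 9 * (1 / q) * X ^ ((5 : ℝ) / 6) := by
  set N := ⌊X ^ ((1 : ℝ) / 3)⌋₊ with hN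
  set M := ⌊X ^ ((1 : ℝ) / 2)⌋₊ with hM
  have hX : 0 ≤ X := by linarith
  have hq1 : (1 : ℝ) ≤ q := by exact_mod_cast hq
  have hsub : (efin X).filter (fun ab => (q : ℤ) ∣ ab.1 ∧ (q : ℤ) ∣ ab.2) ⊆
      ((Finset.Icc (-(N : ℤ)) N).filter (fun n => (q : ℤ) ∣ n)) ×ˢ
      ((Finset.Icc (-(M : ℤ)) M).filter (fun n => (q : ℤ) ∣ n)) := by
    intro ab hab
    simp only [efin, hbox, Finset.mem_filter, Finset.mem_product] at hab ⊢
    tauto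
  have hc : (((efin X).filter (fun ab => (q : ℤ) ∣ ab.1 ∧ (q : ℤ) ∣ ab.2)).card : ℝ) ≤ _ :=
    Nat.cast_le.mpr (Finset.card_le_card hsub)
  rw [Finset.card_product] at hc
  push_cast at hc
  have a1 : (N : ℝ) ≤ X ^ ((1 : ℝ) / 3) := Nat.floor_le (Real.rpow_nonneg hX _)
  have a2 : (M : ℝ) ≤ X ^ ((1 : ℝ) / 2) := Nat.floor_le (Real.rpow_nonneg hX _)
  have a3 : X ^ ((1 : ℝ) / 3) ≤ X ^ ((1 : ℝ) / 2) :=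
    Real.rpow_le_rpow_of_exponent_le h1 (by norm_num)
  have a5 : X ^ ((5 : ℝ) / 6) = X ^ ((1 : ℝ) / 3) * X ^ ((1 : ℝ) / 2) := by
    rw [← Real.rpow_add (by linarith)]; norm_num
  have b1 := dvd_Icc_card q N hq
  have b2 := dvd_Icc_card q M hq
  have c1 : 2 * ((N : ℝ) / q) + 1 ≤ 3 * (X ^ ((1 : ℝ) / 3) / q) := by
    have e1 : (N : ℝ) / q ≤ X ^ ((1 : ℝ) / 3) / q := by gcongr
    have e2 : 1 ≤ X ^ ((1 : ℝ) / 3) / q := by rw [le_div_iff₀ (by linarith)]; linarith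
    linarith
  have c2 : 2 * ((M : ℝ) / q) + 1 ≤ 3 * (X ^ ((1 : ℝ) / 2) / q) := by
    have e1 : (M : ℝ) / q ≤ X ^ ((1 : ℝ) / 2) / q := by gcongr
    have e2 : 1 ≤ X ^ ((1 : ℝ) / 2) / q := by rw [le_div_iff₀ (by linarith)]; linarith
    linarith
  refine hc.trans ?_
  calc _ ≤ (3 * (X ^ ((1 : ℝ) / 3) / q)) * (3 * (X ^ ((1 : ℝ) / 2) / q)) :=
        mul_le_mul (b1.trans c1) (b2.trans c2) (Nat.cast_nonneg _) (by positivity)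
    _ = (9 * (1 / q) * X ^ ((5 : ℝ) / 6)) / q := by rw [a5]; field_simp; norm_num
    _ ≤ 9 * (1 / q) * X ^ ((5 : ℝ) / 6) := div_le_self (by positivity) hq1

/-! ### Assembly -/

lemma crt_sum {k : ℕ} (p : Fin k → ℕ) [∀ i, Fact (p i).Prime]
    (hcop : Pairwise (Function.onFun Nat.Coprime p)) [NeZero (∏ i, p i)]
    (F : ∀ i, ZMod (p i) → ZMod (p i) → ℝ) :
    ∑ a : ZMod (∏ i, p i), ∑ b : ZMod (∏ i, p i),
      ∏ i, F i (ZMod.prodEquivPi p hcop a i) (ZMod.prodEquivPi p hcop b i)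
    = ∏ i, ∑ ab : ZMod (p i) × ZMod (p i), F i ab.1 ab.2 := by
  simp only [Fintype.sum_prod_type]
  rw [Fintype.prod_sum]
  simp only [Fintype.prod_sum]
  exact Fintype.sum_equiv (ZMod.prodEquivPi p hcop).toEquiv _ _ (fun a =>
    Fintype.sum_equiv (ZMod.prodEquivPi p hcop).toEquiv _ _ (fun b => rfl))

lemma prod_efin_bound {k : ℕ} (hk : 1 ≤ k) (p : Fin k → ℕ) [hF : ∀ i, Fact (p i).Prime]
    (hinj : Function.Injective p)
    (F G : ∀ i, ZMod (p i) → ZMod (p i) → ℝ)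
    (hFs : ∀ i a b d, d ≠ 0 → F i (d ^ 4 * a) (d ^ 6 * b) = F i a b)
    (hGs : ∀ i a b d, d ≠ 0 → G i (d ^ 4 * a) (d ^ 6 * b) = G i a b)
    (hF0 : ∀ i, F i 0 0 = 0) (hG0 : ∀ i, G i 0 0 = 0)
    (KF KG : Fin k → ℝ) (hFb : ∀ i a b, |F i a b| ≤ KF i) (hGb : ∀ i a b, |G i a b| ≤ KG i)
    (hsum : ∏ i, ∑ ab : ZMod (p i) × ZMod (p i), F i ab.1 ab.2
      = ∏ i, ∑ ab : ZMod (p i) × ZMod (p i), G i ab.1 ab.2)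
    (X : ℝ) (h1 : 1 ≤ X) :
    |∑ ab ∈ efin X, (∏ i, F i (ab.1 : ZMod (p i)) (ab.2 : ZMod (p i))
        - ∏ i, G i (ab.1 : ZMod (p i)) (ab.2 : ZMod (p i)))|
      ≤ 15 * (∏ i, KF i + ∏ i, KG i) * (∏ i, (p i : ℝ)) * X ^ ((1 : ℝ) / 2) := by
  have hcop : Pairwise (Function.onFun Nat.Coprime p) := by
    intro i j hij
    exact (Nat.coprime_primes (hF i).out (hF j).out).mpr (fun h => hij (hinj h))
  haveI : NeZero (∏ i, p i) := ⟨Finset.prod_ne_zero_iff.mpr (fun i _ => (hF i).out.ne_zero)⟩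
  set Φ := ZMod.prodEquivPi p hcop with hΦ
  have i0 : Fin k := ⟨0, hk⟩
  have hcastZ : ∀ (n : ℤ) i, Φ (n : ZMod (∏ i, p i)) i = (n : ZMod (p i)) := by
    intro n i; rw [map_intCast]; rfl
  have hnat : ∀ (n : ℕ) i, Φ (n : ZMod (∏ i, p i)) i = (n : ZMod (p i)) := by
    intro n i; rw [map_natCast]; rfl
  have key : ∀ (H : ∀ i, ZMod (p i) → ZMod (p i) → ℝ)
      (_ : ∀ i a b d, d ≠ 0 → H i (d ^ 4 * a) (d ^ 6 * b) = H i a b) (_ : ∀ i, H i 0 0 = 0)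
      (d : ℕ),
      ((∀ i, (d : ZMod (p i)) ≠ 0) → ∀ a b, ∏ i, H i (Φ ((d : ZMod (∏ i, p i)) ^ 4 * a) i)
        (Φ ((d : ZMod (∏ i, p i)) ^ 6 * b) i) = ∏ i, H i (Φ a i) (Φ b i)) ∧
      ((∃ i, (d : ZMod (p i)) = 0) → ∀ a b, ∏ i, H i (Φ ((d : ZMod (∏ i, p i)) ^ 4 * a) i)
        (Φ ((d : ZMod (∏ i, p i)) ^ 6 * b) i) = 0) := by
    intro H hs h0 d
    have e1 : ∀ a i (n : ℕ), Φ ((d : ZMod (∏ i, p i)) ^ n * a) i = (d : ZMod (p i)) ^ n * Φ a i := by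
      intro a i n
      rw [map_mul, map_pow, Pi.mul_apply, Pi.pow_apply, hnat]
    refine ⟨fun h a b => ?_, fun ⟨i, hi⟩ a b => ?_⟩
    · refine Finset.prod_congr rfl (fun i _ => ?_)
      rw [e1, e1, hs _ _ _ _ (h i)]
    · refine Finset.prod_eq_zero (Finset.mem_univ i) ?_
      rw [e1, e1, hi]
      simp [h0]
  have hprodle : ∀ (H : ∀ i, ZMod (p i) → ZMod (p i) → ℝ) (K : Fin k → ℝ)
      (_ : ∀ i a b, |H i a b| ≤ K i) (a b : ∀ i, ZMod (p i)), |∏ i, H i (a i) (b i)| ≤ ∏ i, K i := by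
    intro H K h a b
    rw [Finset.abs_prod]
    exact Finset.prod_le_prod (fun _ _ => abs_nonneg _) (fun i _ => h i _ _)
  have := efin_bound (∏ i, p i)
    (fun a b => ∏ i, F i (Φ a i) (Φ b i) - ∏ i, G i (Φ a i) (Φ b i)) (∏ i, KF i + ∏ i, KG i)
    (fun a b => (abs_sub _ _).trans (add_le_add (hprodle F KF hFb _ _) (hprodle G KG hGb _ _)))
    (by
      simp only [Finset.sum_sub_distrib]
      rw [hΦ, crt_sum p hcop F, crt_sum p hcop G, hsum, sub_self])
    (by
      simp only [map_zero, Pi.zero_apply, hF0, hG0, sub_self])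
    (by
      intro d
      by_cases h : ∀ i, (d : ZMod (p i)) ≠ 0
      · left
        intro a b
        rw [(key F hFs hF0 d).1 h, (key G hGs hG0 d).1 h]
      · right
        push Not at h
        intro a b
        rw [(key F hFs hF0 d).2 h, (key G hGs hG0 d).2 h, sub_zero])
    X h1
  simp only [hcastZ] at this
  rw [Nat.cast_prod] at this
  exact this

lemma prod_diff {ι : Type*} (s : Finset ι) (u v : ι → ℝ) (hu : ∀ i, |u i| ≤ 3)
    (hv : ∀ i, |v i| ≤ 1) :
    |∏ i ∈ s, u i - ∏ i ∈ s, v i| ≤ 3 ^ s.card * ∑ i ∈ s, |u i - v i| := by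
  classical
  induction s using Finset.induction_on with
  | empty => simp
  | insert a s ha ih =>
    rw [Finset.prod_insert ha, Finset.prod_insert ha, Finset.sum_insert ha,
      Finset.card_insert_of_notMem ha]
    have hvp : |∏ i ∈ s, v i| ≤ 1 := by
      rw [Finset.abs_prod]
      exact Finset.prod_le_one (fun _ _ => abs_nonneg _) (fun i _ => hv i)
    have e : u a * ∏ i ∈ s, u i - v a * ∏ i ∈ s, v i
        = u a * (∏ i ∈ s, u i - ∏ i ∈ s, v i) + (u a - v a) * ∏ i ∈ s, v i := by ring
    rw [e]
    refine (abs_add_le _ _).trans ?_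
    rw [abs_mul, abs_mul]
    have h1 : |u a| * |∏ i ∈ s, u i - ∏ i ∈ s, v i| ≤ 3 * (3 ^ s.card * ∑ i ∈ s, |u i - v i|) :=
      mul_le_mul (hu a) ih (abs_nonneg _) (by norm_num)
    have h2 : |u a - v a| * |∏ i ∈ s, v i| ≤ |u a - v a| * 1 :=
      mul_le_mul_of_nonneg_left hvp (abs_nonneg _)
    have h3 : (1 : ℝ) ≤ 3 ^ (s.card + 1) := one_le_pow₀ (by norm_num)
    have h4 : |u a - v a| * 1 ≤ |u a - v a| * 3 ^ (s.card + 1) :=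
      mul_le_mul_of_nonneg_left h3 (abs_nonneg _)
    calc _ ≤ 3 * (3 ^ s.card * ∑ i ∈ s, |u i - v i|) + |u a - v a| * 3 ^ (s.card + 1) := by linarith
      _ = _ := by ring

open Classical in
lemma nz_sum (p : ℕ) [Fact p.Prime] (ν : ℝ) :
    ∑ ab : ZMod p × ZMod p, (if ab.1 = 0 ∧ ab.2 = 0 then (0 : ℝ) else ν) = ν * ((p : ℝ) ^ 2 - 1) := by
  have : ∀ ab : ZMod p × ZMod p, (if ab.1 = 0 ∧ ab.2 = 0 then (0 : ℝ) else ν)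
      = ν - (if ab = (0, 0) then ν else 0) := by
    intro ab
    by_cases h : ab = (0, 0)
    · simp [h]
    · have : ¬ (ab.1 = 0 ∧ ab.2 = 0) := fun h' => h (Prod.ext h'.1 h'.2)
      simp [h, this]
  rw [Finset.sum_congr rfl (fun ab _ => this ab), Finset.sum_sub_distrib]
  simp [ZMod.card]
  ring

lemma odd_case {k : ℕ} (hk : 1 ≤ k) (e r : Fin k → ℕ) (hr : ∀ i, r i ≠ 0)
    (p : Fin k → ℕ) [hF : ∀ i, Fact (p i).Prime] (h5 : ∀ i, 5 ≤ p i)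
    (hinj : Function.Injective p) (X : ℝ) (h1 : 1 ≤ X) (j : Fin k) (hj : e j = 1) (hj' : Odd (r j)) :
    |∑ ab ∈ efin X, ∏ i, locF (p i) (e i) (r i) (ab.1 : ZMod (p i)) (ab.2 : ZMod (p i))|
      ≤ 15 * (∏ i, (4000 : ℝ) ^ r i) * (∏ i, (p i : ℝ)) * X ^ ((1 : ℝ) / 2) := by
  have hz : (∏ _i : Fin k, (0 : ℝ)) = 0 := Finset.prod_eq_zero (Finset.mem_univ j) rfl
  have := prod_efin_bound hk p hinj (fun i => locF (p i) (e i) (r i)) (fun i _ _ => 0)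
    (fun i a b d hd => locF_scale _ _ _ _ _ _ hd) (fun _ _ _ _ _ => rfl)
    (fun i => locF_zero _ (h5 i) _ _ (hr i)) (fun _ => rfl)
    (fun i => 4000 ^ r i) (fun _ => 0) (fun i a b => locF_bound _ (h5 i) _ _ _ _)
    (fun i a b => by simp)
    (by
      rw [Finset.prod_eq_zero (Finset.mem_univ j), Finset.prod_eq_zero (Finset.mem_univ j)]
      · simp
      · rw [hj]; exact locF_odd _ (h5 j) _ hj')
    X h1
  simpa only [hz, sub_zero, add_zero] using this

open Classical in
lemma even_case {k : ℕ} (hk : 1 ≤ k) (e r : Fin k → ℕ)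
    (her : ∀ i, (e i = 1 ∧ r i = 2) ∨ (e i = 2 ∧ r i = 1))
    (p : Fin k → ℕ) [hF : ∀ i, Fact (p i).Prime] (h5 : ∀ i, 5 ≤ p i)
    (hinj : Function.Injective p) (X : ℝ) (h1 : 1 ≤ X) (hpX : ∀ i, (p i : ℝ) ≤ X ^ ((1 : ℝ) / 3)) :
    |∑ ab ∈ efin X, ∏ i, locF (p i) (e i) (r i) (ab.1 : ZMod (p i)) (ab.2 : ZMod (p i))
        - (-1 : ℝ) ^ (Finset.univ.filter (fun j => e j = 2)).card * ((efin X).card : ℝ)|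
      ≤ 15 * (∏ i, (4000 : ℝ) ^ r i + 3 ^ k) * (∏ i, (p i : ℝ)) * X ^ ((1 : ℝ) / 2)
        + 99 * 3 ^ k * (∑ i, 1 / (p i : ℝ)) * X ^ ((5 : ℝ) / 6) := by
  have hr : ∀ i, r i ≠ 0 := by
    intro i
    rcases her i with h | h <;> omega
  set ν : Fin k → ℝ := fun i =>
    (∑ ab : ZMod (p i) × ZMod (p i), locF (p i) (e i) (r i) ab.1 ab.2) / ((p i : ℝ) ^ 2 - 1) with hν
  set c : Fin k → ℝ := fun i => if e i = 2 then -1 else 1 with hc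
  have hp5 : ∀ i, (5 : ℝ) ≤ p i := fun i => by exact_mod_cast h5 i
  have hνc : ∀ i, |ν i - c i| ≤ 10 / (p i : ℝ) := fun i => locF_even _ (h5 i) _ _ (her i)
  have hc1 : ∀ i, |c i| ≤ 1 := by
    intro i
    simp only [hc]
    split_ifs <;> simp
  have hν3 : ∀ i, |ν i| ≤ 3 := by
    intro i
    have h2 : 10 / (p i : ℝ) ≤ 2 := by
      rw [div_le_iff₀ (by linarith [hp5 i])]; linarith [hp5 i]
    have : |ν i| ≤ |ν i - c i| + |c i| := by
      simpa using abs_add_le (ν i - c i) (c i)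
    linarith [hνc i, hc1 i]
  have hcprod : ∏ i, c i = (-1 : ℝ) ^ (Finset.univ.filter (fun j => e j = 2)).card := by
    simp only [hc]
    rw [Finset.prod_ite]
    simp
  set G : ∀ i, ZMod (p i) → ZMod (p i) → ℝ := fun i a b => if a = 0 ∧ b = 0 then 0 else ν i with hG
  have hmain := prod_efin_bound hk p hinj (fun i => locF (p i) (e i) (r i)) G
    (fun i a b d hd => locF_scale _ _ _ _ _ _ hd)
    (fun i a b d hd => by simp [hG, hd])
    (fun i => locF_zero _ (h5 i) _ _ (hr i)) (fun i => by simp [hG])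
    (fun i => 4000 ^ r i) (fun _ => 3) (fun i a b => locF_bound _ (h5 i) _ _ _ _)
    (fun i a b => by
      simp only [hG]
      split_ifs
      · simp
      · exact hν3 i)
    (by
      refine Finset.prod_congr rfl (fun i _ => ?_)
      simp only [hG]
      have hne : (p i : ℝ) ^ 2 - 1 ≠ 0 := by nlinarith [hp5 i]
      have h' := nz_sum (p i) (ν i)
      rw [hν] at h'
      simp only [div_mul_cancel₀ _ hne] at h'
      exact h'.symm)
    X h1
  rw [Finset.prod_const, Finset.card_univ, Fintype.card_fin] at hmain
  set D : Fin k → Finset (ℤ × ℤ) := fun i =>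
    (efin X).filter (fun ab => ((p i : ℕ) : ℤ) ∣ ab.1 ∧ ((p i : ℕ) : ℤ) ∣ ab.2) with hD
  have hm3 : |∏ i, ν i| ≤ 3 ^ k := by
    rw [Finset.abs_prod]
    refine (Finset.prod_le_prod (fun _ _ => abs_nonneg _) (fun i _ => hν3 i)).trans ?_
    simp
  have hpt : ∀ ab : ℤ × ℤ, |∏ i, G i (ab.1 : ZMod (p i)) (ab.2 : ZMod (p i)) - ∏ i, c i|
      ≤ |∏ i, ν i - ∏ i, c i|
        + 3 ^ k * ∑ i, (if ((p i : ℕ) : ℤ) ∣ ab.1 ∧ ((p i : ℕ) : ℤ) ∣ ab.2 then (1 : ℝ) else 0) := by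
    intro ab
    have hnn : ∀ i ∈ (Finset.univ : Finset (Fin k)), (0 : ℝ) ≤
        (if ((p i : ℕ) : ℤ) ∣ ab.1 ∧ ((p i : ℕ) : ℤ) ∣ ab.2 then (1 : ℝ) else 0) := by
      intro i _
      split_ifs <;> norm_num
    by_cases h : ∃ i, ((p i : ℕ) : ℤ) ∣ ab.1 ∧ ((p i : ℕ) : ℤ) ∣ ab.2
    · obtain ⟨i, hi⟩ := h
      have hz : ∏ i, G i (ab.1 : ZMod (p i)) (ab.2 : ZMod (p i)) = 0 := by
        refine Finset.prod_eq_zero (Finset.mem_univ i) ?_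
        simp only [hG, ZMod.intCast_zmod_eq_zero_iff_dvd, if_pos hi]
      have hs : (1 : ℝ) ≤ ∑ i, (if ((p i : ℕ) : ℤ) ∣ ab.1 ∧ ((p i : ℕ) : ℤ) ∣ ab.2 then (1 : ℝ) else 0) := by
        have := Finset.single_le_sum hnn (Finset.mem_univ i)
        rwa [if_pos hi] at this
      rw [hz, zero_sub, abs_neg]
      have h3 : |∏ i, c i| ≤ |∏ i, ν i - ∏ i, c i| + |∏ i, ν i| := by
        have := abs_sub (∏ i, ν i) (∏ i, ν i - ∏ i, c i)
        rw [sub_sub_cancel] at this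
        linarith
      have h4 : (3 : ℝ) ^ k * 1 ≤ 3 ^ k * ∑ i, (if ((p i : ℕ) : ℤ) ∣ ab.1 ∧ ((p i : ℕ) : ℤ) ∣ ab.2
          then (1 : ℝ) else 0) := mul_le_mul_of_nonneg_left hs (by positivity)
      linarith
    · push Not at h
      have hz : ∏ i, G i (ab.1 : ZMod (p i)) (ab.2 : ZMod (p i)) = ∏ i, ν i := by
        refine Finset.prod_congr rfl (fun i _ => ?_)
        simp only [hG, ZMod.intCast_zmod_eq_zero_iff_dvd]
        rw [if_neg]
        exact fun h' => h i h'.1 h'.2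
      rw [hz]
      have : (0 : ℝ) ≤ 3 ^ k * ∑ i, (if ((p i : ℕ) : ℤ) ∣ ab.1 ∧ ((p i : ℕ) : ℤ) ∣ ab.2
          then (1 : ℝ) else 0) := mul_nonneg (by positivity) (Finset.sum_nonneg hnn)
      linarith
  have hsecond : |∑ ab ∈ efin X, (∏ i, G i (ab.1 : ZMod (p i)) (ab.2 : ZMod (p i)) - ∏ i, c i)|
      ≤ 99 * 3 ^ k * (∑ i, 1 / (p i : ℝ)) * X ^ ((5 : ℝ) / 6) := by
    refine (Finset.abs_sum_le_sum_abs _ _).trans ?_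
    refine (Finset.sum_le_sum (fun ab _ => hpt ab)).trans ?_
    rw [Finset.sum_add_distrib, ← Finset.mul_sum, Finset.sum_comm, Finset.sum_const, nsmul_eq_mul]
    have hpd := prod_diff Finset.univ ν c hν3 hc1
    rw [Finset.card_univ, Fintype.card_fin] at hpd
    have hs10 : ∑ i, |ν i - c i| ≤ 10 * ∑ i, 1 / (p i : ℝ) := by
      rw [Finset.mul_sum]
      refine Finset.sum_le_sum (fun i _ => (hνc i).trans (le_of_eq ?_))
      ring
    have hsp : 0 ≤ ∑ i, 1 / (p i : ℝ) := Finset.sum_nonneg (fun i _ => by positivity)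
    have hA : |∏ i, ν i - ∏ i, c i| ≤ 3 ^ k * (10 * ∑ i, 1 / (p i : ℝ)) :=
      hpd.trans (mul_le_mul_of_nonneg_left hs10 (by positivity))
    have hB : ((efin X).card : ℝ) * |∏ i, ν i - ∏ i, c i|
        ≤ (9 * X ^ ((5 : ℝ) / 6)) * (3 ^ k * (10 * ∑ i, 1 / (p i : ℝ))) :=
      mul_le_mul (efin_card X h1) hA (abs_nonneg _) (by positivity)
    have hCi : ∑ i, ∑ ab ∈ efin X, (if ((p i : ℕ) : ℤ) ∣ ab.1 ∧ ((p i : ℕ) : ℤ) ∣ ab.2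
          then (1 : ℝ) else 0) ≤ ∑ i, 9 * (1 / (p i : ℝ)) * X ^ ((5 : ℝ) / 6) := by
      refine Finset.sum_le_sum (fun i _ => ?_)
      rw [Finset.sum_boole]
      exact efin_dvd_card X h1 (p i) (hF i).out.pos (hpX i)
    rw [← Finset.sum_mul, ← Finset.mul_sum] at hCi
    have hC := mul_le_mul_of_nonneg_left hCi (show (0 : ℝ) ≤ 3 ^ k by positivity)
    calc _ ≤ _ := add_le_add hB hC
      _ = _ := by ring
  have hsplit : ∑ ab ∈ efin X, ∏ i, locF (p i) (e i) (r i) (ab.1 : ZMod (p i)) (ab.2 : ZMod (p i))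
        - (-1 : ℝ) ^ (Finset.univ.filter (fun j => e j = 2)).card * ((efin X).card : ℝ)
      = ∑ ab ∈ efin X, (∏ i, locF (p i) (e i) (r i) (ab.1 : ZMod (p i)) (ab.2 : ZMod (p i))
          - ∏ i, G i (ab.1 : ZMod (p i)) (ab.2 : ZMod (p i)))
        + ∑ ab ∈ efin X, (∏ i, G i (ab.1 : ZMod (p i)) (ab.2 : ZMod (p i)) - ∏ i, c i) := by
    rw [Finset.sum_sub_distrib, Finset.sum_sub_distrib, Finset.sum_const, nsmul_eq_mul, hcprod]
    ring
  rw [hsplit]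
  exact (abs_add_le _ _).trans (add_le_add hmain hsecond)

theorem stmt_18 (k : ℕ) (hk : 1 ≤ k) (ε : ℝ) (hε : 0 < ε) (hε3 : ε < 1 / 3)
    (e r : Fin k → ℕ)
    (her : ∀ i, (e i = 1 ∧ (Odd (r i) ∨ r i = 2)) ∨ (e i = 2 ∧ r i = 1)) :
    ∃ C : ℝ, 0 < C ∧ ∀ (X : ℝ), 2 ≤ X →
      ∀ (p : Fin k → ℕ) (hp : ∀ i, (p i).Prime), (∀ i, 5 ≤ p i) →
      Function.Injective p → (∏ i, (p i : ℝ)) ≤ X ^ ((1 : ℝ) / 3 - ε) →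
      ((∃ j, e j = 1 ∧ Odd (r j)) →
        |∑ᶠ AB ∈ Efam X, ∏ i, (ahatPow (p i) (hp i) AB.1 AB.2 (e i)) ^ (r i)|
          ≤ C * 2 ^ (sInf {n : ℕ | Odd n ∧ ∃ i, r i = n}) * (∏ i, (p i : ℝ))
              * X ^ ((1 : ℝ) / 2))
      ∧ (¬ (∃ j, e j = 1 ∧ Odd (r j)) →
        |(∑ᶠ AB ∈ Efam X, ∏ i, (ahatPow (p i) (hp i) AB.1 AB.2 (e i)) ^ (r i))
            - (-1 : ℝ) ^ (Finset.univ.filter (fun j => e j = 2)).card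
              * ((Efam X).ncard : ℝ)|
          ≤ C * ((∏ i, (p i : ℝ)) * X ^ ((1 : ℝ) / 2)
              + (∑ i, 1 / (p i : ℝ)) * X ^ ((5 : ℝ) / 6))) := by
  have hr : ∀ i, r i ≠ 0 := by
    intro i hi
    rcases her i with ⟨_, h | h⟩ | h
    · rw [hi] at h
      exact absurd h (by decide)
    · omega
    · omega
  set K : ℝ := ∏ i, (4000 : ℝ) ^ r i with hKdef
  have hK : 0 < K := Finset.prod_pos (fun i _ => by positivity)
  refine ⟨15 * (K + 3 ^ k) + 99 * 3 ^ k, by positivity, ?_⟩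
  intro X hX p hp h5 hinj hprod
  haveI hF : ∀ i, Fact (p i).Prime := fun i => ⟨hp i⟩
  have h1 : (1 : ℝ) ≤ X := by linarith
  have hX0 : (0 : ℝ) ≤ X := by linarith
  have hP : 0 ≤ ∏ i, (p i : ℝ) := Finset.prod_nonneg (fun i _ => by positivity)
  have hS : 0 ≤ ∑ i, 1 / (p i : ℝ) := Finset.sum_nonneg (fun i _ => by positivity)
  have hX2 : 0 ≤ X ^ ((1 : ℝ) / 2) := Real.rpow_nonneg hX0 _
  have hX5 : 0 ≤ X ^ ((5 : ℝ) / 6) := Real.rpow_nonneg hX0 _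
  have h3k : (0 : ℝ) < 3 ^ k := by positivity
  have hfs : ∑ᶠ AB ∈ Efam X, ∏ i, (ahatPow (p i) (hp i) AB.1 AB.2 (e i)) ^ (r i)
      = ∑ ab ∈ efin X, ∏ i, locF (p i) (e i) (r i) (ab.1 : ZMod (p i)) (ab.2 : ZMod (p i)) := by
    rw [← coe_efin X hX0, finsum_mem_coe_finset]
    refine Finset.sum_congr rfl (fun ab _ => Finset.prod_congr rfl (fun i _ => ?_))
    exact ahatPow_eq (p i) (hp i) (h5 i) _ _ _ _
  have hcard : (Efam X).ncard = (efin X).card := by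
    rw [← coe_efin X hX0, Set.ncard_coe_finset]
  rw [hfs, hcard]
  constructor
  · rintro ⟨j, hj, hj'⟩
    refine (odd_case hk e r hr p h5 hinj X h1 j hj hj').trans ?_
    have h2 : (1 : ℝ) ≤ 2 ^ (sInf {n : ℕ | Odd n ∧ ∃ i, r i = n}) := one_le_pow₀ (by norm_num)
    refine mul_le_mul_of_nonneg_right (mul_le_mul_of_nonneg_right ?_ hP) hX2
    calc 15 * K ≤ (15 * (K + 3 ^ k) + 99 * 3 ^ k) * 1 := by linarith
      _ ≤ _ := mul_le_mul_of_nonneg_left h2 (by positivity)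
  · intro hno
    have her' : ∀ i, (e i = 1 ∧ r i = 2) ∨ (e i = 2 ∧ r i = 1) := by
      intro i
      rcases her i with ⟨h, h' | h'⟩ | h
      · exact absurd ⟨i, h, h'⟩ hno
      · exact Or.inl ⟨h, h'⟩
      · exact Or.inr h
    have hpX : ∀ i, (p i : ℝ) ≤ X ^ ((1 : ℝ) / 3) := by
      intro i
      have a1 : X ^ ((1 : ℝ) / 3 - ε) ≤ X ^ ((1 : ℝ) / 3) :=
        Real.rpow_le_rpow_of_exponent_le h1 (by linarith)
      have a2 : p i ≤ ∏ i, p i :=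
        Nat.le_of_dvd (Finset.prod_pos (fun i _ => (hp i).pos))
          (Finset.dvd_prod_of_mem p (Finset.mem_univ i))
      have a3 : (p i : ℝ) ≤ ∏ i, (p i : ℝ) := by exact_mod_cast a2
      linarith
    refine (even_case hk e r her' p h5 hinj X h1 hpX).trans ?_
    have b1 : 0 ≤ (∏ i, (p i : ℝ)) * X ^ ((1 : ℝ) / 2) := mul_nonneg hP hX2
    have b2 : 0 ≤ (∑ i, 1 / (p i : ℝ)) * X ^ ((5 : ℝ) / 6) := mul_nonneg hS hX5
    have b3 := mul_nonneg (show (0 : ℝ) ≤ 99 * 3 ^ k by positivity) b1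
    have b4 := mul_nonneg (show (0 : ℝ) ≤ 15 * (K + 3 ^ k) by positivity) b2
    rw [← hKdef]
    nlinarith
end
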